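/- Let n ≥ 2, 1 ≤ j ≤ n−1, 0 < D < 1 and r ≥ 1. Then, as N → ∞ along square-free integers N, the proportion of subgroups H ∈ H_{N,j}(n) for which #{x ∈ ℤⁿ : ‖x‖∞ ≤ D·N^{j/n} and (x mod N) ∈ H} = r tends to c_{n,r} = μ(Ω̃_{n,r}). That is, lim_{N→∞, N squarefree} #{H ∈ H_{N,j}(n) : #{x ∈ ℤⁿ : ‖x‖∞ ≤ D·N^{j/n}, (x mod N) ∈ H} = r} / #H_{N,j}(n) = μ(Ω̃_{n,r}). -/

import Mathlib

open Matrix MeasureTheory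

noncomputable section

/-- The subgroup `Γ = SL_n(ℤ)` inside `G = SL_n(ℝ)`, realized as the range of the map
induced by the ring homomorphism `ℤ → ℝ`. -/
def Gamma (n : ℕ) : Subgroup (Matrix.SpecialLinearGroup (Fin n) ℝ) :=
  (Matrix.SpecialLinearGroup.map (Int.castRingHom ℝ)).range

/-- The homogeneous space `X = Γ\G = SL_n(ℤ)\SL_n(ℝ)` (right cosets `Γg`). -/
def XSpace (n : ℕ) : Type :=
  Quotient (QuotientGroup.rightRel (Gamma n))

/-- The topology on `SL_n(ℝ)` induced from the space of matrices. -/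
instance (n : ℕ) : TopologicalSpace (Matrix.SpecialLinearGroup (Fin n) ℝ) :=
  TopologicalSpace.induced (fun g => (g : Matrix (Fin n) (Fin n) ℝ)) inferInstance

/-- The quotient topology on `X = Γ\G`. -/
instance (n : ℕ) : TopologicalSpace (XSpace n) :=
  instTopologicalSpaceQuotient

/-- The Borel σ-algebra on `X`. -/
instance (n : ℕ) : MeasurableSpace (XSpace n) := borel _

instance (n : ℕ) : BorelSpace (XSpace n) := ⟨rfl⟩

/-- Right translation `Γx ↦ Γxg` of `G` on `X = Γ\G`. -/
def rightTranslate (n : ℕ) (g : Matrix.SpecialLinearGroup (Fin n) ℝ) :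
    XSpace n → XSpace n :=
  Quotient.map' (fun x => x * g) (fun x y hxy => by
    simp only [QuotientGroup.rightRel_apply] at hxy ⊢
    simpa [mul_assoc] using hxy)

/-- `Ω̃_{n,r}` : the set of cosets `Γg ∈ X` such that the lattice `ℤⁿg` contains exactly
`r` points `vg` (for `v ∈ ℤⁿ`) of sup-norm at most `D`. -/
def OmegaTilde (n : ℕ) (D : ℝ) (r : ℕ) : Set (XSpace n) :=
  {x | ∃ g : Matrix.SpecialLinearGroup (Fin n) ℝ,
    (Quotient.mk'' g : XSpace n) = x ∧
    Set.ncard {v : Fin n → ℤ |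
      ‖Matrix.vecMul (fun i => (v i : ℝ)) (g : Matrix (Fin n) (Fin n) ℝ)‖ ≤ D} = r}


/-- `H_{N,j}(n)`: the set of subgroups of `(ℤ/Nℤ)ⁿ` that are solution sets of a system
`Ax ≡ 0 (mod N)` of `j` linear congruences in `n` variables whose associated map
`(ℤ/Nℤ)ⁿ → (ℤ/Nℤ)ʲ` is surjective. -/
def congruenceSet (N n j : ℕ) : Set (AddSubgroup (Fin n → ZMod N)) :=
  {H | ∃ A : Matrix (Fin j) (Fin n) (ZMod N),
    (Function.Surjective fun x : Fin n → ZMod N => A.mulVec x) ∧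
    (H : Set (Fin n → ZMod N)) = {x | A.mulVec x = 0}}

section EquidistributionProof

open Filter Topology
open scoped ENNReal

/-! ### Part 1: basic topology of `G` and `X` -/


/-- Shorthand for `SL_n(ℝ)`. -/
abbrev SLR (n : ℕ) := Matrix.SpecialLinearGroup (Fin n) ℝ

instance slr_topGroup (n : ℕ) : IsTopologicalGroup (SLR n) :=
  Matrix.SpecialLinearGroup.topologicalGroup

lemma slr_isClosedEmbedding (n : ℕ) :
    Topology.IsClosedEmbedding (fun g : SLR n => (g : Matrix (Fin n) (Fin n) ℝ)) :=
  Matrix.SpecialLinearGroup.isClosedEmbedding_val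

lemma slr_continuous_coe (n : ℕ) :
    Continuous (fun g : SLR n => (g : Matrix (Fin n) (Fin n) ℝ)) :=
  (slr_isClosedEmbedding n).continuous

instance slr_t2 (n : ℕ) : T2Space (SLR n) := (slr_isClosedEmbedding n).isEmbedding.t2Space

instance mat_locallyCompact (n : ℕ) : LocallyCompactSpace (Matrix (Fin n) (Fin n) ℝ) :=
  inferInstanceAs (LocallyCompactSpace (Fin n → Fin n → ℝ))

instance mat_secondCountable (n : ℕ) : SecondCountableTopology (Matrix (Fin n) (Fin n) ℝ) :=
  inferInstanceAs (SecondCountableTopology (Fin n → Fin n → ℝ))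

instance slr_locallyCompact (n : ℕ) : LocallyCompactSpace (SLR n) :=
  (slr_isClosedEmbedding n).locallyCompactSpace

instance slr_secondCountable (n : ℕ) : SecondCountableTopology (SLR n) :=
  (slr_isClosedEmbedding n).isEmbedding.secondCountableTopology

instance slr_measurable (n : ℕ) : MeasurableSpace (SLR n) := borel _

instance slr_borel (n : ℕ) : BorelSpace (SLR n) := ⟨rfl⟩

/-- The projection `G → X`. -/
def mkX {n : ℕ} (g : SLR n) : XSpace n := Quotient.mk'' g

lemma mkX_surj {n : ℕ} (x : XSpace n) : ∃ g : SLR n, mkX g = x :=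
  Quotient.exists_rep x

lemma mkX_eq_iff {n : ℕ} (g h : SLR n) : mkX g = mkX h ↔ h * g⁻¹ ∈ Gamma n := by
  refine (Quotient.eq'' (s₁ := QuotientGroup.rightRel (Gamma n)) (a := g) (b := h)).trans ?_
  rw [QuotientGroup.rightRel_apply]

lemma mkX_gamma_mul {n : ℕ} (γ g : SLR n) (hγ : γ ∈ Gamma n) : mkX (γ * g) = mkX g := by
  rw [mkX_eq_iff]
  simpa using inv_mem hγ

@[simp] lemma rightTranslate_mkX {n : ℕ} (g h : SLR n) :
    rightTranslate n g (mkX h) = mkX (h * g) := rfl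

lemma rightTranslate_one {n : ℕ} (x : XSpace n) : rightTranslate n 1 x = x := by
  obtain ⟨g, rfl⟩ := mkX_surj x
  simp

lemma rightTranslate_mul {n : ℕ} (g h : SLR n) (x : XSpace n) :
    rightTranslate n h (rightTranslate n g x) = rightTranslate n (g * h) x := by
  obtain ⟨k, rfl⟩ := mkX_surj x
  simp [mul_assoc]

lemma continuous_mkX {n : ℕ} : Continuous (mkX : SLR n → XSpace n) :=
  continuous_quotient_mk'

lemma isOpenMap_mkX {n : ℕ} : IsOpenMap (mkX : SLR n → XSpace n) := by
  intro O hO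
  have : IsOpen ((mkX : SLR n → XSpace n) ⁻¹' (mkX '' O)) := by
    have h : (mkX : SLR n → XSpace n) ⁻¹' (mkX '' O) =
        ⋃ γ : Gamma n, (fun g => (γ : SLR n) * g) ⁻¹' O := by
      ext g
      simp only [Set.mem_preimage, Set.mem_image, Set.mem_iUnion]
      constructor
      · rintro ⟨h, hh, he⟩
        rw [eq_comm, mkX_eq_iff] at he
        exact ⟨⟨_, he⟩, by simpa using hh⟩
      · rintro ⟨γ, hγ⟩
        exact ⟨_, hγ, mkX_gamma_mul _ _ γ.2⟩
    rw [h]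
    exact isOpen_iUnion fun γ => hO.preimage (continuous_const_mul _)
  exact this

lemma isOpenQuotientMap_mkX {n : ℕ} : IsOpenQuotientMap (mkX : SLR n → XSpace n) :=
  ⟨mkX_surj, continuous_mkX, isOpenMap_mkX⟩

instance xspace_secondCountable (n : ℕ) : SecondCountableTopology (XSpace n) :=
  isOpenQuotientMap_mkX.isQuotientMap.secondCountableTopology isOpenMap_mkX

lemma continuous_act {n : ℕ} :
    Continuous (fun q : XSpace n × SLR n => rightTranslate n q.2 q.1) := by
  have h : IsOpenQuotientMap (Prod.map (mkX : SLR n → XSpace n) (id : SLR n → SLR n)) :=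
    isOpenQuotientMap_mkX.prodMap IsOpenQuotientMap.id
  refine h.isQuotientMap.continuous_iff.2 ?_
  exact continuous_mkX.comp (continuous_fst.mul continuous_snd)

lemma continuous_rightTranslate {n : ℕ} (g : SLR n) : Continuous (rightTranslate n g) :=
  continuous_act.comp (continuous_id.prodMk continuous_const)

lemma measurable_rightTranslate {n : ℕ} (g : SLR n) : Measurable (rightTranslate n g) :=
  (continuous_rightTranslate g).measurable

lemma measurable_act {n : ℕ} :
    Measurable (fun q : XSpace n × SLR n => rightTranslate n q.2 q.1) :=
  continuous_act.measurable

/-! ### Part 2: right uniformly continuous functions, Haar measure and the key inequality -/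


/-- Bounded and right uniformly continuous functions on `X`. -/
structure RUC {n : ℕ} (f : XSpace n → ℝ) : Prop where
  bdd : ∃ C, ∀ x, |f x| ≤ C
  uc : ∀ ε > 0, ∀ᶠ g in 𝓝 (1 : SLR n), ∀ x, |f (rightTranslate n g x) - f x| ≤ ε

namespace RUC
variable {n : ℕ} {f f' : XSpace n → ℝ}

lemma continuous (hf : RUC f) : Continuous f := by
  refine isOpenQuotientMap_mkX.isQuotientMap.continuous_iff.2 ?_
  rw [continuous_iff_continuousAt]
  intro h
  rw [ContinuousAt, Metric.tendsto_nhds]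
  intro ε hε
  have h1 : Tendsto (fun k : SLR n => h⁻¹ * k) (𝓝 h) (𝓝 1) := by
    have : Continuous (fun k : SLR n => h⁻¹ * k) := continuous_const_mul _
    simpa using this.tendsto h
  filter_upwards [h1.eventually (hf.uc (ε / 2) (half_pos hε))] with k hk
  have := hk (mkX h)
  rw [rightTranslate_mkX, mul_inv_cancel_left] at this
  rw [Real.dist_eq]
  exact lt_of_le_of_lt this (half_lt_self hε)

lemma measurable (hf : RUC f) : Measurable f := hf.continuous.measurable

lemma const (c : ℝ) : RUC (fun _ : XSpace n => c) :=
  ⟨⟨|c|, fun _ => le_rfl⟩, fun ε hε => by simp [hε.le]⟩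

lemma add (hf : RUC f) (hf' : RUC f') : RUC (fun x => f x + f' x) := by
  obtain ⟨C, hC⟩ := hf.bdd
  obtain ⟨C', hC'⟩ := hf'.bdd
  refine ⟨⟨C + C', fun x => (abs_add_le _ _).trans (add_le_add (hC x) (hC' x))⟩, fun ε hε => ?_⟩
  filter_upwards [hf.uc (ε / 2) (half_pos hε), hf'.uc (ε / 2) (half_pos hε)] with g h1 h2 x
  have a1 := abs_le.1 (h1 x)
  have a2 := abs_le.1 (h2 x)
  exact abs_le.2 ⟨by linarith, by linarith⟩

lemma const_mul (hf : RUC f) (c : ℝ) : RUC (fun x => c * f x) := by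
  obtain ⟨C, hC⟩ := hf.bdd
  refine ⟨⟨|c| * C, fun x => ?_⟩, fun ε hε => ?_⟩
  · rw [abs_mul]; exact mul_le_mul_of_nonneg_left (hC x) (abs_nonneg _)
  have hp : 0 < |c| + 1 := by positivity
  filter_upwards [hf.uc (ε / (|c| + 1)) (by positivity)] with g h1 x
  rw [← mul_sub, abs_mul]
  calc |c| * |f (rightTranslate n g x) - f x| ≤ (|c| + 1) * (ε / (|c| + 1)) := by
        gcongr
        · linarith
        · exact h1 x
    _ = ε := by field_simp

lemma sub (hf : RUC f) (hf' : RUC f') : RUC (fun x => f x - f' x) := by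
  have := hf.add (hf'.const_mul (-1))
  refine (iff_of_eq ?_).1 this
  congr 1; ext x; ring

lemma abs (hf : RUC f) : RUC (fun x => |f x|) := by
  obtain ⟨C, hC⟩ := hf.bdd
  refine ⟨⟨C, fun x => by rw [abs_abs]; exact hC x⟩, fun ε hε => ?_⟩
  filter_upwards [hf.uc ε hε] with g h1 x
  exact (abs_abs_sub_abs_le_abs_sub _ _).trans (h1 x)

lemma translate (hf : RUC f) (g₀ : SLR n) : RUC (fun x => f (rightTranslate n g₀ x)) := by
  obtain ⟨C, hC⟩ := hf.bdd
  refine ⟨⟨C, fun x => hC _⟩, fun ε hε => ?_⟩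
  have h1 : Tendsto (fun k : SLR n => g₀⁻¹ * k * g₀) (𝓝 1) (𝓝 1) := by
    have : Continuous (fun k : SLR n => g₀⁻¹ * k * g₀) := by fun_prop
    simpa using this.tendsto 1
  filter_upwards [h1.eventually (hf.uc ε hε)] with g h x
  have := h (rightTranslate n g₀ x)
  rw [rightTranslate_mul] at this
  rw [rightTranslate_mul]
  convert this using 5
  group

lemma sum {ι : Type*} (s : Finset ι) (F : ι → XSpace n → ℝ) (h : ∀ i ∈ s, RUC (F i)) :
    RUC (fun x => ∑ i ∈ s, F i x) := by
  classical
  induction s using Finset.induction_on with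
  | empty => simpa using const (n := n) 0
  | insert a s ha ih =>
    simp only [Finset.sum_insert ha]
    exact (h a (Finset.mem_insert_self _ _)).add
      (ih fun i hi => h i (Finset.mem_insert_of_mem hi))

lemma integrable (hf : RUC f) (μ : Measure (XSpace n)) [IsFiniteMeasure μ] : Integrable f μ := by
  obtain ⟨C, hC⟩ := hf.bdd
  exact Integrable.of_bound hf.measurable.aestronglyMeasurable C (Eventually.of_forall hC)

end RUC

/-- Left Haar measure on `SL_n(ℝ)`. -/
def haarG (n : ℕ) : Measure (SLR n) := Measure.haar

instance haarG_isHaar (n : ℕ) : (haarG n).IsHaarMeasure := by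
  unfold haarG; infer_instance

instance haarG_sigmaFinite (n : ℕ) : SigmaFinite (haarG n) := by
  unfold haarG; infer_instance

/-- Invariance hypotheses packaged together. -/
structure InvProb {n : ℕ} (μ : Measure (XSpace n)) : Prop where
  prob : IsProbabilityMeasure μ
  inv : ∀ g, Measure.map (rightTranslate n g) μ = μ

lemma InvProb.mp {n : ℕ} {μ : Measure (XSpace n)} (h : InvProb μ) (g : SLR n) :
    MeasurePreserving (rightTranslate n g) μ μ := ⟨measurable_rightTranslate g, h.inv g⟩

lemma key_ineq {n : ℕ} {μ : Measure (XSpace n)} (hμ : InvProb μ) (V : Set (SLR n))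
    (hV : IsCompact V) :
    ∃ C : ℝ≥0∞, C ≠ ⊤ ∧ ∀ ψ : XSpace n → ℝ≥0∞, Measurable ψ →
      ∫⁻ g in V, ψ (mkX g) ∂(haarG n) ≤ C * ∫⁻ x, ψ x ∂μ := by
  have := hμ.prob
  obtain ⟨k, hk⟩ : ∃ k, μ ((mkX : SLR n → XSpace n) '' compactCovering (SLR n) k) ≠ 0 := by
    by_contra! hcon
    have := measure_iUnion_null hcon
    rw [← Set.image_iUnion, iUnion_compactCovering, Set.image_univ,
      Set.range_eq_univ.2 mkX_surj, measure_univ] at this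
    exact one_ne_zero this
  set Q := compactCovering (SLR n) k with hQ
  have hQc : IsCompact Q := isCompact_compactCovering _ _
  set K' : Set (SLR n) := (fun q : SLR n × SLR n => q.1⁻¹ * q.2) '' (Q ×ˢ V) with hK'
  have hK'c : IsCompact K' := (hQc.prod hV).image (by fun_prop)
  have hK'm : MeasurableSet K' := hK'c.isClosed.measurableSet
  have hVm : MeasurableSet V := hV.isClosed.measurableSet
  refine ⟨haarG n K' / μ (mkX '' Q), ?_, fun ψ hψ => ?_⟩
  · exact ENNReal.div_ne_top hK'c.measure_lt_top.ne hk
  set I := ∫⁻ g in V, ψ (mkX g) ∂(haarG n) with hI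
  let F : XSpace n → ℝ≥0∞ := fun x => ∫⁻ g in K', ψ (rightTranslate n g x) ∂(haarG n)
  have hF1 : mkX '' Q ⊆ {x | I ≤ F x} := by
    rintro _ ⟨q, hq, rfl⟩
    show I ≤ ∫⁻ g in K', ψ (mkX (q * g)) ∂(haarG n)
    rw [hI, ← lintegral_indicator hVm, ← lintegral_indicator hK'm,
      ← lintegral_mul_left_eq_self _ q]
    refine lintegral_mono fun g => ?_
    by_cases hg : q * g ∈ V
    · have : g ∈ K' := ⟨(q, q * g), ⟨hq, hg⟩, by simp⟩
      simp [hg, this]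
    · simp [hg]
  have hF2 : ∫⁻ x, F x ∂μ = haarG n K' * ∫⁻ x, ψ x ∂μ := by
    show ∫⁻ x, ∫⁻ g in K', ψ (rightTranslate n g x) ∂(haarG n) ∂μ = _
    rw [lintegral_lintegral_swap (f := fun x g => ψ (rightTranslate n g x))
      (hψ.comp measurable_act).aemeasurable]
    have : ∀ g, ∫⁻ x, ψ (rightTranslate n g x) ∂μ = ∫⁻ x, ψ x ∂μ := fun g =>
      (hμ.mp g).lintegral_comp hψ
    simp only [this, lintegral_const, Measure.restrict_apply MeasurableSet.univ, Set.univ_inter]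
    rw [mul_comm]
  have hFm : Measurable F := by
    refine Measurable.lintegral_prod_right' (f := fun q : XSpace n × SLR n => ψ (rightTranslate n q.2 q.1)) ?_
    exact hψ.comp measurable_act
  have h3 := mul_meas_ge_le_lintegral hFm (μ := μ) I
  rw [hF2] at h3
  rw [← ENNReal.mul_div_right_comm, ENNReal.le_div_iff_mul_le (Or.inl hk) (Or.inl (measure_ne_top _ _))]
  exact (mul_le_mul_right (measure_mono hF1) I).trans h3

/-! ### Part 3: the Mautner phenomenon and ergodicity -/

open Matrix.SpecialLinearGroup in
lemma tv_mul3 {n : ℕ} {k l : Fin n} (h : k ≠ l) (x ε y lam : ℝ) (hl : lam ≠ 0)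
    (h1 : 1 + x * ε = lam) (h2 : y = - x / lam) :
    (transvection h x * transvection h.symm ε * transvection h y : SLR n) =
      diag2n h lam hl * transvection h.symm (ε * lam) := by
  apply Subtype.ext
  have hy : x + y * lam = 0 := by rw [h2]; field_simp; ring
  have hy2 : 1 + ε * y = lam⁻¹ := by
    rw [h2]; field_simp; linarith
  have e1 : (diag2n h lam hl).1 =
      1 + Matrix.single k k (lam - 1) + Matrix.single l l (lam⁻¹ - 1) := by
    rw [diag2n_coe]
    ext i j
    by_cases hij : i = j
    · subst hij
      by_cases hk : i = k
      · subst hk; simp [Matrix.single_apply, h.symm]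
      · by_cases hl' : i = l
        · subst hl'; simp [Matrix.single_apply, hk, h]
        · simp [Matrix.single_apply, hk, hl', Ne.symm hk, Ne.symm hl']
    · have a1 : ¬ (k = i ∧ k = j) := fun h => hij (h.1.symm.trans h.2)
      have a2 : ¬ (l = i ∧ l = j) := fun h => hij (h.1.symm.trans h.2)
      simp [Matrix.single_apply, hij, a1, a2]
  show (transvection h x).1 * (transvection h.symm ε).1 * (transvection h y).1 =
    (diag2n h lam hl).1 * (transvection h.symm (ε * lam)).1
  have e2 : ∀ {a b : Fin n} (hab : a ≠ b) (t : ℝ), (transvection hab t : SLR n).1 = 1 + Matrix.single a b t :=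
    fun _ _ => rfl
  rw [e1, e2, e2, e2, e2]
  simp only [mul_add, add_mul, mul_one, one_mul, Matrix.single_mul_single_same, ne_eq, h, h.symm,
    not_false_eq_true, Matrix.single_mul_single_of_ne, add_zero, zero_add, zero_mul]
  have q1 : (1 : Matrix (Fin n) (Fin n) ℝ) + single k l x + (single l k ε + single k k (x * ε)) +
      (single k l y + (single l l (ε * y) + single k l (x * ε * y))) =
      1 + single l k ε + single k k (x * ε) + single l l (ε * y) +
        single k l (x + y + x * ε * y) := by
    rw [Matrix.single_add, Matrix.single_add]; abel
  have q2 : x + y + x * ε * y = 0 := by rw [← hy, ← h1]; ring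
  have q3 : ε * y = lam⁻¹ - 1 := by linarith
  have q4 : x * ε = lam - 1 := by linarith
  have q5 : (single l k (ε * lam) + single l k ((lam⁻¹ - 1) * (ε * lam)) :
      Matrix (Fin n) (Fin n) ℝ) = single l k ε := by
    rw [← Matrix.single_add]; congr 1; field_simp; ring
  rw [q1, q2, q3, q4, Matrix.single_zero, add_zero, ← q5]
  abel

open Matrix.SpecialLinearGroup in
lemma tv_conj {n : ℕ} {k l : Fin n} (h : k ≠ l) {x y : Fin n} (hxy : x ≠ y) (d : Fin n → ℝ)
    (hd : d = fun i => if i = k then (2 : ℝ) else if i = l then 2⁻¹ else 1) (t : ℝ) :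
    (diag2n h 2 two_ne_zero * transvection hxy t : SLR n) =
      transvection hxy (t * (d x / d y)) * diag2n h 2 two_ne_zero := by
  apply Subtype.ext
  have hd0 : d y ≠ 0 := by rw [hd]; dsimp; split_ifs <;> norm_num
  show Matrix.diagonal _ * (1 + Matrix.single x y t) = (1 + Matrix.single x y _) * Matrix.diagonal _
  simp only [← hd]
  rw [mul_add, add_mul, mul_one, one_mul]
  congr 1
  ext i j
  rw [Matrix.diagonal_mul, Matrix.mul_diagonal]
  by_cases hij : x = i ∧ y = j
  · obtain ⟨rfl, rfl⟩ := hij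
    simp; field_simp
  · simp [Matrix.single_apply, hij]

open Matrix.SpecialLinearGroup in
lemma tv_comm {n : ℕ} {x y k : Fin n} (hxy : x ≠ y) (hxk : x ≠ k) (hky : k ≠ y) (t : ℝ) :
    (transvection hxy t : SLR n) = transvection hxk t * transvection hky 1 *
      transvection hxk (-t) * transvection hky (-1) := by
  apply Subtype.ext
  show 1 + single x y t = (1 + single x k t) * (1 + single k y 1) * (1 + single x k (-t)) *
    (1 + single k y (-1) : Matrix (Fin n) (Fin n) ℝ)
  simp only [mul_add, add_mul, mul_one, one_mul, Matrix.single_mul_single_same, ne_eq, hxy, hxk,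
    hky, hxy.symm, hxk.symm, hky.symm,
    not_false_eq_true, Matrix.single_mul_single_of_ne, add_zero, zero_add, zero_mul]
  simp only [mul_neg, mul_one, neg_neg, ← Matrix.single_neg]
  abel

lemma continuous_tv {n : ℕ} {k l : Fin n} (h : k ≠ l) :
    Continuous (fun t : ℝ => (Matrix.SpecialLinearGroup.transvection h t : SLR n)) := by
  refine (slr_isClosedEmbedding n).isEmbedding.continuous_iff.2 ?_
  show Continuous (fun t : ℝ => (1 + single k l t : Matrix (Fin n) (Fin n) ℝ))
  refine continuous_const.add ?_
  refine continuous_matrix fun i j => ?_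
  by_cases hij : k = i ∧ l = j
  · obtain ⟨rfl, rfl⟩ := hij
    simpa using continuous_id'
  · simp [Matrix.single_apply, hij, continuous_const]

/-- The closure property of stabilizers used in the Mautner argument. -/
def MautnerClosed {n : ℕ} (S : Subgroup (SLR n)) : Prop :=
  ∀ (a : SLR n) (s t w z : ℕ → SLR n), (∀ m, s m ∈ S) → (∀ m, t m ∈ S) →
    Tendsto w atTop (𝓝 1) → Tendsto z atTop (𝓝 1) →
    (∀ m, s m * w m * t m = a * z m) → a ∈ S

open Matrix.SpecialLinearGroup in
lemma mautner {n : ℕ} (S : Subgroup (SLR n)) (hS : MautnerClosed S) {k l : Fin n} (h : k ≠ l)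
    (hu : transvection h (1 : ℝ) ∈ S) (g : SLR n) : g ∈ S := by
  have tv0 : ∀ {x y : Fin n} (hxy : x ≠ y) (f : ℕ → ℝ), Tendsto f atTop (𝓝 0) →
      Tendsto (fun m => (transvection hxy (f m) : SLR n)) atTop (𝓝 1) := by
    intro x y hxy f hf
    have := ((continuous_tv hxy).tendsto 0).comp hf
    rwa [transvection_coeff_zero] at this
  have tvadd : ∀ {x y : Fin n} (hxy : x ≠ y) (s t : ℝ), (transvection hxy s * transvection hxy t : SLR n)
      = transvection hxy (s + t) := by
    intro x y hxy s t
    apply Subtype.ext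
    show (1 + single x y s) * (1 + single x y t) = (1 + single x y (s + t) : Matrix (Fin n) (Fin n) ℝ)
    simp only [mul_add, add_mul, mul_one, one_mul, ne_eq, hxy, hxy.symm,
      not_false_eq_true, Matrix.single_mul_single_of_ne, add_zero, Matrix.single_add]
    abel
  have hnat : ∀ m : ℕ, (transvection h (m : ℝ) : SLR n) ∈ S := by
    intro m
    induction m with
    | zero => rw [Nat.cast_zero, transvection_coeff_zero]; exact S.one_mem
    | succ m ih => rw [Nat.cast_succ, ← tvadd]; exact S.mul_mem ih hu
  have hneg : ∀ m : ℕ, (transvection h (-(m : ℝ)) : SLR n) ∈ S := by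
    intro m
    have : (transvection h (-(m : ℝ)) : SLR n) = (transvection h (m : ℝ) : SLR n)⁻¹ := by
      rw [eq_inv_iff_mul_eq_one, tvadd, neg_add_cancel, transvection_coeff_zero]
    rw [this]; exact S.inv_mem (hnat m)
  have ha : (diag2n h (2 : ℝ) two_ne_zero : SLR n) ∈ S := by
    have l1 : Tendsto (fun m : ℕ => 1 / ((m : ℝ) + 1)) atTop (𝓝 0) :=
      tendsto_one_div_add_atTop_nhds_zero_nat
    refine hS _ (fun m => transvection h ((2 * (m + 1) : ℕ) : ℝ))
      (fun m => transvection h (-((m + 1 : ℕ) : ℝ)))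
      (fun m => transvection h.symm ((1 / ((m : ℝ) + 1)) / 2))
      (fun m => transvection h.symm ((1 / ((m : ℝ) + 1)) / 2 * 2))
      (fun m => hnat _) (fun m => hneg _) (tv0 _ _ ?_) (tv0 _ _ ?_) (fun m => ?_)
    · simpa using l1.div_const 2
    · simpa using l1
    · have : (m : ℝ) + 1 ≠ 0 := by positivity
      apply tv_mul3
      · push_cast; field_simp; norm_num
      · push_cast; field_simp
  set a : SLR n := diag2n h (2 : ℝ) two_ne_zero with hadef
  set d : Fin n → ℝ := fun i => if i = k then (2 : ℝ) else if i = l then 2⁻¹ else 1 with hd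
  have hdpos : ∀ i, 0 < d i := by
    intro i; rw [hd]; dsimp; split_ifs <;> norm_num
  have hconj : ∀ {x y : Fin n} (hxy : x ≠ y) (t : ℝ) (m : ℕ),
      a ^ m * transvection hxy t = transvection hxy (t * (d x / d y) ^ m) * a ^ m := by
    intro x y hxy t m
    induction m generalizing t with
    | zero => simp
    | succ m ih =>
      rw [pow_succ, mul_assoc, tv_conj h hxy d hd, ← mul_assoc, ih, pow_succ (d x / d y), mul_assoc,
        mul_assoc, mul_comm ((d x / d y) ^ m)]
  have hne : ∀ {x y : Fin n} (hxy : x ≠ y), d x ≠ d y → ∀ t : ℝ, (transvection hxy t : SLR n) ∈ S := by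
    intro x y hxy hdd t
    have hwp : 0 < d x / d y := div_pos (hdpos x) (hdpos y)
    rcases lt_or_gt_of_ne hdd with hlt | hgt
    · have hw1 : d x / d y < 1 := (div_lt_one (hdpos y)).2 hlt
      refine hS _ (fun m => (a ^ m)⁻¹) (fun m => a ^ m)
        (fun m => transvection hxy (t * (d x / d y) ^ m)) (fun _ => 1)
        (fun m => S.inv_mem (S.pow_mem ha m)) (fun m => S.pow_mem ha m) (tv0 _ _ ?_)
        tendsto_const_nhds (fun m => ?_)
      · simpa using (tendsto_pow_atTop_nhds_zero_of_lt_one hwp.le hw1).const_mul t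
      · rw [mul_assoc, ← hconj]; simp
    · have hw1 : d y / d x < 1 := (div_lt_one (hdpos x)).2 hgt
      refine hS _ (fun m => a ^ m) (fun m => (a ^ m)⁻¹)
        (fun m => transvection hxy (t * (d y / d x) ^ m)) (fun _ => 1)
        (fun m => S.pow_mem ha m) (fun m => S.inv_mem (S.pow_mem ha m)) (tv0 _ _ ?_)
        tendsto_const_nhds (fun m => ?_)
      · simpa using (tendsto_pow_atTop_nhds_zero_of_lt_one
          (div_pos (hdpos y) (hdpos x)).le hw1).const_mul t
      · have := (hdpos x).ne'
        have := (hdpos y).ne'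
        rw [hconj, mul_assoc t, ← mul_pow, div_mul_div_cancel₀ (hdpos x).ne', div_self (hdpos y).ne']
        simp
  have hall : ∀ {x y : Fin n} (hxy : x ≠ y) (t : ℝ), (transvection hxy t : SLR n) ∈ S := by
    intro x y hxy t
    by_cases hdd : d x = d y
    · have dk : d k = 2 := by simp [hd]
      have dl : d l = 2⁻¹ := by simp [hd, h.symm]
      have hx1 : x ≠ k ∧ d x ≠ 2 := by
        by_cases hxk : x = k
        · exfalso
          subst hxk
          rw [dk] at hdd
          simp only [hd] at hdd
          by_cases hyl : y = l
          · simp [hxy.symm, hyl, h.symm] at hdd; norm_num at hdd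
          · simp [hxy.symm, hyl] at hdd
        · refine ⟨hxk, ?_⟩
          simp only [hd, if_neg hxk]
          split_ifs <;> norm_num
      have hxk : d x ≠ d k := by rw [dk]; exact hx1.2
      have hyk : k ≠ y := by rintro rfl; exact hxk hdd
      rw [tv_comm hxy hx1.1 hyk t]
      have hky : d k ≠ d y := by rw [← hdd]; exact hxk.symm
      exact S.mul_mem (S.mul_mem (S.mul_mem (hne _ hxk _) (hne _ hky _)) (hne _ hxk _)) (hne _ hky _)
    · exact hne hxy hdd t
  haveI : Nontrivial (Fin n) := ⟨k, l, h⟩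
  refine diagonal_transvection_induction' (fun g => g ∈ S) g ?_ (fun i j hij a => hall hij a)
    (fun A B hA hB => S.mul_mem hA hB)
  intro i j hij c hc
  have := tv_mul3 hij (c - 1) 1 (-(c - 1) / c) c hc (by ring) rfl
  rw [eq_comm, ← eq_mul_inv_iff_mul_eq] at this
  show diag2n hij c hc ∈ S
  rw [this]
  exact S.mul_mem (S.mul_mem (S.mul_mem (hall _ _) (hall _ _)) (hall _ _)) (S.inv_mem (hall _ _))

/-! ### Part 4: mean ergodic theorem for a unipotent -/

lemma ae_const_of_inv {n : ℕ} {μ : Measure (XSpace n)} (hμ : InvProb μ) (φ : XSpace n → ℝ)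
    (hφ : Measurable φ) (h : ∀ g : SLR n, ∀ᵐ x ∂μ, φ (rightTranslate n g x) = φ x) :
    ∃ c : ℝ, ∀ᵐ x ∂μ, φ x = c := by
  have := hμ.prob
  have h1 : ∀ᵐ x ∂μ, ∀ᵐ g ∂(haarG n), φ (rightTranslate n g x) = φ x := by
    refine (Measure.ae_ae_comm (p := fun g x => φ (rightTranslate n g x) = φ x) ?_).1
      (Eventually.of_forall h)
    exact measurableSet_eq_fun (hφ.comp (measurable_act.comp measurable_swap))
      (hφ.comp measurable_snd)
  obtain ⟨x0, hx0⟩ := h1.exists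
  obtain ⟨h0, rfl⟩ := mkX_surj x0
  refine ⟨φ (mkX h0), ?_⟩
  set c := φ (mkX h0) with hc
  have h2 : ∀ᵐ g ∂(haarG n), φ (mkX g) = c := by
    have h5 := (measurePreserving_mul_left (haarG n) h0⁻¹).quasiMeasurePreserving.ae
      (p := fun g => φ (rightTranslate n g (mkX h0)) = c) hx0
    filter_upwards [h5] with g hg
    rwa [rightTranslate_mkX, mul_inv_cancel_left] at hg
  have h3 : ∀ x, ∀ᵐ g ∂(haarG n), φ (rightTranslate n g x) = c := by
    intro x
    obtain ⟨k, rfl⟩ := mkX_surj x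
    have h5 := (measurePreserving_mul_left (haarG n) k).quasiMeasurePreserving.ae
      (p := fun g => φ (mkX g) = c) h2
    filter_upwards [h5] with g hg
    rw [rightTranslate_mkX]
    exact hg
  have h4 : ∀ᵐ g ∂(haarG n), ∀ᵐ x ∂μ, φ (rightTranslate n g x) = c := by
    refine (Measure.ae_ae_comm (p := fun x g => φ (rightTranslate n g x) = c) ?_).1
      (Eventually.of_forall h3)
    exact measurableSet_eq_fun (hφ.comp measurable_act) measurable_const
  obtain ⟨g, hg⟩ := h4.exists
  filter_upwards [hg, h g] with x h5 h6
  rw [← h6, h5]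

/-- The ergodic averages along powers of `u`. -/
def ergAvg {n : ℕ} (u : SLR n) (f : XSpace n → ℝ) (H : ℕ) (x : XSpace n) : ℝ :=
  (H : ℝ)⁻¹ * ∑ h ∈ Finset.range H, f (rightTranslate n (u ^ h) x)

lemma RUC.ergAvg {n : ℕ} {f : XSpace n → ℝ} (hf : RUC f) (u : SLR n) (H : ℕ) :
    RUC (ergAvg u f H) :=
  (RUC.sum _ _ fun h _ => hf.translate (u ^ h)).const_mul _

lemma integral_ergAvg {n : ℕ} {μ : Measure (XSpace n)} (hμ : InvProb μ) {f : XSpace n → ℝ}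
    (hf : RUC f) (u : SLR n) {H : ℕ} (hH : H ≠ 0) :
    ∫ x, ergAvg u f H x ∂μ = ∫ x, f x ∂μ := by
  have := hμ.prob
  unfold ergAvg
  rw [integral_const_mul, integral_finsetSum _ fun h _ => (hf.translate _).integrable μ]
  have : ∀ h, ∫ x, f (rightTranslate n (u ^ h) x) ∂μ = ∫ x, f x ∂μ := by
    intro h
    conv_rhs => rw [← hμ.inv (u ^ h)]
    rw [integral_map (measurable_rightTranslate _).aemeasurable
      hf.measurable.aestronglyMeasurable]
  simp only [this, Finset.sum_const, Finset.card_range, nsmul_eq_mul]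
  field_simp

lemma RUC.memLp {n : ℕ} {f : XSpace n → ℝ} (hf : RUC f) (μ : Measure (XSpace n))
    [IsFiniteMeasure μ] : MemLp f 2 μ := by
  obtain ⟨C, hC⟩ := hf.bdd
  exact MemLp.of_bound hf.measurable.aestronglyMeasurable C (Eventually.of_forall hC)

theorem mean_ergodic {n : ℕ} {μ : Measure (XSpace n)} (hμ : InvProb μ) {f : XSpace n → ℝ}
    (hf : RUC f) {k l : Fin n} (hkl : k ≠ l) :
    Tendsto (fun H : ℕ => ∫ x, |ergAvg (SpecialLinearGroup.transvection hkl 1) f H x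
      - ∫ y, f y ∂μ| ∂μ) atTop (𝓝 0) := by
  have := hμ.prob
  set u : SLR n := SpecialLinearGroup.transvection hkl 1 with hu
  let ρ : SLR n → (Lp ℝ 2 μ →ₗᵢ[ℝ] Lp ℝ 2 μ) := fun g =>
    Lp.compMeasurePreservingₗᵢ ℝ (rightTranslate n g) (hμ.mp g)
  have hρcoe : ∀ g (v : Lp ℝ 2 μ), (ρ g v : XSpace n → ℝ) =ᵐ[μ] fun x => v (rightTranslate n g x) :=
    fun g v => Lp.coeFn_compMeasurePreserving v (hμ.mp g)
  have hρmul : ∀ g h (v : Lp ℝ 2 μ), ρ (g * h) v = ρ g (ρ h v) := by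
    intro g h v
    apply Lp.ext
    refine (hρcoe _ _).trans ?_
    refine EventuallyEq.trans ?_ (hρcoe g (ρ h v)).symm
    have := (hμ.mp g).quasiMeasurePreserving.ae (hρcoe h v)
    filter_upwards [this] with x hx
    rw [hx, rightTranslate_mul]
  have hρone : ∀ v : Lp ℝ 2 μ, ρ 1 v = v := by
    intro v
    apply Lp.ext
    refine (hρcoe _ _).trans (Eventually.of_forall fun x => ?_)
    simp only [rightTranslate_one]
  have hρtoLp : ∀ g (f' : XSpace n → ℝ) (hf' : RUC f'), ρ g ((hf'.memLp μ).toLp f') =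
      ((hf'.translate g).memLp μ).toLp _ := fun g f' hf' => rfl
  set F : Lp ℝ 2 μ := (hf.memLp μ).toLp f with hF
  have hpow : ∀ (h : ℕ) (v : Lp ℝ 2 μ), (⇑(ρ u).toContinuousLinearMap)^[h] v = ρ (u ^ h) v := by
    intro h v
    induction h generalizing v with
    | zero => simp [hρone]
    | succ h ih =>
      rw [Function.iterate_succ_apply, ih, pow_succ, hρmul]
      rfl
  have hbirk : ∀ H : ℕ, birkhoffAverage ℝ (⇑(ρ u).toContinuousLinearMap) _root_.id H F =
      ((hf.ergAvg u H).memLp μ).toLp _ := by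
    intro H
    unfold birkhoffAverage birkhoffSum
    simp only [hpow, id]
    rw [hF, Finset.sum_congr rfl (fun h _ => hρtoLp (u ^ h) f hf), ← sub_eq_zero]
    have hs : ∀ s : Finset ℕ, ∑ h ∈ s, ((hf.translate (u ^ h)).memLp μ).toLp _ =
        ((RUC.sum s _ fun h _ => hf.translate (u ^ h)).memLp μ).toLp _ := by
      intro s
      classical
      induction s using Finset.induction_on with
      | empty => 
        simp only [Finset.sum_empty]
        rfl
      | insert a s ha ih =>
        rw [Finset.sum_insert ha, ih, ← MemLp.toLp_add]
        congr 1
        ext x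
        simp [Finset.sum_insert ha]
    rw [hs, ← MemLp.toLp_const_smul, sub_eq_zero]
    rfl
  have hlim := (ρ u).toContinuousLinearMap.tendsto_birkhoffAverage_orthogonalProjection
    (ρ u).norm_toContinuousLinearMap_le F
  simp only [hbirk] at hlim
  set P := ((ρ u).toContinuousLinearMap.eqLocus (1 : Lp ℝ 2 μ →L[ℝ] Lp ℝ 2 μ)).orthogonalProjectionOnto F
  set v : Lp ℝ 2 μ := (P : Lp ℝ 2 μ) with hv
  have hvu : ρ u v = v := P.2
  have hcont : Tendsto (fun g => ρ g v) (𝓝 1) (𝓝 v) := by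
    rw [Metric.tendsto_nhds]
    intro ε hε
    obtain ⟨H, hH⟩ := ((Metric.tendsto_nhds.1 hlim) (ε / 4) (by positivity)).exists
    filter_upwards [(hf.ergAvg u H).uc (ε / 4) (by positivity)] with g hg
    set A := ((hf.ergAvg u H).memLp μ).toLp _ with hA
    have h1 : dist (ρ g v) (ρ g A) < ε / 4 := by
      rw [(ρ g).isometry.dist_eq, dist_comm]; exact hH
    have h2 : dist (ρ g A) A ≤ ε / 4 := by
      rw [hA, hρtoLp g _ (hf.ergAvg u H), dist_eq_norm, ← MemLp.toLp_sub]
      have := Lp.norm_le_of_ae_bound (μ := μ) (p := 2) (C := ε / 4)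
        (f := (((hf.ergAvg u H).translate g).memLp μ |>.sub ((hf.ergAvg u H).memLp μ)).toLp _)
        (by positivity) ?_
      · refine this.trans (le_of_eq ?_)
        simp [measureUnivNNReal]
      · filter_upwards [MemLp.coeFn_toLp (((hf.ergAvg u H).translate g).memLp μ |>.sub ((hf.ergAvg u H).memLp μ))] with x hx
        rw [hx]
        exact hg x
    calc dist (ρ g v) v ≤ dist (ρ g v) (ρ g A) + dist (ρ g A) A + dist A v := dist_triangle4 _ _ _ _
      _ < ε := by linarith
  let S : Subgroup (SLR n) :=
    { carrier := {g | ρ g v = v}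
      mul_mem' := fun {a b} ha hb => by
        simp only [Set.mem_ofPred_eq] at ha hb ⊢
        rw [hρmul, hb, ha]
      one_mem' := hρone v
      inv_mem' := fun {a} ha => by
        simp only [Set.mem_ofPred_eq] at ha ⊢
        nth_rewrite 1 [← ha]
        rw [← hρmul, inv_mul_cancel, hρone] }
  have hSm : MautnerClosed S := by
    intro a s t w z hs ht hw hz heq
    have e1 : Tendsto (fun m => ρ (a * z m) v) atTop (𝓝 (ρ a v)) := by
      simp only [hρmul]
      exact ((ρ a).continuous.tendsto _).comp (hcont.comp hz)
    have e2 : Tendsto (fun m => ρ (a * z m) v) atTop (𝓝 v) := by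
      rw [tendsto_iff_dist_tendsto_zero]
      have e3 := (tendsto_iff_dist_tendsto_zero.1 (hcont.comp hw))
      refine e3.congr fun m => ?_
      have hsm : ρ (s m) v = v := hs m
      have htm : ρ (t m) v = v := ht m
      rw [← heq, hρmul, htm, hρmul]
      calc dist (ρ (w m) v) v = dist (ρ (s m) (ρ (w m) v)) (ρ (s m) v) :=
            ((ρ (s m)).isometry.dist_eq _ _).symm
        _ = _ := by rw [hsm]
    exact tendsto_nhds_unique e1 e2
  have hfix : ∀ g, ρ g v = v := fun g => mautner S hSm hkl hvu g
  obtain ⟨c, hc⟩ := ae_const_of_inv hμ v (Lp.stronglyMeasurable v).measurable (fun g => by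
    filter_upwards [hρcoe g v] with x hx
    rw [← hx, hfix])
  have hL1 : Tendsto (fun H : ℕ => ∫ x, |ergAvg u f H x - c| ∂μ) atTop (𝓝 0) := by
    refine squeeze_zero (fun H => integral_nonneg fun x => abs_nonneg _) (fun H => ?_)
      (tendsto_iff_dist_tendsto_zero.1 hlim)
    have hR : RUC fun x => ergAvg u f H x - c := (hf.ergAvg u H).sub (RUC.const c)
    have i1 : ∫ x, |ergAvg u f H x - c| ∂μ = (eLpNorm (fun x => ergAvg u f H x - c) 1 μ).toReal := by
      rw [eLpNorm_one_eq_lintegral_enorm]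
      exact integral_norm_eq_lintegral_enorm hR.measurable.aestronglyMeasurable
    rw [i1, Lp.dist_def]
    refine ENNReal.toReal_mono (Lp.eLpNorm_lt_top (((hf.ergAvg u H).memLp μ).toLp _ - v) |>.ne |> fun h => ?_) ?_
    · rwa [eLpNorm_congr_ae (Lp.coeFn_sub _ _)] at h
    · refine (eLpNorm_le_eLpNorm_of_exponent_le (q := 2) (by norm_num) hR.measurable.aestronglyMeasurable).trans
        (le_of_eq (eLpNorm_congr_ae ?_))
      filter_upwards [hc, MemLp.coeFn_toLp ((hf.ergAvg u H).memLp μ)] with x h1 h2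
      simp [h1, h2]
  have hcc : c = ∫ y, f y ∂μ := by
    refine tendsto_nhds_unique (f := fun H : ℕ => ∫ x, ergAvg u f H x ∂μ) (l := atTop) ?_ ?_
    · rw [tendsto_iff_norm_sub_tendsto_zero]
      refine squeeze_zero (fun H => norm_nonneg _) (fun H => ?_) hL1
      have : ∫ x, ergAvg u f H x ∂μ - c = ∫ x, (ergAvg u f H x - c) ∂μ := by
        rw [integral_sub ((hf.ergAvg u H).integrable μ) (integrable_const _)]; simp
      rw [this]
      exact norm_integral_le_integral_norm _
    · refine tendsto_const_nhds.congr' ?_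
      filter_upwards [eventually_ne_atTop 0] with H hH
      rw [integral_ergAvg hμ hf u hH]
  rw [← hcc]
  exact hL1

/-! ### Part 5: the unipotent group `U`, normalization and the diagonal elements -/

lemma slr_ext {n : ℕ} {g h : SLR n}
    (H : (g : Matrix (Fin n) (Fin n) ℝ) = (h : Matrix (Fin n) (Fin n) ℝ)) : g = h :=
  Subtype.ext H

lemma slr_coe_mul {n : ℕ} (g h : SLR n) :
    ((g * h : SLR n) : Matrix (Fin n) (Fin n) ℝ) =
      (g : Matrix (Fin n) (Fin n) ℝ) * (h : Matrix (Fin n) (Fin n) ℝ) := rfl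

lemma slr_coe_one {n : ℕ} : ((1 : SLR n) : Matrix (Fin n) (Fin n) ℝ) = 1 := rfl

/-- Make an element of `SL_n(ℝ)`. -/
def mkSL {n : ℕ} (M : Matrix (Fin n) (Fin n) ℝ) (h : M.det = 1) : SLR n := ⟨M, h⟩

lemma mkSL_coe {n : ℕ} (M : Matrix (Fin n) (Fin n) ℝ) (h : M.det = 1) :
    (mkSL M h : Matrix (Fin n) (Fin n) ℝ) = M := rfl

/-- Normalize a real matrix of positive determinant to determinant one. -/
def nrm {n : ℕ} (M : Matrix (Fin n) (Fin n) ℝ) : SLR n :=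
  if h : 0 < M.det then
    mkSL ((M.det ^ (-(1 / (n : ℝ)))) • M) (by
      rw [det_smul, Fintype.card_fin]
      rcases Nat.eq_zero_or_pos n with h0 | h0
      · subst h0; simp
      · have : (n : ℝ) ≠ 0 := by positivity
        rw [← Real.rpow_natCast, ← Real.rpow_mul h.le]
        have : -(1 / (n : ℝ)) * n = -1 := by field_simp
        rw [this, Real.rpow_neg_one, inv_mul_cancel₀ h.ne'])
  else 1

lemma nrm_coe {n : ℕ} {M : Matrix (Fin n) (Fin n) ℝ} (h : 0 < M.det) :
    (nrm M : Matrix (Fin n) (Fin n) ℝ) = (M.det ^ (-(1 / (n : ℝ)))) • M := by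
  unfold nrm; rw [dif_pos h, mkSL_coe]

lemma nrm_mul {n : ℕ} {M Q : Matrix (Fin n) (Fin n) ℝ} (hM : 0 < M.det) (hQ : 0 < Q.det) :
    nrm (M * Q) = nrm M * nrm Q := by
  apply slr_ext
  have hMQ : 0 < (M * Q).det := by rw [det_mul]; exact mul_pos hM hQ
  rw [slr_coe_mul, nrm_coe hM, nrm_coe hQ, nrm_coe hMQ, det_mul,
    Real.mul_rpow hM.le hQ.le, smul_mul_smul_comm]

lemma nrm_sl {n : ℕ} (g : SLR n) : nrm (g : Matrix (Fin n) (Fin n) ℝ) = g := by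
  apply slr_ext
  rw [nrm_coe (by rw [g.2]; exact one_pos), g.2, Real.one_rpow, one_smul]

/-- The lower-left block of a matrix. -/
def lowB {n : ℕ} (j : ℕ) (s : Matrix (Fin n) (Fin n) ℝ) : Matrix (Fin n) (Fin n) ℝ :=
  Matrix.of fun i k => if (k : ℕ) < j ∧ j ≤ (i : ℕ) then s i k else 0

lemma lowB_apply {n : ℕ} (j : ℕ) (s : Matrix (Fin n) (Fin n) ℝ) (i k : Fin n) :
    lowB j s i k = if (k : ℕ) < j ∧ j ≤ (i : ℕ) then s i k else 0 := rfl

lemma lowB_mul {n : ℕ} (j : ℕ) (s t : Matrix (Fin n) (Fin n) ℝ) : lowB j s * lowB j t = 0 := by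
  ext i k
  rw [Matrix.mul_apply]
  refine Finset.sum_eq_zero fun m _ => ?_
  rw [lowB_apply, lowB_apply]
  by_cases h1 : (m : ℕ) < j
  · have : ¬ ((k : ℕ) < j ∧ j ≤ (m : ℕ)) := fun h => absurd h1 (not_lt.2 h.2)
    rw [if_neg this, mul_zero]
  · have : ¬ ((m : ℕ) < j ∧ j ≤ (i : ℕ)) := fun h => h1 h.1
    rw [if_neg this, zero_mul]

lemma lowB_add {n : ℕ} (j : ℕ) (s t : Matrix (Fin n) (Fin n) ℝ) :
    lowB j (s + t) = lowB j s + lowB j t := by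
  ext i k
  simp only [lowB_apply, Matrix.add_apply]
  split_ifs <;> simp

lemma det_one_add_lowB {n : ℕ} (j : ℕ) (s : Matrix (Fin n) (Fin n) ℝ) :
    (1 + lowB j s).det = 1 := by
  rw [Matrix.det_of_isLowerTriangular]
  · refine Finset.prod_eq_one fun i _ => ?_
    rw [Matrix.add_apply, lowB_apply, if_neg (fun h => by omega)]
    simp
  · intro i k hik
    have hik' : i < k := hik
    rw [Matrix.add_apply, lowB_apply, if_neg, Matrix.one_apply_ne hik'.ne, add_zero]
    rintro ⟨h1, h2⟩
    have : (i : ℕ) < k := hik'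
    omega

/-- The unipotent elements. -/
def uG {n : ℕ} (j : ℕ) (s : Matrix (Fin n) (Fin n) ℝ) : SLR n :=
  mkSL (1 + lowB j s) (det_one_add_lowB j s)

lemma uG_coe {n : ℕ} (j : ℕ) (s : Matrix (Fin n) (Fin n) ℝ) :
    (uG j s : Matrix (Fin n) (Fin n) ℝ) = 1 + lowB j s := rfl

lemma uG_mul {n : ℕ} (j : ℕ) (s t : Matrix (Fin n) (Fin n) ℝ) :
    uG j s * uG j t = uG j (s + t) := by
  apply slr_ext
  rw [slr_coe_mul, uG_coe, uG_coe, uG_coe, lowB_add, mul_add, add_mul, add_mul,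
    lowB_mul]
  simp [add_assoc]

lemma uG_zero {n : ℕ} (j : ℕ) : uG j (0 : Matrix (Fin n) (Fin n) ℝ) = 1 := by
  apply slr_ext
  rw [uG_coe, slr_coe_one]
  convert add_zero _
  ext i k; simp [lowB_apply]

lemma uG_inv {n : ℕ} (j : ℕ) (s : Matrix (Fin n) (Fin n) ℝ) : (uG j s)⁻¹ = uG j (-s) := by
  rw [inv_eq_iff_mul_eq_one, uG_mul, add_neg_cancel, uG_zero]

lemma uG_comm {n : ℕ} (j : ℕ) (s t : Matrix (Fin n) (Fin n) ℝ) :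
    uG j s * uG j t = uG j t * uG j s := by
  rw [uG_mul, uG_mul, add_comm]

lemma continuous_uG {n : ℕ} (j : ℕ) :
    Continuous (uG j : Matrix (Fin n) (Fin n) ℝ → SLR n) := by
  refine (slr_isClosedEmbedding n).isEmbedding.continuous_iff.2 ?_
  show Continuous (fun s : Matrix (Fin n) (Fin n) ℝ => 1 + lowB j s)
  refine continuous_const.add (continuous_matrix fun i k => ?_)
  simp only [lowB_apply]
  split_ifs
  · exact Continuous.matrix_elem continuous_id i k
  · exact continuous_const

lemma uG_int_mem {n : ℕ} (j : ℕ) (z : Matrix (Fin n) (Fin n) ℤ) :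
    uG j (z.map (Int.cast : ℤ → ℝ)) ∈ Gamma n := by
  let zz : Matrix (Fin n) (Fin n) ℤ := 1 + Matrix.of fun (i k : Fin n) =>
    if (k : ℕ) < j ∧ j ≤ (i : ℕ) then z i k else 0
  have hzz : zz.map (Int.castRingHom ℝ) = 1 + lowB j (z.map (Int.cast : ℤ → ℝ)) := by
    ext i k
    simp only [zz, Matrix.map_apply, Matrix.add_apply, lowB_apply, Matrix.of_apply, Matrix.one_apply]
    split_ifs <;> simp
  refine ⟨⟨zz, ?_⟩, ?_⟩
  · have h1 : ((zz.det : ℤ) : ℝ) = 1 := by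
      have := RingHom.map_det (Int.castRingHom ℝ) zz
      rw [RingHom.mapMatrix_apply, hzz, det_one_add_lowB] at this
      simpa using this
    exact_mod_cast h1
  · apply slr_ext
    exact hzz

/-- The diagonal matrix `diag(p,…,p,1,…,1)`. -/
def dMat (n j : ℕ) (p : ℕ) : Matrix (Fin n) (Fin n) ℝ :=
  Matrix.diagonal fun i => if (i : ℕ) < j then (p : ℝ) else 1

lemma dMat_det_pos (n j : ℕ) {p : ℕ} (hp : 1 ≤ p) : 0 < (dMat n j p).det := by
  have : (0 : ℝ) < p := by exact_mod_cast hp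
  rw [dMat, det_diagonal]
  exact Finset.prod_pos fun i _ => by split_ifs <;> positivity

/-- The normalized diagonal element. -/
def aG (n j p : ℕ) : SLR n := nrm (dMat n j p)

lemma aG_mul_uG {n j p : ℕ} (hp : 1 ≤ p) (t : Matrix (Fin n) (Fin n) ℝ) :
    aG n j p * uG j t = uG j ((p : ℝ)⁻¹ • t) * aG n j p := by
  have hp0 : (p : ℝ) ≠ 0 := by positivity
  have hdp := dMat_det_pos n j hp
  have key : dMat n j p * (uG j t : Matrix (Fin n) (Fin n) ℝ) =
      (uG j ((p : ℝ)⁻¹ • t) : Matrix (Fin n) (Fin n) ℝ) * dMat n j p := by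
    rw [uG_coe, uG_coe, mul_add, add_mul, mul_one, one_mul]
    congr 1
    ext i k
    rw [dMat, Matrix.diagonal_mul, Matrix.mul_diagonal, lowB_apply, lowB_apply]
    by_cases h : (k : ℕ) < j ∧ j ≤ (i : ℕ)
    · rw [if_pos h, if_pos h, if_pos h.1, if_neg (not_lt.2 h.2)]
      simp only [Matrix.smul_apply, smul_eq_mul]
      field_simp
    · rw [if_neg h, if_neg h]; simp
  have h1 : ∀ s : Matrix (Fin n) (Fin n) ℝ, 0 < (uG j s : Matrix (Fin n) (Fin n) ℝ).det :=
    fun s => by rw [(uG j s).2]; exact one_pos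
  have := congrArg nrm key
  rwa [nrm_mul hdp (h1 _), nrm_mul (h1 _) hdp, nrm_sl, nrm_sl] at this

/-- Conjugating by `aG` does not increase the off-block entries. -/
lemma aG_conj_entry {n j p : ℕ} (hp : 1 ≤ p) (q : SLR n)
    (hq : ∀ i k : Fin n, (k : ℕ) < j ∧ j ≤ (i : ℕ) → q i k = 0) (i k : Fin n) :
    |((aG n j p)⁻¹ * q * aG n j p : SLR n) i k - (1 : Matrix (Fin n) (Fin n) ℝ) i k| ≤
      |q i k - (1 : Matrix (Fin n) (Fin n) ℝ) i k| := by
  have hp0 : (0 : ℝ) < p := by exact_mod_cast hp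
  have hp1 : (1 : ℝ) ≤ p := by exact_mod_cast hp
  have hdp := dMat_det_pos n j hp
  set r : SLR n := (aG n j p)⁻¹ * q * aG n j p with hr
  have hrel : aG n j p * r = q * aG n j p := by rw [hr]; group
  have hrel2 : dMat n j p * (r : Matrix (Fin n) (Fin n) ℝ) = (q : Matrix (Fin n) (Fin n) ℝ) * dMat n j p := by
    have h2 := congrArg (fun g : SLR n => (g : Matrix (Fin n) (Fin n) ℝ)) hrel
    simp only [slr_coe_mul] at h2
    rw [aG, nrm_coe hdp, smul_mul_assoc, mul_smul_comm] at h2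
    exact smul_right_injective _ (Real.rpow_pos_of_pos hdp _).ne' h2
  have h3 := congrFun (congrFun hrel2 i) k
  rw [dMat, Matrix.diagonal_mul, Matrix.mul_diagonal] at h3
  by_cases hi : (i : ℕ) < j
  · by_cases hk : (k : ℕ) < j
    · rw [if_pos hi, if_pos hk, mul_comm] at h3
      rw [mul_right_cancel₀ hp0.ne' h3]
    · rw [if_pos hi, if_neg hk, mul_one] at h3
      have hik : i ≠ k := fun h => hk (h ▸ hi)
      rw [Matrix.one_apply_ne hik, sub_zero, sub_zero, ← h3, abs_mul, abs_of_pos hp0]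
      exact le_mul_of_one_le_left (abs_nonneg _) hp1
  · by_cases hk : (k : ℕ) < j
    · have hik : i ≠ k := fun h => hi (h ▸ hk)
      rw [if_neg hi, hq i k ⟨hk, not_lt.1 hi⟩, zero_mul, one_mul] at h3
      rw [h3, hq i k ⟨hk, not_lt.1 hi⟩]
    · rw [if_neg hi, if_neg hk, one_mul, mul_one] at h3
      rw [h3]

/-- Decomposition near the identity. -/
lemma exists_decomp {n : ℕ} (j : ℕ) : ∃ τ : SLR n → Matrix (Fin n) (Fin n) ℝ,
    Tendsto τ (𝓝 1) (𝓝 0) ∧ ∀ᶠ w in 𝓝 (1 : SLR n),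
      ∀ i k : Fin n, (k : ℕ) < j ∧ j ≤ (i : ℕ) → (uG j (-τ w) * w : SLR n) i k = 0 := by
  let E : Matrix (Fin n) (Fin n) ℝ := Matrix.diagonal fun i => if (i : ℕ) < j then 1 else 0
  have hEE : E * E = E := by
    simp only [E, Matrix.diagonal_mul_diagonal]
    congr 1; ext i; split_ifs <;> simp
  have hE1 : (1 - E) * E = 0 := by rw [sub_mul, one_mul, hEE, sub_self]
  have hE2 : ∀ M : Matrix (Fin n) (Fin n) ℝ, lowB j M = (1 - E) * M * E := by
    intro M
    have h1E : (1 - E) = Matrix.diagonal fun i : Fin n => if (i : ℕ) < j then (0 : ℝ) else 1 := by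
      rw [← Matrix.diagonal_one, Matrix.diagonal_sub]
      congr 1; ext i; split_ifs <;> simp
    rw [h1E]
    ext i k
    rw [Matrix.mul_diagonal, Matrix.diagonal_mul, lowB_apply]
    by_cases hi : (i : ℕ) < j <;> by_cases hk : (k : ℕ) < j <;> simp [hi, hk]
  let wt : SLR n → Matrix (Fin n) (Fin n) ℝ := fun w => E * (w : Matrix (Fin n) (Fin n) ℝ) * E + (1 - E)
  have hwt : Continuous wt := by
    have := slr_continuous_coe n
    exact ((continuous_const.matrix_mul this).matrix_mul continuous_const).add continuous_const
  have hwt1 : wt 1 = 1 := by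
    simp only [wt, slr_coe_one, mul_one, hEE]; abel
  have hdet : ContinuousAt (fun w => ((wt w).det)⁻¹) 1 := by
    refine (hwt.matrix_det.continuousAt).inv₀ ?_
    rw [hwt1, det_one]; exact one_ne_zero
  refine ⟨fun w => ((wt w).det)⁻¹ • ((1 - E) * (w : Matrix (Fin n) (Fin n) ℝ) * E * (wt w).adjugate), ?_, ?_⟩
  · have hc : ContinuousAt (fun w => ((wt w).det)⁻¹ •
        ((1 - E) * (w : Matrix (Fin n) (Fin n) ℝ) * E * (wt w).adjugate)) 1 := by
      refine hdet.smul (Continuous.continuousAt ?_)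
      exact ((continuous_const.matrix_mul (slr_continuous_coe n)).matrix_mul continuous_const).matrix_mul
        hwt.matrix_adjugate
    have := hc.tendsto
    convert this using 2
    rw [slr_coe_one, mul_one, hE1, zero_mul, smul_zero]
  · have hne : ∀ᶠ w in 𝓝 (1 : SLR n), (wt w).det ≠ 0 := by
      refine hwt.matrix_det.continuousAt.eventually_ne ?_
      rw [hwt1, det_one]; exact one_ne_zero
    filter_upwards [hne] with w hw i k hik
    set τ := ((wt w).det)⁻¹ • ((1 - E) * (w : Matrix (Fin n) (Fin n) ℝ) * E * (wt w).adjugate) with hτ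
    have h1 : τ * wt w = (1 - E) * (w : Matrix (Fin n) (Fin n) ℝ) * E := by
      rw [hτ, smul_mul_assoc, mul_assoc _ (wt w).adjugate, Matrix.adjugate_mul, mul_smul_comm,
        smul_smul, inv_mul_cancel₀ hw, one_smul, mul_one]
    have h2 : E * (w : Matrix (Fin n) (Fin n) ℝ) * E = wt w * E := by
      show _ = (E * (w : Matrix (Fin n) (Fin n) ℝ) * E + (1 - E)) * E
      rw [add_mul, hE1, add_zero, mul_assoc _ E E, hEE]
    have h1E : (1 - E) * (1 - E) = 1 - E := by
      rw [mul_sub, mul_one, hE1, sub_zero]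
    have h3 : lowB j ((uG j (-τ) * w : SLR n) : Matrix (Fin n) (Fin n) ℝ) = 0 := by
      rw [slr_coe_mul, uG_coe, hE2, hE2]
      have : (1 - E) * ((1 + (1 - E) * -τ * E) * (w : Matrix (Fin n) (Fin n) ℝ)) * E =
          (1 - E) * (w : Matrix (Fin n) (Fin n) ℝ) * E -
          ((1 - E) * (1 - E)) * τ * (E * (w : Matrix (Fin n) (Fin n) ℝ) * E) := by
        noncomm_ring
      rw [this, h2, h1E]
      have h4 : (1 - E) * τ * (wt w * E) = (1 - E) * (τ * wt w) * E := by noncomm_ring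
      rw [h4, h1]
      have h5 : (1 - E) * ((1 - E) * (w : Matrix (Fin n) (Fin n) ℝ) * E) * E =
        ((1 - E) * (1 - E)) * (w : Matrix (Fin n) (Fin n) ℝ) * (E * E) := by noncomm_ring
      rw [h5, h1E, hEE, sub_self]
    have h6 := congrFun (congrFun h3 i) k
    rw [lowB_apply, if_pos hik] at h6
    exact h6

/-- Neighborhoods of the identity are controlled by entries. -/
lemma nhds_one_entry {n : ℕ} {O : Set (SLR n)} (hO : O ∈ 𝓝 (1 : SLR n)) :
    ∃ δ > 0, ∀ r : SLR n, (∀ i k, |r i k - (1 : Matrix (Fin n) (Fin n) ℝ) i k| ≤ δ) → r ∈ O := by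
  rw [(slr_isClosedEmbedding n).isEmbedding.isInducing.nhds_eq_comap, mem_comap] at hO
  obtain ⟨T, hT, hTO⟩ := hO
  obtain ⟨δ, hδ, hb⟩ := (Metric.nhds_basis_closedBall (α := Fin n → Fin n → ℝ)).mem_iff.1 hT
  refine ⟨δ, hδ, fun r hr => hTO (hb ?_)⟩
  exact (dist_pi_le_iff (X := fun _ => Fin n → ℝ) hδ.le).2 fun i => (dist_pi_le_iff (X := fun _ => ℝ) hδ.le).2 fun k => by
    rw [Real.dist_eq]
    exact hr i k

lemma grid_lemma {n : ℕ} (j : ℕ) {O : Set (SLR n)} (hO : O ∈ 𝓝 (1 : SLR n)) :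
    ∃ K0 : ℕ, 1 ≤ K0 ∧ ∀ᶠ w in 𝓝 (1 : SLR n), ∀ K p : ℕ, K0 ≤ K → 1 ≤ p →
      ∃ z : Matrix (Fin n) (Fin n) ℤ,
        (aG n j p)⁻¹ * (uG j (Matrix.of fun i k => (z i k : ℝ) / ((p * K : ℕ) : ℝ)))⁻¹ * w * aG n j p ∈ O := by
  obtain ⟨τ, hτ, hτq⟩ := exists_decomp (n := n) j
  have hmul : Tendsto (fun q : SLR n × SLR n => q.1 * q.2) (𝓝 1 ×ˢ 𝓝 1) (𝓝 1) := by
    have := (continuous_mul (M := SLR n)).tendsto (1, 1)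
    rwa [nhds_prod_eq, mul_one] at this
  obtain ⟨O1, hO1, O2, hO2, hsub⟩ := mem_prod_iff.1 (hmul hO)
  have hu0 : Tendsto (uG j) (𝓝 (0 : Matrix (Fin n) (Fin n) ℝ)) (𝓝 1) := by
    have := (continuous_uG (n := n) j).tendsto 0
    rwa [uG_zero] at this
  obtain ⟨δ1, hδ1, hb1⟩ := (Metric.nhds_basis_closedBall (α := Fin n → Fin n → ℝ)).mem_iff.1
    (show (uG j : Matrix (Fin n) (Fin n) ℝ → SLR n) ⁻¹' O1 ∈ 𝓝 (0 : Fin n → Fin n → ℝ) from hu0 hO1)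
  obtain ⟨δ2, hδ2, hb2⟩ := nhds_one_entry hO2
  obtain ⟨K0, hK0⟩ := exists_nat_gt (1 / δ1)
  have hqlim : Tendsto (fun w => uG j (-τ w) * w) (𝓝 (1 : SLR n)) (𝓝 1) := by
    have h1 : Tendsto (fun w => uG j (-τ w)) (𝓝 (1 : SLR n)) (𝓝 1) := by
      refine hu0.comp ?_
      simpa using hτ.neg
    simpa using h1.mul tendsto_id
  have hqent : ∀ᶠ w in 𝓝 (1 : SLR n), ∀ i k,
      |(uG j (-τ w) * w : SLR n) i k - (1 : Matrix (Fin n) (Fin n) ℝ) i k| ≤ δ2 := by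
    rw [eventually_all]; intro i
    rw [eventually_all]; intro k
    have h1 : Tendsto (fun w => ((uG j (-τ w) * w : SLR n) : Matrix (Fin n) (Fin n) ℝ) i k)
        (𝓝 (1 : SLR n)) (𝓝 ((1 : Matrix (Fin n) (Fin n) ℝ) i k)) := by
      have h2 := ((slr_continuous_coe n).matrix_elem i k).tendsto 1
      rw [slr_coe_one] at h2
      exact h2.comp hqlim
    filter_upwards [(Metric.tendsto_nhds.1 h1) δ2 hδ2] with w hw
    rw [Real.dist_eq] at hw
    exact hw.le
  refine ⟨max K0 1, le_max_right _ _, ?_⟩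
  filter_upwards [hτq, hqent] with w hw1 hw2 K p hK hp
  have hKpos : (0 : ℝ) < K := by
    have : 1 ≤ K := (le_max_right _ _).trans hK
    exact_mod_cast this
  have hKδ : 1 / (K : ℝ) ≤ δ1 := by
    have h1 : (K0 : ℝ) ≤ K := by exact_mod_cast (le_max_left _ _).trans hK
    rw [div_le_iff₀ hKpos]
    rw [div_lt_iff₀ hδ1] at hK0
    nlinarith
  have hppos : (0 : ℝ) < p := by exact_mod_cast hp
  let z : Matrix (Fin n) (Fin n) ℤ := fun i k => round ((p : ℝ) * K * τ w i k)
  refine ⟨z, ?_⟩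
  set s : Matrix (Fin n) (Fin n) ℝ := Matrix.of fun i k => (z i k : ℝ) / ((p * K : ℕ) : ℝ) with hs
  have e1 : (aG n j p)⁻¹ * (uG j s)⁻¹ * w * aG n j p =
      uG j ((p : ℝ) • (τ w - s)) * ((aG n j p)⁻¹ * (uG j (-τ w) * w) * aG n j p) := by
    have h1 := aG_mul_uG hp ((p : ℝ) • (τ w - s)) (n := n) (j := j)
    rw [smul_smul, inv_mul_cancel₀ hppos.ne', one_smul] at h1
    have h2 : uG j (τ w - s) = (uG j s)⁻¹ * uG j (τ w) := by
      rw [uG_inv, uG_mul]; congr 1; abel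
    have h3 : uG j ((p : ℝ) • (τ w - s)) = (aG n j p)⁻¹ * ((uG j s)⁻¹ * uG j (τ w)) * aG n j p := by
      rw [← h2, mul_assoc, ← h1]; group
    rw [h3, ← uG_inv j (τ w)]
    group
  rw [e1]
  refine hsub (show (_, _) ∈ O1 ×ˢ O2 from ⟨?_, ?_⟩)
  · refine hb1 ?_
    refine (dist_pi_le_iff (X := fun _ => Fin n → ℝ) hδ1.le).2 fun i => (dist_pi_le_iff (X := fun _ => ℝ) hδ1.le).2 fun k => ?_
    rw [Real.dist_eq]
    show |(p : ℝ) * (τ w i k - (z i k : ℝ) / ((p * K : ℕ) : ℝ)) - 0| ≤ δ1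
    have h1 : (p : ℝ) * (τ w i k - (z i k : ℝ) / ((p * K : ℕ) : ℝ)) =
        ((p : ℝ) * K * τ w i k - z i k) / K := by
      push_cast; field_simp
    rw [sub_zero, h1, abs_div, abs_of_pos hKpos]
    have h2 := abs_sub_round ((p : ℝ) * K * τ w i k)
    refine le_trans ?_ hKδ
    gcongr
    exact h2.trans (by norm_num)
  · exact hb2 _ fun i k => (aG_conj_entry hp _ hw1 i k).trans (hw2 i k)

/-! ### Part 6: finite averages and the fine-grid equidistribution -/

/-- Average of a function over a finite set. -/
def avg {ι : Type*} (s : Finset ι) (F : ι → ℝ) : ℝ := (s.card : ℝ)⁻¹ * ∑ i ∈ s, F i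

section avg
variable {ι κ : Type*} {s : Finset ι} {t : Finset κ} {F G : ι → ℝ}

lemma avg_const (hs : s.Nonempty) (c : ℝ) : avg s (fun _ => c) = c := by
  have : (s.card : ℝ) ≠ 0 := by exact_mod_cast hs.card_pos.ne'
  simp [avg, this]

lemma avg_congr (h : ∀ i ∈ s, F i = G i) : avg s F = avg s G := by
  unfold avg; rw [Finset.sum_congr rfl h]

lemma avg_mono (h : ∀ i ∈ s, F i ≤ G i) : avg s F ≤ avg s G := by
  unfold avg; gcongr with i hi; exact h i hi

lemma avg_nonneg (h : ∀ i ∈ s, 0 ≤ F i) : 0 ≤ avg s F := by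
  unfold avg; exact mul_nonneg (by positivity) (Finset.sum_nonneg h)

lemma avg_sub : avg s (fun i => F i - G i) = avg s F - avg s G := by
  simp [avg, mul_sub]

lemma avg_const_mul (c : ℝ) : avg s (fun i => c * F i) = c * avg s F := by
  simp only [avg, ← Finset.mul_sum]; ring

lemma abs_avg_le : |avg s F| ≤ avg s (fun i => |F i|) := by
  unfold avg
  rw [abs_mul, abs_of_nonneg (by positivity)]
  gcongr
  exact Finset.abs_sum_le_sum_abs _ _

lemma avg_le_const (hs : s.Nonempty) {ε : ℝ} (h : ∀ i ∈ s, F i ≤ ε) : avg s F ≤ ε := by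
  rw [← avg_const hs ε]; exact avg_mono h

lemma abs_avg_sub_avg_le (hs : s.Nonempty) {ε : ℝ} (h : ∀ i ∈ s, |F i - G i| ≤ ε) :
    |avg s F - avg s G| ≤ ε := by
  rw [← avg_sub]
  exact abs_avg_le.trans (avg_le_const hs h)

lemma abs_avg_sub_const_le (hs : s.Nonempty) (c : ℝ) :
    |avg s F - c| ≤ avg s (fun i => |F i - c|) := by
  conv_lhs => rw [← avg_const hs c, ← avg_sub]
  exact abs_avg_le

lemma abs_avg_sub_const_le' (hs : s.Nonempty) {c ε : ℝ} (h : ∀ i ∈ s, |F i - c| ≤ ε) :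
    |avg s F - c| ≤ ε := (abs_avg_sub_const_le hs c).trans (avg_le_const hs h)

lemma avg_comm (F : ι → κ → ℝ) :
    avg s (fun i => avg t (F i)) = avg t (fun k => avg s (fun i => F i k)) := by
  simp only [avg, ← Finset.mul_sum]
  rw [Finset.sum_comm]; ring

end avg

lemma ergAvg_eq_avg {n : ℕ} (u : SLR n) (f : XSpace n → ℝ) (H : ℕ) (x : XSpace n) :
    ergAvg u f H x = avg (Finset.range H) (fun h => f (rightTranslate n (u ^ h) x)) := by
  simp [ergAvg, avg]

/-- Integer matrices with entries in `[0,m)`. -/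
def box (n m : ℕ) : Finset (Matrix (Fin n) (Fin n) ℤ) :=
  Fintype.piFinset fun _ => Fintype.piFinset fun _ => Finset.Ico (0 : ℤ) m

lemma mem_box {n m : ℕ} {B : Matrix (Fin n) (Fin n) ℤ} :
    B ∈ box n m ↔ ∀ i k, 0 ≤ B i k ∧ B i k < m := by
  refine Fintype.mem_piFinset.trans (forall_congr' fun i => ?_)
  refine Fintype.mem_piFinset.trans (forall_congr' fun k => ?_)
  exact Finset.mem_Ico

lemma card_box (n m : ℕ) : (box n m).card = m ^ (n * n) := by
  refine (Fintype.card_piFinset (α := fun _ : Fin n => Fin n → ℤ) _).trans ?_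
  simp [pow_mul]

lemma box_nonempty (n : ℕ) {m : ℕ} (hm : 1 ≤ m) : (box n m).Nonempty :=
  ⟨0, mem_box.2 fun i k => ⟨le_rfl, by
    show (0 : ℤ) < m
    exact_mod_cast hm⟩⟩

/-- The real matrix `z / m`. -/
def gr {n : ℕ} (m : ℕ) (z : Matrix (Fin n) (Fin n) ℤ) : Matrix (Fin n) (Fin n) ℝ :=
  Matrix.of fun i k => (z i k : ℝ) / (m : ℝ)

lemma gr_add {n : ℕ} (m : ℕ) (z w : Matrix (Fin n) (Fin n) ℤ) : gr m (z + w) = gr m z + gr m w := by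
  ext i k; simp [gr, add_div]

/-- `π(u(z/m)g)` depends only on `z` modulo `m`. -/
lemma mkX_gr_congr {n j m : ℕ} (hm : 1 ≤ m) {z w : Matrix (Fin n) (Fin n) ℤ}
    (h : ∀ i k, z i k % m = w i k % m) (g : SLR n) :
    mkX (uG j (gr m z) * g) = mkX (uG j (gr m w) * g) := by
  have hm0 : (m : ℝ) ≠ 0 := by positivity
  have hz : gr m z = (Matrix.of fun i k => z i k / m - w i k / m : Matrix (Fin n) (Fin n) ℤ).map
      (Int.cast : ℤ → ℝ) + gr m w := by
    ext i k
    have h1 := Int.emod_add_mul_ediv (z i k) m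
    have h2 := Int.emod_add_mul_ediv (w i k) m
    have h3 : z i k = w i k + m * (z i k / m - w i k / m) := by
      rw [mul_sub]; linarith [h i k]
    have h4 : (z i k : ℝ) = w i k + m * ((z i k / m - w i k / m : ℤ) : ℝ) := by
      exact_mod_cast h3
    simp only [gr, Matrix.add_apply, Matrix.map_apply, Matrix.of_apply]
    rw [h4]; field_simp; ring
  rw [hz, ← uG_mul, mul_assoc, mkX_gamma_mul _ _ (uG_int_mem j _)]

/-- The grid average. -/
def Psi {n : ℕ} (j m : ℕ) (f : XSpace n → ℝ) (g : SLR n) : ℝ :=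
  avg (box n m) fun B => f (mkX (uG j (gr m B) * g))

lemma Psi_shift {n j m : ℕ} (hm : 1 ≤ m) (f : XSpace n → ℝ) (z : Matrix (Fin n) (Fin n) ℤ)
    (g : SLR n) : Psi j m f (uG j (gr m z) * g) = Psi j m f g := by
  have hm0 : (0 : ℤ) < m := by exact_mod_cast hm
  unfold Psi avg
  congr 1
  refine Finset.sum_bij' (fun B _ => Matrix.of fun i k => (B i k + z i k) % m)
    (fun B _ => Matrix.of fun i k => (B i k - z i k) % m) ?_ ?_ ?_ ?_ ?_
  · intro B hB
    exact mem_box.2 fun i k => ⟨Int.emod_nonneg _ hm0.ne', Int.emod_lt_of_pos _ hm0⟩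
  · intro B hB
    exact mem_box.2 fun i k => ⟨Int.emod_nonneg _ hm0.ne', Int.emod_lt_of_pos _ hm0⟩
  · intro B hB
    ext i k
    have := mem_box.1 hB i k
    simp [Int.emod_eq_of_lt this.1 this.2]
  · intro B hB
    ext i k
    have := mem_box.1 hB i k
    simp [Int.emod_eq_of_lt this.1 this.2]
  · intro B hB
    congr 1
    rw [← mul_assoc, uG_mul, ← gr_add]
    refine mkX_gr_congr hm (fun i k => ?_) g
    simp

lemma Psi_mul {n j m : ℕ} (f : XSpace n → ℝ) (g h : SLR n) :
    Psi j m f (g * h) = Psi j m (fun x => f (rightTranslate n h x)) g := by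
  unfold Psi
  simp only [rightTranslate_mkX, mul_assoc]

lemma Psi_near {n j m : ℕ} (hm : 1 ≤ m) (f : XSpace n → ℝ) (g h : SLR n) {ε : ℝ}
    (H : ∀ x, |f (rightTranslate n h x) - f x| ≤ ε) : |Psi j m f (g * h) - Psi j m f g| ≤ ε := by
  rw [Psi_mul]
  exact abs_avg_sub_avg_le (box_nonempty n hm) fun i _ => H _

lemma transvection_eq_uG {n j : ℕ} {k l : Fin n} (hkl : k ≠ l) (hl : (l : ℕ) < j) (hk : j ≤ (k : ℕ)) :
    (SpecialLinearGroup.transvection hkl 1 : SLR n) = uG j (Matrix.single k l 1) := by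
  apply slr_ext
  rw [uG_coe]
  show Matrix.transvection k l 1 = _
  rw [Matrix.transvection]
  congr 1
  ext a b
  rw [lowB_apply]
  split_ifs with h
  · rfl
  · rw [Matrix.single_apply_of_ne]
    rintro ⟨rfl, rfl⟩
    exact h ⟨hl, hk⟩

lemma uG_pow {n j : ℕ} (s : Matrix (Fin n) (Fin n) ℝ) (h : ℕ) : (uG j s) ^ h = uG j ((h : ℝ) • s) := by
  induction h with
  | zero => simp [uG_zero]
  | succ h ih => rw [pow_succ, ih, uG_mul]; congr 1; push_cast; rw [add_smul, one_smul]

lemma smear {n j : ℕ} {μ : Measure (XSpace n)} (hμ : InvProb μ) (W : Set (SLR n))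
    (hW : IsCompact W) (hW1 : W ∈ 𝓝 (1 : SLR n)) : ∃ C : ℝ, 0 ≤ C ∧
      ∀ (F : XSpace n → ℝ), RUC F → (∀ x, 0 ≤ F x) → ∀ (m : ℕ), 1 ≤ m → ∀ (a : SLR n) (L : ℝ),
        (∀ w ∈ W, L ≤ Psi j m F (w * a)) → L ≤ C * ∫ x, F x ∂μ := by
  have := hμ.prob
  let Q : Set (Matrix (Fin n) (Fin n) ℝ) := Set.pi Set.univ fun _ => Set.pi Set.univ fun _ => Set.Icc (0 : ℝ) 1
  have hQ : IsCompact Q := isCompact_univ_pi fun _ => isCompact_univ_pi fun _ => isCompact_Icc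
  let V : Set (SLR n) := (fun q : Matrix (Fin n) (Fin n) ℝ × SLR n => uG j q.1 * q.2) '' (Q ×ˢ W)
  have hV : IsCompact V := by
    refine (hQ.prod hW).image ?_
    exact ((continuous_uG j).comp continuous_fst).mul continuous_snd
  obtain ⟨C, hC, hCle⟩ := key_ineq hμ V hV
  have hWpos : haarG n W ≠ 0 := (Measure.measure_pos_of_mem_nhds _ hW1).ne'
  have hWfin : haarG n W ≠ ⊤ := hW.measure_ne_top
  refine ⟨(C / haarG n W).toReal, ENNReal.toReal_nonneg, fun F hF hF0 m hm a L hL => ?_⟩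
  have hIF : 0 ≤ ∫ x, F x ∂μ := integral_nonneg hF0
  let ψ : XSpace n → ℝ≥0∞ := fun x => ENNReal.ofReal (F (rightTranslate n a x))
  have hψm : Measurable ψ := (hF.translate a).measurable.ennreal_ofReal
  have hψ : ∫⁻ x, ψ x ∂μ = ENNReal.ofReal (∫ x, F x ∂μ) := by
    rw [ofReal_integral_eq_lintegral_ofReal (hF.integrable μ) (Eventually.of_forall hF0)]
    exact (hμ.mp a).lintegral_comp hF.measurable.ennreal_ofReal
  have hWm : MeasurableSet W := hW.measurableSet
  -- each grid point
  have h1 : ∀ B ∈ box n m, ∫⁻ w in W, ψ (mkX (uG j (gr m B) * w)) ∂(haarG n) ≤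
      C * ENNReal.ofReal (∫ x, F x ∂μ) := by
    intro B hB
    rw [← hψ]
    refine le_trans ?_ (hCle ψ hψm)
    rw [← lintegral_indicator hWm, ← lintegral_indicator hV.measurableSet]
    rw [← lintegral_mul_left_eq_self (μ := haarG n) (V.indicator fun g => ψ (mkX g)) (uG j (gr m B))]
    refine lintegral_mono fun w => ?_
    by_cases hw : w ∈ W
    · have : uG j (gr m B) * w ∈ V := by
        refine ⟨(gr m B, w), ⟨?_, hw⟩, rfl⟩
        intro i _ k _
        have hb := mem_box.1 hB i k
        have hm0 : (0 : ℝ) < m := by exact_mod_cast hm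
        have hb1 : (0 : ℝ) ≤ B i k := by exact_mod_cast hb.1
        have hb2 : (B i k : ℝ) ≤ m := by exact_mod_cast hb.2.le
        exact ⟨div_nonneg hb1 hm0.le, (div_le_one hm0).2 hb2⟩
      rw [Set.indicator_of_mem hw, Set.indicator_of_mem this]
    · rw [Set.indicator_of_notMem hw]; exact zero_le
  have hmeas : ∀ B, Measurable fun w : SLR n => ψ (mkX (uG j (gr m B) * w)) := fun B =>
    hψm.comp (continuous_mkX.comp (continuous_const.mul continuous_id)).measurable
  have hcard : ((box n m).card : ℝ) ≠ 0 := by exact_mod_cast (box_nonempty n hm).card_pos.ne'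
  have h2 : ∫⁻ w in W, ENNReal.ofReal (Psi j m F (w * a)) ∂(haarG n) ≤
      C * ENNReal.ofReal (∫ x, F x ∂μ) := by
    have e : ∀ w : SLR n, ENNReal.ofReal (Psi j m F (w * a)) =
        ENNReal.ofReal ((box n m).card : ℝ)⁻¹ * ∑ B ∈ box n m, ψ (mkX (uG j (gr m B) * w)) := by
      intro w
      unfold Psi avg
      rw [ENNReal.ofReal_mul (by positivity), ENNReal.ofReal_sum_of_nonneg fun B _ => hF0 _]
      simp only [ψ, rightTranslate_mkX, mul_assoc]
    simp only [e]
    rw [lintegral_const_mul _ (Finset.measurable_fun_sum _ fun B _ => hmeas B),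
      lintegral_finsetSum _ fun B _ => hmeas B]
    calc _ ≤ ENNReal.ofReal ((box n m).card : ℝ)⁻¹ * ∑ B ∈ box n m, C * ENNReal.ofReal (∫ x, F x ∂μ) := by
          gcongr with B hB; exact h1 B hB
      _ = C * ENNReal.ofReal (∫ x, F x ∂μ) := by
          rw [Finset.sum_const, nsmul_eq_mul, ← mul_assoc, ← ENNReal.ofReal_natCast,
            ← ENNReal.ofReal_mul (by positivity), inv_mul_cancel₀ hcard, ENNReal.ofReal_one, one_mul]
  have h3 : ENNReal.ofReal L * haarG n W ≤ C * ENNReal.ofReal (∫ x, F x ∂μ) := by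
    refine le_trans ?_ h2
    rw [← setLIntegral_const]
    exact setLIntegral_mono' hWm fun w hw => ENNReal.ofReal_le_ofReal (hL w hw)
  have h4 : ENNReal.ofReal L ≤ ENNReal.ofReal ((C / haarG n W).toReal * ∫ x, F x ∂μ) := by
    rw [ENNReal.ofReal_mul ENNReal.toReal_nonneg, ENNReal.ofReal_toReal (ENNReal.div_ne_top hC hWpos)]
    rw [← ENNReal.mul_div_right_comm, ENNReal.le_div_iff_mul_le (Or.inl hWpos) (Or.inl hWfin)]
    exact h3
  exact (ENNReal.ofReal_le_ofReal_iff (by positivity)).1 h4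

/-! ### Part 7: equidistribution of grid averages -/

theorem fine_grid {n j : ℕ} {μ : Measure (XSpace n)} (hμ : InvProb μ) {f : XSpace n → ℝ} (hf : RUC f)
    {k l : Fin n} (hl : (l : ℕ) < j) (hk : j ≤ (k : ℕ)) {ε : ℝ} (hε : 0 < ε) :
    ∃ K0 p0 : ℕ, 1 ≤ K0 ∧ 1 ≤ p0 ∧ ∀ K p : ℕ, K0 ≤ K → p0 ≤ p →
      |Psi j (p * K) f (aG n j p) - ∫ x, f x ∂μ| ≤ ε := by
  have := hμ.prob
  have hkl : k ≠ l := fun h => by subst h; omega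
  set c := ∫ x, f x ∂μ with hc
  obtain ⟨K0, hK01, hgrid⟩ := grid_lemma (n := n) j (hf.uc (ε / 2) (half_pos hε))
  have hmul : Tendsto (fun q : SLR n × SLR n => q.1 * q.2) (𝓝 1 ×ˢ 𝓝 1) (𝓝 1) := by
    have := (continuous_mul (M := SLR n)).tendsto (1, 1)
    rwa [nhds_prod_eq, mul_one] at this
  obtain ⟨W1, hW1, W0, hW0, hsub⟩ := mem_prod_iff.1 (hmul hgrid)
  obtain ⟨W, hW, hWW1, hWc⟩ := local_compact_nhds hW1
  obtain ⟨C, hC0, hC⟩ := smear (j := j) hμ W hWc hW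
  have hme := mean_ergodic hμ hf hkl
  have hme2 : Tendsto (fun H : ℕ => C * ∫ x, |ergAvg (SpecialLinearGroup.transvection hkl 1) f H x
      - c| ∂μ) atTop (𝓝 0) := by simpa using hme.const_mul C
  obtain ⟨H, hH, hH1⟩ := ((hme2.eventually_lt_const (half_pos hε)).and (eventually_ge_atTop 1)).exists
  set u : SLR n := SpecialLinearGroup.transvection hkl 1 with hu
  have huE : u = uG j (Matrix.single k l 1) := transvection_eq_uG hkl hl hk
  have hsmall : ∀ᶠ p : ℕ in atTop, ∀ h ∈ Finset.range H,
      uG j ((p : ℝ)⁻¹ • ((h : ℝ) • (Matrix.single k l 1 : Matrix (Fin n) (Fin n) ℝ))) ∈ W0 := by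
    rw [Finset.eventually_all]
    intro h _
    have h1 : Tendsto (fun p : ℕ => (p : ℝ)⁻¹ • ((h : ℝ) • (Matrix.single k l 1 : Matrix (Fin n) (Fin n) ℝ)))
        atTop (𝓝 0) := by
      have := (tendsto_inv_atTop_nhds_zero_nat (𝕜 := ℝ)).smul_const
        ((h : ℝ) • (Matrix.single k l 1 : Matrix (Fin n) (Fin n) ℝ))
      rwa [zero_smul] at this
    have h2 := ((continuous_uG (n := n) j).tendsto 0).comp h1
    rw [uG_zero] at h2
    exact h2 hW0
  obtain ⟨p0, hp0⟩ := eventually_atTop.1 hsmall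
  refine ⟨K0, max p0 1, hK01, le_max_right _ _, fun K p hK hp => ?_⟩
  have hp1 : 1 ≤ p := (le_max_right _ _).trans hp
  have hpp0 : p0 ≤ p := (le_max_left _ _).trans hp
  have hm : 1 ≤ p * K := Nat.mul_pos hp1 (hK01.trans hK)
  have hrH : (Finset.range H).Nonempty := Finset.nonempty_range_iff.2 (by omega)
  set lam := Psi j (p * K) f (aG n j p) with hlam
  have hA : ∀ w h : SLR n, w ∈ W → h ∈ W0 → |Psi j (p * K) f (w * h * aG n j p) - lam| ≤ ε / 2 := by
    intro w h hw hh
    have hwh : (w, h) ∈ W1 ×ˢ W0 := ⟨hWW1 hw, hh⟩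
    obtain ⟨z, hz⟩ := hsub hwh K p hK hp1
    set o := (aG n j p)⁻¹ * (uG j (Matrix.of fun i k => (z i k : ℝ) / ((p * K : ℕ) : ℝ)))⁻¹ * (w * h) * aG n j p with ho
    have e : w * h * aG n j p = uG j (gr (p * K) z) * (aG n j p * o) := by
      rw [ho]
      show _ = uG j (gr (p * K) z) * (aG n j p * ((aG n j p)⁻¹ * (uG j (gr (p * K) z))⁻¹ * (w * h) * aG n j p))
      group
    rw [e, Psi_shift hm]
    exact Psi_near hm f _ _ hz
  have hB : ∀ w ∈ W, |lam - c| - ε / 2 ≤ Psi j (p * K) (fun x => |ergAvg u f H x - c|) (w * aG n j p) := by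
    intro w hw
    have h1 : |Psi j (p * K) (ergAvg u f H) (w * aG n j p) - lam| ≤ ε / 2 := by
      have e : Psi j (p * K) (ergAvg u f H) (w * aG n j p) =
          avg (Finset.range H) fun h => Psi j (p * K) f (w * uG j ((p : ℝ)⁻¹ • ((h : ℝ) • (Matrix.single k l 1 : Matrix (Fin n) (Fin n) ℝ))) * aG n j p) := by
        have : ∀ h : ℕ, Psi j (p * K) f (w * uG j ((p : ℝ)⁻¹ • ((h : ℝ) • (Matrix.single k l 1 : Matrix (Fin n) (Fin n) ℝ))) * aG n j p)
            = Psi j (p * K) (fun x => f (rightTranslate n (u ^ h) x)) (w * aG n j p) := by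
          intro h
          rw [← Psi_mul, mul_assoc, mul_assoc, huE, uG_pow, aG_mul_uG hp1]
        simp only [this]
        unfold Psi
        simp only [ergAvg_eq_avg]
        rw [avg_comm]
      rw [e]
      exact abs_avg_sub_const_le' hrH fun h hh => hA _ _ hw (hp0 p hpp0 h hh)
    have h2 : |Psi j (p * K) (ergAvg u f H) (w * aG n j p) - c| ≤
        Psi j (p * K) (fun x => |ergAvg u f H x - c|) (w * aG n j p) :=
      abs_avg_sub_const_le (box_nonempty n hm) c
    have h3 := abs_sub_le lam (Psi j (p * K) (ergAvg u f H) (w * aG n j p)) c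
    rw [abs_sub_comm lam (Psi j (p * K) (ergAvg u f H) (w * aG n j p))] at h3
    linarith
  have hD := hC (fun x => |ergAvg u f H x - c|) (((hf.ergAvg u H).sub (RUC.const c)).abs)
    (fun x => abs_nonneg _) (p * K) hm (aG n j p) _ hB
  linarith

lemma sum_grid_le {n p K L : ℕ} (hLK : L ≤ K) (G : Matrix (Fin n) (Fin n) ℤ → ℝ)
    (hG : ∀ B, 0 ≤ G B) :
    ∑ B ∈ box n p, ∑ b ∈ box n L, G ((K : ℤ) • B + b) ≤ ∑ B ∈ box n (p * K), G B := by
  rw [← Finset.sum_product']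
  have hinj : Set.InjOn (fun q : Matrix (Fin n) (Fin n) ℤ × Matrix (Fin n) (Fin n) ℤ => (K : ℤ) • q.1 + q.2)
      (box n p ×ˢ box n L : Finset _) := by
    rintro ⟨B, b⟩ h ⟨B', b'⟩ h' heq
    rw [Finset.mem_coe, Finset.mem_product] at h h'
    have hb := mem_box.1 h.2
    have hb' := mem_box.1 h'.2
    have key : ∀ i k, B i k = B' i k ∧ b i k = b' i k := by
      intro i k
      have e := congrFun (congrFun heq i) k
      have e : (K : ℤ) * B i k + b i k = K * B' i k + b' i k := e
      have h1 := hb i k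
      have h2 := hb' i k
      simp only at h1 h2
      have hLK' : (L : ℤ) ≤ K := by exact_mod_cast hLK
      have hB : B i k = B' i k := by
        have hK : (0 : ℤ) < K := by linarith
        by_contra hne
        rcases lt_or_gt_of_ne hne with hlt | hlt
        · nlinarith
        · nlinarith
      refine ⟨hB, ?_⟩
      rw [hB] at e; linarith
    have h1 : B = B' := by ext i k; exact (key i k).1
    have h2 : b = b' := by ext i k; exact (key i k).2
    rw [h1, h2]
  rw [← Finset.sum_image (f := G) (g := fun q : Matrix (Fin n) (Fin n) ℤ × Matrix (Fin n) (Fin n) ℤ => (K : ℤ) • q.1 + q.2) hinj]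
  refine Finset.sum_le_sum_of_subset_of_nonneg ?_ fun B _ _ => hG B
  intro B hB
  obtain ⟨⟨B', b⟩, hq, rfl⟩ := Finset.mem_image.1 hB
  rw [Finset.mem_product] at hq
  refine mem_box.2 fun i k => ?_
  have h1 := mem_box.1 hq.1 i k
  have h2 := mem_box.1 hq.2 i k
  simp only at h1 h2
  have hLK' : (L : ℤ) ≤ K := by exact_mod_cast hLK
  show 0 ≤ (K : ℤ) * B' i k + b i k ∧ (K : ℤ) * B' i k + b i k < ((p * K : ℕ) : ℤ)
  push_cast
  constructor
  · nlinarith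
  · nlinarith

lemma gr_fine {n p K : ℕ} (hp : 1 ≤ p) (hK : 1 ≤ K) (B b : Matrix (Fin n) (Fin n) ℤ) :
    gr p B + (p : ℝ)⁻¹ • gr K b = gr (p * K) ((K : ℤ) • B + b) := by
  have hp0 : (p : ℝ) ≠ 0 := by positivity
  have hK0 : (K : ℝ) ≠ 0 := by positivity
  ext i k
  simp only [gr, Matrix.add_apply, Matrix.smul_apply, Matrix.of_apply, smul_eq_mul]
  push_cast
  field_simp

theorem prime_grid {n j : ℕ} {μ : Measure (XSpace n)} (hμ : InvProb μ) {f : XSpace n → ℝ} (hf : RUC f)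
    {k l : Fin n} (hl : (l : ℕ) < j) (hk : j ≤ (k : ℕ)) :
    Tendsto (fun p : ℕ => Psi j p f (aG n j p)) atTop (𝓝 (∫ x, f x ∂μ)) := by
  have := hμ.prob
  have hkl : k ≠ l := fun h => by subst h; omega
  set c := ∫ x, f x ∂μ with hc
  rw [Metric.tendsto_atTop]
  intro ε hε
  -- choose the scale
  obtain ⟨δ, hδ, hO⟩ := nhds_one_entry (hf.uc (ε / 4) (by positivity))
  obtain ⟨k0, hk0⟩ := exists_nat_gt (1 / δ)
  have hk0pos : (0 : ℝ) < k0 := lt_trans (by positivity) hk0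
  have hk01 : 1 ≤ k0 := by exact_mod_cast hk0pos
  set M : ℝ := (k0 : ℝ) ^ (n * n) with hM
  have hMpos : 0 < M := by positivity
  have hme := (mean_ergodic hμ hf hkl).const_mul M
  rw [mul_zero] at hme
  obtain ⟨H, hH, hH1⟩ := ((hme.eventually_lt_const (show 0 < ε / 4 by positivity)).and
    (eventually_ge_atTop 1)).exists
  set u : SLR n := SpecialLinearGroup.transvection hkl 1 with hu
  have huE : u = uG j (Matrix.single k l 1) := transvection_eq_uG hkl hl hk
  let F : XSpace n → ℝ := fun x => |ergAvg u f H x - c|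
  have hF : RUC F := ((hf.ergAvg u H).sub (RUC.const c)).abs
  have hF0 : ∀ x, 0 ≤ F x := fun x => abs_nonneg _
  obtain ⟨L, p0, hL, hp0, hfine⟩ := fine_grid hμ hF hl hk (show 0 < ε / (4 * M) by positivity)
  refine ⟨p0, fun p hp => ?_⟩
  have hp1 : 1 ≤ p := hp0.trans hp
  set K := k0 * L with hKdef
  have hLK : L ≤ K := Nat.le_mul_of_pos_left _ hk01
  have hK1 : 1 ≤ K := hL.trans hLK
  have hKp := hfine K p hLK hp
  have hrH : (Finset.range H).Nonempty := Finset.nonempty_range_iff.2 (by omega)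
  have e1 : Psi j p f (aG n j p) = Psi j p (ergAvg u f H) (aG n j p) := by
    have h1 : Psi j p (ergAvg u f H) (aG n j p) = avg (Finset.range H) fun _ => Psi j p f (aG n j p) := by
      have : ∀ h : ℕ, Psi j p (fun x => f (rightTranslate n (u ^ h) x)) (aG n j p) = Psi j p f (aG n j p) := by
        intro h
        rw [← Psi_mul, huE, uG_pow, aG_mul_uG hp1]
        have : (p : ℝ)⁻¹ • (h : ℝ) • (Matrix.single k l 1 : Matrix (Fin n) (Fin n) ℝ) =
            gr p (Matrix.single k l (h : ℤ)) := by
          ext a b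
          simp only [gr, Matrix.smul_apply, Matrix.of_apply, smul_eq_mul, Matrix.single_apply]
          split_ifs
          · push_cast; field_simp
          · simp
        rw [this, Psi_shift hp1]
      have h2 : Psi j p (ergAvg u f H) (aG n j p) = avg (Finset.range H) fun h =>
          Psi j p (fun x => f (rightTranslate n (u ^ h) x)) (aG n j p) := by
        unfold Psi
        simp only [ergAvg_eq_avg]
        rw [avg_comm]
      rw [h2]
      exact avg_congr fun h _ => this h
    rw [h1, avg_const hrH]
  have hmod : ∀ b ∈ box n L, ∀ x, |ergAvg u f H (rightTranslate n (uG j (gr K b)) x) - ergAvg u f H x| ≤ ε / 4 := by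
    intro b hb x
    have hin : ∀ x, |f (rightTranslate n (uG j (gr K b)) x) - f x| ≤ ε / 4 := by
      refine hO _ fun i k' => ?_
      rw [uG_coe, Matrix.add_apply, add_sub_cancel_left, lowB_apply]
      split_ifs
      · have hb1 := mem_box.1 hb i k'
        have hL0 : (0 : ℝ) < L := by exact_mod_cast hL
        have h0 : (0 : ℝ) ≤ b i k' := by exact_mod_cast hb1.1
        have h2 : (b i k' : ℝ) ≤ L := by exact_mod_cast hb1.2.le
        have hkd : 1 ≤ δ * k0 := by
          rw [div_lt_iff₀ hδ] at hk0; linarith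
        simp only [gr, Matrix.of_apply]
        rw [abs_of_nonneg (by positivity), hKdef]
        push_cast
        rw [div_le_iff₀ (by positivity)]
        nlinarith
      · rw [abs_zero]; exact hδ.le
    rw [ergAvg_eq_avg, ergAvg_eq_avg]
    refine abs_avg_sub_avg_le hrH fun h _ => ?_
    rw [rightTranslate_mul, huE, uG_pow, uG_comm, ← rightTranslate_mul]
    exact hin _
  have hFmod : ∀ b ∈ box n L, ∀ x, F x ≤ ε / 4 + F (rightTranslate n (uG j (gr K b)) x) := by
    intro b hb x
    have h1 := hmod b hb x
    have h2 := abs_sub_le (ergAvg u f H x) (ergAvg u f H (rightTranslate n (uG j (gr K b)) x)) c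
    rw [abs_sub_comm (ergAvg u f H x) (ergAvg u f H (rightTranslate n (uG j (gr K b)) x))] at h2
    show |ergAvg u f H x - c| ≤ _ + |_ - c|
    linarith
  have e2 : ∀ B b, rightTranslate n (uG j (gr K b)) (mkX (uG j (gr p B) * aG n j p)) =
      mkX (uG j (gr (p * K) ((K : ℤ) • B + b)) * aG n j p) := by
    intro B b
    rw [rightTranslate_mkX, mul_assoc, aG_mul_uG hp1, ← mul_assoc, uG_mul, gr_fine hp1 hK1]
  set G : Matrix (Fin n) (Fin n) ℤ → ℝ := fun B => F (mkX (uG j (gr (p * K) B) * aG n j p)) with hG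
  have h4 : Psi j p F (aG n j p) ≤ ε / 4 + avg (box n p) fun B => avg (box n L) fun b => G ((K : ℤ) • B + b) := by
    have : ∀ B ∈ box n p, F (mkX (uG j (gr p B) * aG n j p)) ≤
        ε / 4 + avg (box n L) fun b => G ((K : ℤ) • B + b) := by
      intro B _
      rw [← sub_le_iff_le_add']
      conv_lhs => rw [← avg_const (box_nonempty n hL) (_ - _)]
      refine avg_mono fun b hb => ?_
      have := hFmod b hb (mkX (uG j (gr p B) * aG n j p))
      rw [e2] at this
      linarith
    have h5 := avg_mono this
    refine h5.trans (le_of_eq ?_)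
    have hne : ((box n p).card : ℝ) ≠ 0 := by exact_mod_cast (box_nonempty n hp1).card_pos.ne'
    unfold avg
    rw [Finset.sum_add_distrib, mul_add, Finset.sum_const, nsmul_eq_mul, ← mul_assoc,
      inv_mul_cancel₀ hne, one_mul]
  have h6 : (avg (box n p) fun B => avg (box n L) fun b => G ((K : ℤ) • B + b)) ≤
      M * Psi j (p * K) F (aG n j p) := by
    have h7 := sum_grid_le (p := p) hLK G fun B => hF0 _
    have hLr : (0 : ℝ) < L := by exact_mod_cast hL
    have hpr : (0 : ℝ) < p := by exact_mod_cast hp1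
    unfold Psi avg
    simp only [card_box]
    rw [← Finset.mul_sum, ← mul_assoc, ← mul_assoc]
    have e3 : M * (((p * K) ^ (n * n) : ℕ) : ℝ)⁻¹ = (((p ^ (n * n) : ℕ) : ℝ))⁻¹ * (((L ^ (n * n) : ℕ) : ℝ))⁻¹ := by
      rw [hM, hKdef]; push_cast
      rw [mul_pow, mul_pow]
      field_simp
    rw [e3]
    exact mul_le_mul_of_nonneg_left h7 (by positivity)
  have h8 : |Psi j p f (aG n j p) - c| ≤ Psi j p F (aG n j p) := by
    rw [e1]; exact abs_avg_sub_const_le (box_nonempty n hp1) c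
  have h9 := (abs_le.1 hKp).2
  have h10 : M * Psi j (p * K) F (aG n j p) ≤ M * ∫ x, F x ∂μ + ε / 4 := by
    have : Psi j (p * K) F (aG n j p) ≤ ∫ x, F x ∂μ + ε / (4 * M) := by linarith
    calc _ ≤ M * (∫ x, F x ∂μ + ε / (4 * M)) := by gcongr
      _ = _ := by field_simp
  rw [Real.dist_eq]
  have hH' : M * ∫ x, F x ∂μ < ε / 4 := hH
  linarith

/-! ### Part 8: integer lattices attached to congruence subgroups -/

/-- `M` is an oriented basis (as rows) of the lattice of integer vectors reducing into `H`. -/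
def IsLat {n : ℕ} (N j : ℕ) (H : AddSubgroup (Fin n → ZMod N)) (M : Matrix (Fin n) (Fin n) ℤ) : Prop :=
  M.det = (N : ℤ) ^ j ∧ ∀ x : Fin n → ℤ, (fun i => (x i : ZMod N)) ∈ H ↔ ∃ v, v ᵥ* M = x

lemma exists_isLat {N n j : ℕ} (hN : 1 ≤ N) (hn : 1 ≤ n) {H : AddSubgroup (Fin n → ZMod N)}
    (hH : H ∈ congruenceSet N n j) : ∃ M, IsLat N j H M := by
  have : NeZero N := ⟨by omega⟩
  obtain ⟨A, hA, hHA⟩ := hH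
  let red : (Fin n → ℤ) →+ (Fin n → ZMod N) :=
    { toFun := fun x i => (x i : ZMod N)
      map_zero' := by ext; simp
      map_add' := by intros; ext; simp }
  have hred : Function.Surjective red := by
    intro y
    exact ⟨fun i => (ZMod.intCast_surjective (y i)).choose, by
      ext i; exact (ZMod.intCast_surjective (y i)).choose_spec⟩
  let φ : (Fin n → ℤ) →+ (Fin j → ZMod N) := A.mulVecLin.toAddMonoidHom.comp red
  have hφ : Function.Surjective φ := hA.comp hred
  have hker : ∀ x : Fin n → ℤ, (fun i => (x i : ZMod N)) ∈ H ↔ x ∈ φ.ker := by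
    intro x
    rw [AddMonoidHom.mem_ker, ← SetLike.mem_coe, hHA]
    rfl
  have hidx : φ.ker.index = N ^ j := by
    rw [AddSubgroup.index_ker, AddMonoidHom.range_eq_top.2 hφ]
    simp
  have : φ.ker.FiniteIndex := ⟨by rw [hidx]; exact pow_ne_zero _ (NeZero.ne N)⟩
  have hfr : Module.finrank ℤ φ.ker = n := by
    rw [AddSubgroup.finrank_eq_of_finiteIndex]; simp
  have : Module.Free ℤ φ.ker := inferInstanceAs (Module.Free ℤ (AddSubgroup.toIntSubmodule φ.ker))
  have : Module.Finite ℤ φ.ker := inferInstanceAs (Module.Finite ℤ (AddSubgroup.toIntSubmodule φ.ker))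
  let b : Module.Basis (Fin n) ℤ φ.ker := Module.finBasisOfFinrankEq ℤ φ.ker hfr
  let M0 : Matrix (Fin n) (Fin n) ℤ := Matrix.of fun i => (b i : Fin n → ℤ)
  have hdet0 : M0.det.natAbs = N ^ j := by
    rw [← hidx, AddSubgroup.index_eq_natAbs_det (Pi.basisFun ℤ (Fin n)) _ b, Module.Basis.det_apply]
    congr 1
    rw [← Matrix.det_transpose]
    rfl
  have hrow0 : ∀ x : Fin n → ℤ, x ∈ φ.ker ↔ ∃ v, v ᵥ* M0 = x := by
    intro x
    have hv : ∀ v : Fin n → ℤ, v ᵥ* M0 = ((∑ i, v i • b i : φ.ker) : Fin n → ℤ) := by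
      intro v
      rw [Matrix.vecMul_eq_sum]
      rw [AddSubgroup.val_finsetSum]
      rfl
    constructor
    · intro hx
      refine ⟨b.repr ⟨x, hx⟩, ?_⟩
      rw [hv, b.sum_repr]
    · rintro ⟨v, rfl⟩
      rw [hv]; exact SetLike.coe_mem _
  rcases Int.natAbs_eq M0.det with h | h
  · refine ⟨M0, ?_, fun x => (hker x).trans (hrow0 x)⟩
    rw [h, hdet0]; push_cast; rfl
  · let i0 : Fin n := ⟨0, hn⟩
    let d : Fin n → ℤ := fun i => if i = i0 then -1 else 1
    have hdd : Matrix.diagonal d * Matrix.diagonal d = 1 := by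
      rw [Matrix.diagonal_mul_diagonal, ← Matrix.diagonal_one]
      congr 1; ext i; simp only [d]; split_ifs <;> norm_num
    have hddet : (Matrix.diagonal d).det = -1 := by
      rw [Matrix.det_diagonal]
      simp only [d]
      rw [Finset.prod_ite_eq']; simp
    refine ⟨Matrix.diagonal d * M0, ?_, fun x => (hker x).trans ((hrow0 x).trans ?_)⟩
    · rw [Matrix.det_mul, hddet, h, hdet0]; push_cast; ring
    · constructor
      · rintro ⟨v, rfl⟩
        refine ⟨v ᵥ* Matrix.diagonal d, ?_⟩
        rw [Matrix.vecMul_vecMul, ← mul_assoc, hdd, one_mul]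
      · rintro ⟨v, rfl⟩
        exact ⟨v ᵥ* Matrix.diagonal d, by rw [Matrix.vecMul_vecMul]⟩

/-- The normalized real matrix of an integer matrix. -/
def gM {n : ℕ} (M : Matrix (Fin n) (Fin n) ℤ) : SLR n := nrm (M.map (Int.cast : ℤ → ℝ))

lemma det_map_cast {n : ℕ} (M : Matrix (Fin n) (Fin n) ℤ) :
    (M.map (Int.cast : ℤ → ℝ)).det = (M.det : ℝ) :=
  ((Int.castRingHom ℝ).map_det M).symm

lemma gM_coe {n : ℕ} {M : Matrix (Fin n) (Fin n) ℤ} (hM : 0 < M.det) :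
    (gM M : Matrix (Fin n) (Fin n) ℝ) = ((M.det : ℝ) ^ (-(1 / (n : ℝ)))) • M.map (Int.cast : ℤ → ℝ) := by
  rw [gM, nrm_coe, det_map_cast]
  rw [det_map_cast]; exact_mod_cast hM

lemma gM_mul {n : ℕ} {M Q : Matrix (Fin n) (Fin n) ℤ} (hM : 0 < M.det) (hQ : 0 < Q.det) :
    gM (M * Q) = gM M * gM Q := by
  unfold gM
  rw [← nrm_mul (by rw [det_map_cast]; exact_mod_cast hM) (by rw [det_map_cast]; exact_mod_cast hQ)]
  congr 1
  exact Matrix.map_mul (f := Int.castRingHom ℝ)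

lemma gM_mem_Gamma {n : ℕ} {Q : Matrix (Fin n) (Fin n) ℤ} (hQ : Q.det = 1) : gM Q ∈ Gamma n := by
  refine ⟨⟨Q, hQ⟩, ?_⟩
  apply slr_ext
  rw [gM_coe (by rw [hQ]; exact one_pos), hQ]
  simp
  rfl

lemma exists_gM_of_mem_Gamma {n : ℕ} {γ : SLR n} (h : γ ∈ Gamma n) :
    ∃ Q : Matrix (Fin n) (Fin n) ℤ, Q.det = 1 ∧ gM Q = γ := by
  obtain ⟨Q, rfl⟩ := h
  refine ⟨Q.1, Q.2, ?_⟩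
  apply slr_ext
  rw [gM_coe (by rw [Q.2]; exact one_pos), Q.2]
  simp

/-- The class of `gM M * g` depends only on the row lattice. -/
lemma mkX_gM_congr {n : ℕ} {M M' : Matrix (Fin n) (Fin n) ℤ} (hM : 0 < M.det) (hdet : M'.det = M.det)
    (h : ∀ x : Fin n → ℤ, (∃ v, v ᵥ* M' = x) → ∃ v, v ᵥ* M = x) (g : SLR n) :
    mkX (gM M' * g) = mkX (gM M * g) := by
  have h1 : ∀ i, ∃ v, v ᵥ* M = M' i := fun i => h (M' i) ⟨Pi.single i 1, by
    rw [Matrix.single_one_vecMul]; rfl⟩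
  choose Q hQ using h1
  have hQM : M' = (Matrix.of Q) * M := by
    ext i k
    rw [← hQ i]
    rfl
  have hQdet : (Matrix.of Q).det = 1 := by
    have : (Matrix.of Q).det * M.det = 1 * M.det := by
      rw [← Matrix.det_mul, ← hQM, hdet, one_mul]
    exact mul_right_cancel₀ hM.ne' this
  rw [hQM, gM_mul (by rw [hQdet]; exact one_pos) hM, mul_assoc, mkX_gamma_mul _ _ (gM_mem_Gamma hQdet)]

/-- A chosen basis. -/
def hM {n : ℕ} (N j : ℕ) (H : AddSubgroup (Fin n → ZMod N)) : Matrix (Fin n) (Fin n) ℤ :=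
  open Classical in if h : ∃ M, IsLat N j H M then h.choose else 1

lemma hM_spec {N n j : ℕ} (hN : 1 ≤ N) (hn : 1 ≤ n) {H : AddSubgroup (Fin n → ZMod N)}
    (hH : H ∈ congruenceSet N n j) : IsLat N j H (hM N j H) := by
  have h := exists_isLat hN hn hH
  unfold hM; rw [dif_pos h]; exact h.choose_spec

lemma IsLat.det_pos {N n j : ℕ} (hN : 1 ≤ N) {H : AddSubgroup (Fin n → ZMod N)}
    {M : Matrix (Fin n) (Fin n) ℤ} (h : IsLat N j H M) : 0 < M.det := by
  rw [h.1]; positivity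

lemma IsLat.mkX_eq {N n j : ℕ} (hN : 1 ≤ N) (hn : 1 ≤ n) {H : AddSubgroup (Fin n → ZMod N)}
    (hH : H ∈ congruenceSet N n j) {M : Matrix (Fin n) (Fin n) ℤ} (h : IsLat N j H M) (g : SLR n) :
    mkX (gM (hM N j H) * g) = mkX (gM M * g) := by
  have h' := hM_spec hN hn hH
  exact mkX_gM_congr (h.det_pos hN) (by rw [h.1, h'.1]) (fun x hx => (h.2 x).1 ((h'.2 x).2 hx)) g

/-- The finite set of congruence subgroups. -/
def csF (N n j : ℕ) : Finset (AddSubgroup (Fin n → ZMod N)) :=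
  open Classical in if h : (congruenceSet N n j).Finite then h.toFinset else ∅

lemma finite_cs {N n j : ℕ} (hN : 1 ≤ N) : (congruenceSet N n j).Finite := by
  have : NeZero N := ⟨by omega⟩
  have : Finite (AddSubgroup (Fin n → ZMod N)) :=
    Finite.of_injective (fun H => (H : Set (Fin n → ZMod N))) SetLike.coe_injective
  exact Set.toFinite _

lemma mem_csF {N n j : ℕ} (hN : 1 ≤ N) {H : AddSubgroup (Fin n → ZMod N)} :
    H ∈ csF N n j ↔ H ∈ congruenceSet N n j := by
  unfold csF; rw [dif_pos (finite_cs hN)]; simp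

/-- Kernel subgroup of a matrix. -/
def kerA {N n j : ℕ} (A : Matrix (Fin j) (Fin n) (ZMod N)) : AddSubgroup (Fin n → ZMod N) :=
  A.mulVecLin.toAddMonoidHom.ker

lemma mem_kerA {N n j : ℕ} (A : Matrix (Fin j) (Fin n) (ZMod N)) (x : Fin n → ZMod N) :
    x ∈ kerA A ↔ A.mulVec x = 0 := Iff.rfl

lemma mem_cs_iff {N n j : ℕ} {H : AddSubgroup (Fin n → ZMod N)} : H ∈ congruenceSet N n j ↔
    ∃ A : Matrix (Fin j) (Fin n) (ZMod N), Function.Surjective A.mulVec ∧ H = kerA A := by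
  constructor
  · rintro ⟨A, h1, h2⟩
    exact ⟨A, h1, SetLike.coe_injective h2⟩
  · rintro ⟨A, h1, rfl⟩
    exact ⟨A, h1, rfl⟩

/-- Pull back by right multiplication. -/
def cm {N n : ℕ} (P : Matrix (Fin n) (Fin n) (ZMod N)) (H : AddSubgroup (Fin n → ZMod N)) :
    AddSubgroup (Fin n → ZMod N) := H.comap P.vecMulLinear.toAddMonoidHom

lemma mem_cm {N n : ℕ} (P : Matrix (Fin n) (Fin n) (ZMod N)) (H : AddSubgroup (Fin n → ZMod N))
    (x : Fin n → ZMod N) : x ∈ cm P H ↔ x ᵥ* P ∈ H := Iff.rfl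

lemma cm_cm {N n : ℕ} (P Q : Matrix (Fin n) (Fin n) (ZMod N)) (h : P * Q = 1)
    (H : AddSubgroup (Fin n → ZMod N)) : cm P (cm Q H) = H := by
  ext x
  rw [mem_cm, mem_cm, Matrix.vecMul_vecMul, h, Matrix.vecMul_one]

lemma cm_mem {N n j : ℕ} (P Q : Matrix (Fin n) (Fin n) (ZMod N)) (h : P * Q = 1)
    {H : AddSubgroup (Fin n → ZMod N)} (hH : H ∈ congruenceSet N n j) :
    cm P H ∈ congruenceSet N n j := by
  rw [mem_cs_iff] at hH ⊢
  obtain ⟨A, hA, rfl⟩ := hH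
  refine ⟨A * Pᵀ, ?_, ?_⟩
  · intro y
    obtain ⟨x, hx⟩ := hA y
    refine ⟨Qᵀ *ᵥ x, ?_⟩
    have h' : Q * P = 1 := mul_eq_one_comm.1 h
    rw [Matrix.mulVec_mulVec, Matrix.mul_assoc, ← Matrix.transpose_mul, h', Matrix.transpose_one, Matrix.mul_one]
    exact hx
  · ext x
    rw [mem_cm, mem_kerA, mem_kerA, ← Matrix.mulVec_mulVec, Matrix.mulVec_transpose]

/-- Reindexing averages by `cm P`. -/
lemma avg_cm {N n j : ℕ} (hN : 1 ≤ N) (P : Matrix (Fin n) (Fin n) (ZMod N)) (hP : IsUnit P.det)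
    (F : AddSubgroup (Fin n → ZMod N) → ℝ) :
    avg (csF N n j) F = avg (csF N n j) fun H => F (cm P H) := by
  have h1 : P * P⁻¹ = 1 := Matrix.mul_nonsing_inv P hP
  have h2 : P⁻¹ * P = 1 := Matrix.nonsing_inv_mul P hP
  unfold avg
  congr 1
  refine Finset.sum_bij' (fun H _ => cm P⁻¹ H) (fun H _ => cm P H) ?_ ?_ ?_ ?_ ?_
  · intro H hH; exact (mem_csF hN).2 (cm_mem _ _ h2 ((mem_csF hN).1 hH))
  · intro H hH; exact (mem_csF hN).2 (cm_mem _ _ h1 ((mem_csF hN).1 hH))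
  · intro H _; exact cm_cm _ _ h1 H
  · intro H _; exact cm_cm _ _ h2 H
  · intro H _; rw [cm_cm _ _ h1 H]

/-- Reduction of an integer matrix. -/
def redM {n : ℕ} (N : ℕ) (Q : Matrix (Fin n) (Fin n) ℤ) : Matrix (Fin n) (Fin n) (ZMod N) :=
  Q.map (Int.cast : ℤ → ZMod N)

lemma redM_det {n : ℕ} (N : ℕ) (Q : Matrix (Fin n) (Fin n) ℤ) : (redM N Q).det = (Q.det : ZMod N) :=
  ((Int.castRingHom (ZMod N)).map_det Q).symm

lemma red_vecMul {n : ℕ} (N : ℕ) (Q : Matrix (Fin n) (Fin n) ℤ) (x : Fin n → ℤ) :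
    (fun i => ((x ᵥ* Q) i : ZMod N)) = (fun i => (x i : ZMod N)) ᵥ* redM N Q := by
  ext i
  simp [Matrix.vecMul, dotProduct, redM]

/-- Rows of `M * Q` when `M` is a basis for the pulled back subgroup. -/
lemma rows_mul {N n j : ℕ} {Q M : Matrix (Fin n) (Fin n) ℤ} {H : AddSubgroup (Fin n → ZMod N)}
    (hM : IsLat N j (cm (redM N Q) H) M) (x : Fin n → ℤ) :
    (∃ v, v ᵥ* (M * Q) = x) ↔ (fun i => (x i : ZMod N)) ∈ H ∧ ∃ v, v ᵥ* Q = x := by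
  constructor
  · rintro ⟨v, rfl⟩
    rw [← Matrix.vecMul_vecMul]
    refine ⟨?_, _, rfl⟩
    rw [red_vecMul, ← mem_cm]
    exact (hM.2 _).2 ⟨v, rfl⟩
  · rintro ⟨h, v, rfl⟩
    rw [red_vecMul, ← mem_cm] at h
    obtain ⟨w, rfl⟩ := (hM.2 _).1 h
    exact ⟨w, by rw [Matrix.vecMul_vecMul]⟩

/-- The Hecke average as a function on the group. -/
def TG {n : ℕ} (j N : ℕ) (f : XSpace n → ℝ) (g : SLR n) : ℝ :=
  avg (csF N n j) fun H => f (mkX (gM (hM N j H) * g))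

lemma TG_gamma {N n j : ℕ} (hN : 1 ≤ N) (hn : 1 ≤ n) (f : XSpace n → ℝ) {γ : SLR n} (hγ : γ ∈ Gamma n)
    (g : SLR n) : TG j N f (γ * g) = TG j N f g := by
  obtain ⟨Q, hQ, rfl⟩ := exists_gM_of_mem_Gamma hγ
  have hu : IsUnit (redM N Q).det := by rw [redM_det, hQ]; simp
  unfold TG
  conv_lhs => rw [avg_cm hN (redM N Q) hu]
  refine avg_congr fun H hH => ?_
  have hHc := (mem_csF hN).1 hH
  have hc := cm_mem _ _ (Matrix.mul_nonsing_inv _ hu) hHc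
  have hspec := hM_spec hN hn hc
  have hlat : IsLat N j H (hM N j (cm (redM N Q) H) * Q) := by
    refine ⟨by rw [Matrix.det_mul, hQ, mul_one]; exact hspec.1, fun x => ?_⟩
    rw [rows_mul hspec]
    refine ⟨fun h => ⟨h, ?_⟩, fun h => h.1⟩
    refine ⟨x ᵥ* Q.adjugate, ?_⟩
    rw [Matrix.vecMul_vecMul, Matrix.adjugate_mul, hQ, one_smul, Matrix.vecMul_one]
  rw [hlat.mkX_eq hN hn hHc, gM_mul (hspec.det_pos hN) (by rw [hQ]; exact one_pos), mul_assoc]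

/-! ### Part 9: Hecke operators on `X` and the Chinese remainder theorem -/

/-- The Hecke average on `X`. -/
def TX {n : ℕ} (j N : ℕ) (f : XSpace n → ℝ) (x : XSpace n) : ℝ := TG j N f (mkX_surj x).choose

lemma TX_mkX {N n : ℕ} (j : ℕ) (hN : 1 ≤ N) (hn : 1 ≤ n) (f : XSpace n → ℝ) (g : SLR n) :
    TX j N f (mkX g) = TG j N f g := by
  unfold TX
  have h := (mkX_surj (mkX g)).choose_spec
  set g' := (mkX_surj (mkX g)).choose
  rw [mkX_eq_iff] at h
  have := TG_gamma (j := j) hN hn f h g'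
  rw [← this]
  congr 1
  group

lemma TG_mul {N n j : ℕ} (f : XSpace n → ℝ) (g h : SLR n) :
    TG j N f (g * h) = TG j N (fun x => f (rightTranslate n h x)) g := by
  unfold TG
  simp only [rightTranslate_mkX, mul_assoc]

lemma csF_nonempty {N n j : ℕ} (hN : 1 ≤ N) (hj : j ≤ n) : (csF N n j).Nonempty := by
  refine ⟨kerA (Matrix.of fun (l : Fin j) (i : Fin n) => if (i : ℕ) = l then 1 else 0),
    (mem_csF hN).2 (mem_cs_iff.2 ⟨_, ?_, rfl⟩)⟩
  intro y
  refine ⟨fun i => if h : (i : ℕ) < j then y ⟨i, h⟩ else 0, ?_⟩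
  ext l
  simp only [Matrix.mulVec, dotProduct, Matrix.of_apply]
  rw [Finset.sum_eq_single (⟨l, l.2.trans_le hj⟩ : Fin n)]
  · simp
  · intro b _ hb
    rw [if_neg, zero_mul]
    intro h; apply hb; ext; exact h
  · simp

lemma RUC.TX {N n j : ℕ} (hN : 1 ≤ N) (hn : 1 ≤ n) (hj : j ≤ n) {f : XSpace n → ℝ} (hf : RUC f) :
    RUC (TX j N f) := by
  obtain ⟨C, hC⟩ := hf.bdd
  constructor
  · refine ⟨C, fun x => ?_⟩
    unfold _root_.TX TG
    exact abs_avg_le.trans (avg_le_const (csF_nonempty hN hj) fun H _ => hC _)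
  · intro ε hε
    filter_upwards [hf.uc ε hε] with h hh x
    obtain ⟨g, rfl⟩ := mkX_surj x
    rw [rightTranslate_mkX, TX_mkX j hN hn, TX_mkX j hN hn, TG_mul]
    exact abs_avg_sub_avg_le (csF_nonempty hN hj) fun H _ => hh _

/-- Combination of congruence subgroups modulo coprime integers. -/
def comb {n : ℕ} (a b : ℕ) (Ha : AddSubgroup (Fin n → ZMod a)) (Hb : AddSubgroup (Fin n → ZMod b)) :
    AddSubgroup (Fin n → ZMod (a * b)) :=
  Ha.comap ((ZMod.castHom (dvd_mul_right a b) (ZMod a)).toAddMonoidHom.compLeft (Fin n)) ⊓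
    Hb.comap ((ZMod.castHom (dvd_mul_left b a) (ZMod b)).toAddMonoidHom.compLeft (Fin n))

lemma mem_comb {n : ℕ} {a b : ℕ} {Ha : AddSubgroup (Fin n → ZMod a)} {Hb : AddSubgroup (Fin n → ZMod b)}
    {x : Fin n → ZMod (a * b)} : x ∈ comb a b Ha Hb ↔
      (fun i => ZMod.castHom (dvd_mul_right a b) (ZMod a) (x i)) ∈ Ha ∧
      (fun i => ZMod.castHom (dvd_mul_left b a) (ZMod b) (x i)) ∈ Hb := Iff.rfl

lemma int_mem_comb {n : ℕ} {a b : ℕ} {Ha : AddSubgroup (Fin n → ZMod a)} {Hb : AddSubgroup (Fin n → ZMod b)}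
    {x : Fin n → ℤ} : (fun i => (x i : ZMod (a * b))) ∈ comb a b Ha Hb ↔
      (fun i => (x i : ZMod a)) ∈ Ha ∧ (fun i => (x i : ZMod b)) ∈ Hb := by
  rw [mem_comb]; simp

/-- Simultaneous lifting. -/
lemma crt_lift {a b : ℕ} (hab : Nat.Coprime a b) (x : ZMod a) (y : ZMod b) : ∃ z : ZMod (a * b),
    ZMod.castHom (dvd_mul_right a b) (ZMod a) z = x ∧ ZMod.castHom (dvd_mul_left b a) (ZMod b) z = y := by
  obtain ⟨z, hz⟩ := (ZMod.chineseRemainder hab).surjective (x, y)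
  have h1 : ((ZMod.chineseRemainder hab) z).1 = ZMod.castHom (dvd_mul_right a b) (ZMod a) z := by
    have : (RingHom.fst (ZMod a) (ZMod b)).comp (ZMod.chineseRemainder hab).toRingHom =
      ZMod.castHom (dvd_mul_right a b) (ZMod a) := Subsingleton.elim _ _
    exact congrArg (fun φ => φ z) this
  have h2 : ((ZMod.chineseRemainder hab) z).2 = ZMod.castHom (dvd_mul_left b a) (ZMod b) z := by
    have : (RingHom.snd (ZMod a) (ZMod b)).comp (ZMod.chineseRemainder hab).toRingHom =
      ZMod.castHom (dvd_mul_left b a) (ZMod b) := Subsingleton.elim _ _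
    exact congrArg (fun φ => φ z) this
  refine ⟨z, ?_, ?_⟩
  · rw [← h1, hz]
  · rw [← h2, hz]

lemma crt_zero {a b : ℕ} (hab : Nat.Coprime a b) (z : ZMod (a * b))
    (h1 : ZMod.castHom (dvd_mul_right a b) (ZMod a) z = 0)
    (h2 : ZMod.castHom (dvd_mul_left b a) (ZMod b) z = 0) : z = 0 := by
  obtain ⟨m, rfl⟩ := ZMod.intCast_surjective z
  simp only [map_intCast] at h1 h2
  rw [ZMod.intCast_zmod_eq_zero_iff_dvd] at h1 h2 ⊢
  push_cast
  exact (Int.isCoprime_iff_gcd_eq_one.2 (by simpa using hab)).mul_dvd h1 h2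

lemma cast_mulVec {a N n j : ℕ} (φ : ZMod N →+* ZMod a) (A : Matrix (Fin j) (Fin n) (ZMod N))
    (x : Fin n → ZMod N) : (fun i => φ ((A *ᵥ x) i)) = (A.map φ) *ᵥ (fun i => φ (x i)) := by
  ext i
  simp [Matrix.mulVec, dotProduct]

lemma comb_kerA {n j a b : ℕ} (hab : Nat.Coprime a b) (A : Matrix (Fin j) (Fin n) (ZMod (a * b))) :
    comb a b (kerA (A.map (ZMod.castHom (dvd_mul_right a b) (ZMod a))))
      (kerA (A.map (ZMod.castHom (dvd_mul_left b a) (ZMod b)))) = kerA A := by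
  ext x
  rw [mem_comb, mem_kerA, mem_kerA, mem_kerA, ← cast_mulVec, ← cast_mulVec]
  constructor
  · rintro ⟨h1, h2⟩
    ext i
    exact crt_zero hab _ (congrFun h1 i) (congrFun h2 i)
  · intro h
    rw [h]
    constructor <;> · ext i; simp

lemma surj_map {n j a N : ℕ} (φ : ZMod N →+* ZMod a) (hφ : Function.Surjective φ)
    {A : Matrix (Fin j) (Fin n) (ZMod N)} (hA : Function.Surjective A.mulVec) :
    Function.Surjective (A.map φ).mulVec := by
  intro y
  choose z hz using fun i => hφ (y i)
  obtain ⟨x, hx⟩ := hA z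
  refine ⟨fun i => φ (x i), ?_⟩
  rw [← cast_mulVec, hx]
  ext i; exact hz i

lemma comb_mem {n j a b : ℕ} (hab : Nat.Coprime a b) {Ha : AddSubgroup (Fin n → ZMod a)}
    {Hb : AddSubgroup (Fin n → ZMod b)} (h1 : Ha ∈ congruenceSet a n j) (h2 : Hb ∈ congruenceSet b n j) :
    comb a b Ha Hb ∈ congruenceSet (a * b) n j := by
  rw [mem_cs_iff] at h1 h2 ⊢
  obtain ⟨Aa, hAa, rfl⟩ := h1
  obtain ⟨Ab, hAb, rfl⟩ := h2
  choose A hA1 hA2 using fun l : Fin j => fun i : Fin n => crt_lift hab (Aa l i) (Ab l i)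
  have e1 : (Matrix.of A).map (ZMod.castHom (dvd_mul_right a b) (ZMod a)) = Aa := by
    ext l i; exact hA1 l i
  have e2 : (Matrix.of A).map (ZMod.castHom (dvd_mul_left b a) (ZMod b)) = Ab := by
    ext l i; exact hA2 l i
  refine ⟨Matrix.of A, ?_, ?_⟩
  · intro y
    obtain ⟨xa, hxa⟩ := hAa fun l => ZMod.castHom (dvd_mul_right a b) (ZMod a) (y l)
    obtain ⟨xb, hxb⟩ := hAb fun l => ZMod.castHom (dvd_mul_left b a) (ZMod b) (y l)
    choose x hx1 hx2 using fun i => crt_lift hab (xa i) (xb i)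
    refine ⟨x, ?_⟩
    have c1 := cast_mulVec (ZMod.castHom (dvd_mul_right a b) (ZMod a)) (Matrix.of A) x
    have c2 := cast_mulVec (ZMod.castHom (dvd_mul_left b a) (ZMod b)) (Matrix.of A) x
    rw [e1] at c1; rw [e2] at c2
    simp only [hx1] at c1; simp only [hx2] at c2
    ext l
    rw [← sub_eq_zero]
    refine crt_zero hab _ ?_ ?_
    · rw [map_sub, sub_eq_zero]
      exact (congrFun c1 l).trans (congrFun hxa l)
    · rw [map_sub, sub_eq_zero]
      exact (congrFun c2 l).trans (congrFun hxb l)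
  · rw [← comb_kerA hab (Matrix.of A), e1, e2]

lemma avg_comb {n j a b : ℕ} (ha : 1 ≤ a) (hb : 1 ≤ b) (hab : Nat.Coprime a b)
    (F : AddSubgroup (Fin n → ZMod (a * b)) → ℝ) :
    avg (csF (a * b) n j) F = avg (csF b n j) fun Hb => avg (csF a n j) fun Ha => F (comb a b Ha Hb) := by
  classical
  have hN : 1 ≤ a * b := Nat.mul_pos ha hb
  let cb : AddSubgroup (Fin n → ZMod b) × AddSubgroup (Fin n → ZMod a) → AddSubgroup (Fin n → ZMod (a * b)) :=
    fun q => comb a b q.2 q.1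
  have hinj : Set.InjOn cb ((csF b n j ×ˢ csF a n j : Finset _) : Set _) := by
    rintro ⟨Hb, Ha⟩ _ ⟨Hb', Ha'⟩ _ heq
    have heq : comb a b Ha Hb = comb a b Ha' Hb' := heq
    have h1 : Ha = Ha' := by
      ext x
      choose z hz1 hz2 using fun i => crt_lift hab (x i) 0
      have h := SetLike.ext_iff.1 heq z
      rw [mem_comb, mem_comb] at h
      simp only [hz1, hz2] at h
      have h0 : (fun _ : Fin n => (0 : ZMod b)) = 0 := rfl
      rw [h0] at h
      simpa [zero_mem] using h
    have h2 : Hb = Hb' := by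
      ext x
      choose z hz1 hz2 using fun i => crt_lift hab 0 (x i)
      have h := SetLike.ext_iff.1 heq z
      rw [mem_comb, mem_comb] at h
      simp only [hz1, hz2] at h
      have h0 : (fun _ : Fin n => (0 : ZMod a)) = 0 := rfl
      rw [h0] at h
      simpa [zero_mem] using h
    rw [h1, h2]
  have himg : csF (a * b) n j = (csF b n j ×ˢ csF a n j).image cb := by
    ext H
    rw [Finset.mem_image, mem_csF hN, mem_cs_iff]
    constructor
    · rintro ⟨A, hA, rfl⟩
      refine ⟨(kerA (A.map (ZMod.castHom (dvd_mul_left b a) (ZMod b))),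
        kerA (A.map (ZMod.castHom (dvd_mul_right a b) (ZMod a)))), ?_, comb_kerA hab A⟩
      rw [Finset.mem_product, mem_csF hb, mem_csF ha, mem_cs_iff, mem_cs_iff]
      exact ⟨⟨_, surj_map _ (ZMod.castHom_surjective _) hA, rfl⟩, ⟨_, surj_map _ (ZMod.castHom_surjective _) hA, rfl⟩⟩
    · rintro ⟨⟨Hb, Ha⟩, hq, rfl⟩
      rw [Finset.mem_product, mem_csF hb, mem_csF ha] at hq
      exact mem_cs_iff.1 (comb_mem hab hq.2 hq.1)
  rw [himg]
  unfold avg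
  rw [Finset.card_image_of_injOn hinj, Finset.sum_image hinj, Finset.card_product, Finset.sum_product,
    ← Finset.mul_sum]
  push_cast
  rw [mul_inv, mul_assoc]

lemma TG_mul_coprime {n j a b : ℕ} (hn : 1 ≤ n) (ha : 1 ≤ a) (hb : 1 ≤ b) (hab : Nat.Coprime a b)
    (f : XSpace n → ℝ) (g : SLR n) : TG j (a * b) f g = TG j b (TX j a f) g := by
  have hN : 1 ≤ a * b := Nat.mul_pos ha hb
  conv_lhs => unfold TG
  rw [avg_comb ha hb hab]
  conv_rhs => unfold TG
  refine avg_congr fun Hb hHb => ?_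
  have hHb' := (mem_csF hb).1 hHb
  have hspb := hM_spec hb hn hHb'
  set Q := hM b j Hb with hQ
  have hu : IsUnit (redM a Q).det := by
    rw [redM_det, hspb.1]
    push_cast
    exact ((ZMod.isUnit_iff_coprime b a).2 hab.symm).pow j
  rw [TX_mkX j ha hn]
  unfold TG
  conv_rhs => rw [avg_cm ha (redM a Q) hu]
  refine avg_congr fun Ha hHa => ?_
  have hHa' := (mem_csF ha).1 hHa
  have hspa := hM_spec ha hn (cm_mem _ _ (Matrix.mul_nonsing_inv _ hu) hHa')
  have hlat : IsLat (a * b) j (comb a b Ha Hb) (hM a j (cm (redM a Q) Ha) * Q) := by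
    constructor
    · rw [Matrix.det_mul, hspa.1, hspb.1]; push_cast; rw [mul_pow]
    · intro x
      rw [rows_mul hspa, int_mem_comb, ← hspb.2]
  have hcomb : comb a b Ha Hb ∈ congruenceSet (a * b) n j := comb_mem hab hHa' hHb'
  rw [hlat.mkX_eq hN hn hcomb, gM_mul (hspa.det_pos ha) (hspb.det_pos hb), mul_assoc]

/-! ### Part 10: generic congruence subgroups modulo primes -/

/-- A subgroup is generic if it is a graph over the last coordinates. -/
def GenH {j k p : ℕ} (H : AddSubgroup (Fin (j + k) → ZMod p)) : Prop :=
  ∃ A : Matrix (Fin j) (Fin (j + k)) (ZMod p), H = kerA A ∧ IsUnit (A.submatrix id (Fin.castAdd k)).det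

lemma GenH.graph {j k p : ℕ} {H : AddSubgroup (Fin (j + k) → ZMod p)} (h : GenH H) :
    ∃ B : Matrix (Fin (j + k)) (Fin (j + k)) ℤ, ∀ x : Fin (j + k) → ZMod p,
      x ∈ H ↔ ∀ l : Fin j, x (Fin.castAdd k l) =
        ∑ i : Fin k, x (Fin.natAdd j i) * (B (Fin.natAdd j i) (Fin.castAdd k l) : ZMod p) := by
  obtain ⟨A, rfl, hA⟩ := h
  set U := A.submatrix id (Fin.castAdd k) with hU
  have h1 : U⁻¹ * U = 1 := Matrix.nonsing_inv_mul U hA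
  have h2 : U * U⁻¹ = 1 := Matrix.mul_nonsing_inv U hA
  set A' := U⁻¹ * A with hA'
  have hA'1 : ∀ l l', A' l (Fin.castAdd k l') = (1 : Matrix (Fin j) (Fin j) (ZMod p)) l l' := by
    intro l l'
    rw [← h1]; rfl
  choose c hc using fun (l : Fin j) (i : Fin (j + k)) => ZMod.intCast_surjective (A' l i)
  refine ⟨Matrix.of fun i i' => if h : (i' : ℕ) < j then - c ⟨i', h⟩ i else 0, fun x => ?_⟩
  have e1 : x ∈ kerA A ↔ A' *ᵥ x = 0 := by
    rw [mem_kerA, hA']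
    constructor
    · intro h; rw [← Matrix.mulVec_mulVec, h, Matrix.mulVec_zero]
    · intro h
      have : A *ᵥ x = U *ᵥ ((U⁻¹ * A) *ᵥ x) := by
        rw [Matrix.mulVec_mulVec, ← Matrix.mul_assoc, h2, Matrix.one_mul]
      rw [this, h, Matrix.mulVec_zero]
  rw [e1, funext_iff]
  refine forall_congr' fun l => ?_
  simp only [Matrix.mulVec, dotProduct, Fin.sum_univ_add, hA'1, Matrix.of_apply, Fin.val_castAdd,
    Fin.is_lt, dif_pos, Fin.eta, Int.cast_neg, hc, mul_neg, Finset.sum_neg_distrib, Pi.zero_apply]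
  simp only [Matrix.one_apply, ite_mul, one_mul, zero_mul, Finset.sum_ite_eq, Finset.mem_univ, if_true]
  rw [eq_neg_iff_add_eq_zero]
  simp only [mul_comm]

/-- Integer version of `dMat * (1 + lowB)`. -/
def latZ (j k p : ℕ) (B : Matrix (Fin (j + k)) (Fin (j + k)) ℤ) : Matrix (Fin (j + k)) (Fin (j + k)) ℤ :=
  Matrix.diagonal (fun i : Fin (j + k) => if (i : ℕ) < j then (p : ℤ) else 1) *
    (1 + Matrix.of fun (i i' : Fin (j + k)) => if (i' : ℕ) < j ∧ j ≤ (i : ℕ) then B i i' else 0)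

lemma latZ_map (j k p : ℕ) (B : Matrix (Fin (j + k)) (Fin (j + k)) ℤ) :
    (latZ j k p B).map (Int.cast : ℤ → ℝ) =
      dMat (j + k) j p * (uG j (B.map (Int.cast : ℤ → ℝ)) : Matrix (Fin (j + k)) (Fin (j + k)) ℝ) := by
  ext i i'
  simp only [latZ, dMat, uG_coe, Matrix.map_apply, Matrix.diagonal_mul, Matrix.add_apply, lowB_apply,
    Matrix.of_apply, Matrix.one_apply]
  push_cast
  split_ifs <;> simp

lemma latZ_det (j k p : ℕ) (B : Matrix (Fin (j + k)) (Fin (j + k)) ℤ) :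
    (latZ j k p B).det = (p : ℤ) ^ j := by
  have h : ((latZ j k p B).det : ℝ) = (p : ℝ) ^ j := by
    rw [← det_map_cast, latZ_map, Matrix.det_mul, (uG j _).2, mul_one, dMat, Matrix.det_diagonal,
      Fin.prod_univ_add]
    simp
  exact_mod_cast h

lemma gM_latZ {j k p : ℕ} (hp : 1 ≤ p) (B : Matrix (Fin (j + k)) (Fin (j + k)) ℤ) :
    gM (latZ j k p B) = aG (j + k) j p * uG j (B.map (Int.cast : ℤ → ℝ)) := by
  rw [gM, latZ_map, nrm_mul (dMat_det_pos _ _ hp) (by rw [(uG j _).2]; exact one_pos), nrm_sl]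
  rfl

lemma latZ_vec_low (j k p : ℕ) (B : Matrix (Fin (j + k)) (Fin (j + k)) ℤ) (v : Fin (j + k) → ℤ) (l : Fin j) :
    (v ᵥ* latZ j k p B) (Fin.castAdd k l) = p * v (Fin.castAdd k l) +
      ∑ i : Fin k, v (Fin.natAdd j i) * B (Fin.natAdd j i) (Fin.castAdd k l) := by
  rw [latZ, ← Matrix.vecMul_vecMul, Matrix.vecMul_add, Matrix.vecMul_one, Pi.add_apply,
    Matrix.vecMul_diagonal]
  congr 1
  · simp [mul_comm]
  · have hw : ∀ i, (v ᵥ* Matrix.diagonal (fun i : Fin (j + k) => if (i : ℕ) < j then (p : ℤ) else 1)) i =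
        v i * (if (i : ℕ) < j then (p : ℤ) else 1) := fun i => Matrix.vecMul_diagonal _ _ i
    generalize (v ᵥ* Matrix.diagonal (fun i : Fin (j + k) => if (i : ℕ) < j then (p : ℤ) else 1)) = w at hw
    simp only [Matrix.vecMul, dotProduct, Fin.sum_univ_add, Matrix.of_apply]
    have h1 : ∀ x : Fin j, ¬ (j ≤ (x : ℕ)) := fun x => not_le.2 x.2
    simp [hw, h1]

lemma latZ_vec_high (j k p : ℕ) (B : Matrix (Fin (j + k)) (Fin (j + k)) ℤ) (v : Fin (j + k) → ℤ) (i : Fin k) :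
    (v ᵥ* latZ j k p B) (Fin.natAdd j i) = v (Fin.natAdd j i) := by
  rw [latZ, ← Matrix.vecMul_vecMul, Matrix.vecMul_add, Matrix.vecMul_one, Pi.add_apply,
    Matrix.vecMul_diagonal]
  have : ((v ᵥ* Matrix.diagonal (fun i : Fin (j + k) => if (i : ℕ) < j then (p : ℤ) else 1)) ᵥ*
    Matrix.of fun (i i' : Fin (j + k)) => if (i' : ℕ) < j ∧ j ≤ (i : ℕ) then B i i' else 0) (Fin.natAdd j i) = 0 := by
    simp [Matrix.vecMul, dotProduct]
  rw [this]; simp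

lemma GenH.isLat {j k p : ℕ} {H : AddSubgroup (Fin (j + k) → ZMod p)}
    {B : Matrix (Fin (j + k)) (Fin (j + k)) ℤ} (h : ∀ x : Fin (j + k) → ZMod p,
      x ∈ H ↔ ∀ l : Fin j, x (Fin.castAdd k l) =
        ∑ i : Fin k, x (Fin.natAdd j i) * (B (Fin.natAdd j i) (Fin.castAdd k l) : ZMod p)) :
    IsLat p j H (latZ j k p B) := by
  refine ⟨latZ_det j k p B, fun x => ?_⟩
  rw [h]
  have e : ∀ l : Fin j, ((x (Fin.castAdd k l) : ZMod p) =
        ∑ i : Fin k, (x (Fin.natAdd j i) : ZMod p) * (B (Fin.natAdd j i) (Fin.castAdd k l) : ZMod p)) ↔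
      (p : ℤ) ∣ x (Fin.castAdd k l) - ∑ i : Fin k, x (Fin.natAdd j i) * B (Fin.natAdd j i) (Fin.castAdd k l) := by
    intro l
    rw [← ZMod.intCast_zmod_eq_zero_iff_dvd, ← sub_eq_zero]
    push_cast
    rfl
  constructor
  · intro hx
    choose q hq using fun l => (e l).1 (hx l)
    refine ⟨Fin.addCases q (fun i => x (Fin.natAdd j i)), ?_⟩
    ext i
    refine Fin.addCases (fun l => ?_) (fun i => ?_) i
    · rw [latZ_vec_low]
      simp only [Fin.addCases_left, Fin.addCases_right]
      rw [← hq]; ring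
    · rw [latZ_vec_high]; simp
  · rintro ⟨v, rfl⟩ l
    rw [e, latZ_vec_low]
    simp only [latZ_vec_high]
    exact ⟨v (Fin.castAdd k l), by ring⟩

/-- The inner average over integral unipotents, for generic subgroups. -/
lemma GenH.inner {j k p : ℕ} (hp : 1 ≤ p) (hn : 1 ≤ j + k) {H : AddSubgroup (Fin (j + k) → ZMod p)} (h : GenH H)
    (hH : H ∈ congruenceSet p (j + k) j) (f : XSpace (j + k) → ℝ) :
    avg (box (j + k) p) (fun B => f (mkX (gM (hM p j H) * uG j (B.map (Int.cast : ℤ → ℝ))))) =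
      Psi j p f (aG (j + k) j p) := by
  obtain ⟨B0, hB0⟩ := h.graph
  have hl := GenH.isLat hB0
  rw [← Psi_shift hp f B0]
  unfold Psi
  refine avg_congr fun B _ => ?_
  have hsm : ∀ z : Matrix (Fin (j + k)) (Fin (j + k)) ℤ, gr p z = (p : ℝ)⁻¹ • z.map (Int.cast : ℤ → ℝ) := by
    intro z; ext i i'; simp [gr, div_eq_inv_mul]
  rw [hl.mkX_eq hp hn hH, gM_latZ hp, mul_assoc, uG_mul, aG_mul_uG hp, ← mul_assoc, uG_mul, hsm, hsm,
    ← smul_add, add_comm (B0.map _)]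

/-! ### Part 11: counting non-generic subgroups -/

lemma card_sing_add (j p : ℕ) [Fact p.Prime] :
    Nat.card {V : Matrix (Fin j) (Fin j) (ZMod p) // ¬ IsUnit V.det} + Nat.card (GL (Fin j) (ZMod p)) ≤ p ^ (j * j) := by
  have h1 : Nat.card (Matrix (Fin j) (Fin j) (ZMod p)) = p ^ (j * j) := by
    simp [Matrix, Nat.card_fun, pow_mul]
  rw [← h1, ← Nat.card_sum]
  refine Nat.card_le_card_of_injective
    (Sum.elim (fun V : {V : Matrix (Fin j) (Fin j) (ZMod p) // ¬ IsUnit V.det} => V.1)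
      (fun U : GL (Fin j) (ZMod p) => (U : Matrix (Fin j) (Fin j) (ZMod p)))) ?_
  have hU : ∀ U : GL (Fin j) (ZMod p), IsUnit (U : Matrix (Fin j) (Fin j) (ZMod p)).det := fun U =>
    (Matrix.isUnit_iff_isUnit_det _).1 U.isUnit
  rintro (V | U) (V' | U') h
  · exact congrArg _ (Subtype.ext h)
  · exact absurd (by simp only [Sum.elim_inl, Sum.elim_inr] at h; rw [h]; exact hU U') V.2
  · exact absurd (by simp only [Sum.elim_inl, Sum.elim_inr] at h; rw [← h]; exact hU U) V'.2
  · exact congrArg _ (Units.ext h)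

open Classical in
/-- The nongeneric subgroups. -/
def nongen (j k p : ℕ) : Finset (AddSubgroup (Fin (j + k) → ZMod p)) :=
  (csF p (j + k) j).filter fun H => ¬ GenH H

lemma left_cancel_surj {N n j : ℕ} {A : Matrix (Fin j) (Fin n) (ZMod N)} (hA : Function.Surjective A.mulVec)
    {U V : Matrix (Fin j) (Fin j) (ZMod N)} (h : U * A = V * A) : U = V := by
  apply Matrix.mulVec_injective
  funext y
  obtain ⟨x, rfl⟩ := hA y
  show U *ᵥ (A *ᵥ x) = V *ᵥ (A *ᵥ x)
  rw [Matrix.mulVec_mulVec, Matrix.mulVec_mulVec, h]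

lemma kerA_unit_mul {N n j : ℕ} (U : GL (Fin j) (ZMod N)) (A : Matrix (Fin j) (Fin n) (ZMod N)) :
    kerA ((U : Matrix (Fin j) (Fin j) (ZMod N)) * A) = kerA A := by
  ext x
  rw [mem_kerA, mem_kerA, ← Matrix.mulVec_mulVec]
  constructor
  · intro h
    have : (↑U⁻¹ : Matrix (Fin j) (Fin j) (ZMod N)) *ᵥ ((U : Matrix (Fin j) (Fin j) (ZMod N)) *ᵥ (A *ᵥ x)) = 0 := by
      rw [h, Matrix.mulVec_zero]
    rwa [Matrix.mulVec_mulVec, ← Units.val_mul, inv_mul_cancel, Units.val_one, Matrix.one_mulVec] at this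
  · intro h; rw [h, Matrix.mulVec_zero]

lemma nongen_mul_le (j k p : ℕ) [Fact p.Prime] :
    (nongen j k p).card * Nat.card (GL (Fin j) (ZMod p)) ≤
      Nat.card {V : Matrix (Fin j) (Fin j) (ZMod p) // ¬ IsUnit V.det} * p ^ (j * k) := by
  classical
  have hp : 1 ≤ p := (Fact.out : p.Prime).one_le
  have h1 : Nat.card (Matrix (Fin j) (Fin k) (ZMod p)) = p ^ (j * k) := by
    simp [Matrix, Nat.card_fun, pow_mul]
    rw [← pow_mul, ← pow_mul, mul_comm]
  have h2 : (nongen j k p).card = Nat.card {H // H ∈ nongen j k p} := by simp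
  rw [h2, ← h1, ← Nat.card_prod, ← Nat.card_prod]
  have hex : ∀ H : {H // H ∈ nongen j k p}, ∃ A : Matrix (Fin j) (Fin (j + k)) (ZMod p),
      Function.Surjective A.mulVec ∧ H.1 = kerA A ∧ ¬ IsUnit (A.submatrix id (Fin.castAdd k)).det := by
    rintro ⟨H, hH⟩
    obtain ⟨hH1, hH2⟩ := Finset.mem_filter.1 hH
    rw [mem_csF hp, mem_cs_iff] at hH1
    obtain ⟨A, hA, hHA⟩ := hH1
    exact ⟨A, hA, hHA, fun hu => hH2 ⟨A, hHA, hu⟩⟩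
  choose A hA1 hA2 hA3 using hex
  have hblk : ∀ (U : GL (Fin j) (ZMod p)) H, ((U : Matrix (Fin j) (Fin j) (ZMod p)) * A H).submatrix id (Fin.castAdd k) =
      (U : Matrix (Fin j) (Fin j) (ZMod p)) * (A H).submatrix id (Fin.castAdd k) := fun U H => rfl
  have hns : ∀ (U : GL (Fin j) (ZMod p)) H,
      ¬ IsUnit (((U : Matrix (Fin j) (Fin j) (ZMod p)) * A H).submatrix id (Fin.castAdd k)).det := by
    intro U H h
    rw [hblk, Matrix.det_mul] at h
    exact hA3 H (isUnit_of_mul_isUnit_right h)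
  refine Nat.card_le_card_of_injective
    (fun q : {H // H ∈ nongen j k p} × GL (Fin j) (ZMod p) =>
      ((⟨((q.2 : Matrix (Fin j) (Fin j) (ZMod p)) * A q.1).submatrix id (Fin.castAdd k), hns q.2 q.1⟩ :
        {V : Matrix (Fin j) (Fin j) (ZMod p) // ¬ IsUnit V.det}),
        ((q.2 : Matrix (Fin j) (Fin j) (ZMod p)) * A q.1).submatrix id (Fin.natAdd j))) ?_
  rintro ⟨H, U⟩ ⟨H', U'⟩ h
  simp only [Prod.mk.injEq, Subtype.mk.injEq] at h
  have heq : (U : Matrix (Fin j) (Fin j) (ZMod p)) * A H = (U' : Matrix (Fin j) (Fin j) (ZMod p)) * A H' := by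
    ext l i
    refine Fin.addCases (fun i => ?_) (fun i => ?_) i
    · exact congrFun (congrFun h.1 l) i
    · exact congrFun (congrFun h.2 l) i
  have hHH : H = H' := by
    apply Subtype.ext
    rw [hA2 H, hA2 H', ← kerA_unit_mul U, heq, kerA_unit_mul]
  subst hHH
  rw [Prod.mk.injEq]
  exact ⟨rfl, Units.ext (left_cancel_surj (hA1 H) heq)⟩

lemma card_cs_ge (j k p : ℕ) [Fact p.Prime] : p ^ (j * k) ≤ (csF p (j + k) j).card := by
  have hp : 1 ≤ p := (Fact.out : p.Prime).one_le
  have h1 : Nat.card (Matrix (Fin j) (Fin k) (ZMod p)) = p ^ (j * k) := by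
    simp [Matrix, Nat.card_fun, pow_mul]
    rw [← pow_mul, ← pow_mul, mul_comm]
  have h2 : (csF p (j + k) j).card = Nat.card {H // H ∈ csF p (j + k) j} := by simp
  rw [← h1, h2]
  let A : Matrix (Fin j) (Fin k) (ZMod p) → Matrix (Fin j) (Fin (j + k)) (ZMod p) := fun C =>
    Matrix.of fun l => Fin.addCases (fun l' => (1 : Matrix (Fin j) (Fin j) (ZMod p)) l l') (fun i => C l i)
  have hmul : ∀ C (x : Fin (j + k) → ZMod p), A C *ᵥ x = (fun l => x (Fin.castAdd k l)) + C *ᵥ (fun i => x (Fin.natAdd j i)) := by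
    intro C x
    ext l
    simp only [Matrix.mulVec, dotProduct, Fin.sum_univ_add, A, Matrix.of_apply, Fin.addCases_left,
      Fin.addCases_right, Pi.add_apply]
    simp [Matrix.one_apply]
  have hmem : ∀ C, kerA (A C) ∈ csF p (j + k) j := by
    intro C
    rw [mem_csF hp, mem_cs_iff]
    refine ⟨A C, fun y => ⟨Fin.addCases y (fun _ => 0), ?_⟩, rfl⟩
    rw [hmul]
    ext l
    simp [Matrix.mulVec, dotProduct]
  refine Nat.card_le_card_of_injective (fun C => (⟨kerA (A C), hmem C⟩ : {H // H ∈ csF p (j + k) j})) ?_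
  intro C C' h
  have h : kerA (A C) = kerA (A C') := congrArg Subtype.val h
  apply Matrix.mulVec_injective
  funext y
  show C *ᵥ y = C' *ᵥ y
  have h3 : (Fin.addCases (fun l => - (C *ᵥ y) l) y : Fin (j + k) → ZMod p) ∈ kerA (A C) := by
    rw [mem_kerA, hmul]
    ext l; simp
  rw [h, mem_kerA, hmul] at h3
  ext l
  have := congrFun h3 l
  simp only [Fin.addCases_left, Fin.addCases_right, Pi.add_apply, Pi.zero_apply] at this
  rw [neg_add_eq_zero] at this
  exact this

/-- The bound for the non-generic proportion. -/
def dlt (j p : ℕ) : ℝ := (p : ℝ) ^ (j * j) / ∏ i : Fin j, ((p : ℝ) ^ j - (p : ℝ) ^ (i : ℕ)) - 1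

lemma nongen_le (j k p : ℕ) [hpp : Fact p.Prime] :
    ((nongen j k p).card : ℝ) ≤ dlt j p * (csF p (j + k) j).card := by
  have h1 := card_sing_add j p
  have h2 := nongen_mul_le j k p
  have h3 := card_cs_ge j k p
  have hp : 1 < p := hpp.out.one_lt
  have hG : (Nat.card (GL (Fin j) (ZMod p)) : ℝ) = ∏ i : Fin j, ((p : ℝ) ^ j - (p : ℝ) ^ (i : ℕ)) := by
    rw [Matrix.card_GL_field]
    push_cast
    refine Finset.prod_congr rfl fun i _ => ?_
    rw [ZMod.card, Nat.cast_sub (Nat.pow_le_pow_right hp.le i.2.le)]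
    push_cast; rfl
  have hGpos : 0 < (Nat.card (GL (Fin j) (ZMod p)) : ℝ) := by
    rw [hG]
    refine Finset.prod_pos fun i _ => sub_pos.2 ?_
    exact pow_lt_pow_right₀ (by exact_mod_cast hp) i.2
  rw [dlt, ← hG]
  set G : ℝ := (Nat.card (GL (Fin j) (ZMod p)) : ℝ) with hGd
  have h1' : (Nat.card {V : Matrix (Fin j) (Fin j) (ZMod p) // ¬ IsUnit V.det} : ℝ) ≤ (p : ℝ) ^ (j * j) - G := by
    have : ((Nat.card {V : Matrix (Fin j) (Fin j) (ZMod p) // ¬ IsUnit V.det} + Nat.card (GL (Fin j) (ZMod p)) : ℕ) : ℝ)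
      ≤ ((p ^ (j * j) : ℕ) : ℝ) := by exact_mod_cast h1
    push_cast at this
    linarith
  have h2' : ((nongen j k p).card : ℝ) * G ≤
      Nat.card {V : Matrix (Fin j) (Fin j) (ZMod p) // ¬ IsUnit V.det} * (p : ℝ) ^ (j * k) := by
    rw [hGd]; exact_mod_cast h2
  have h3' : (p : ℝ) ^ (j * k) ≤ (csF p (j + k) j).card := by exact_mod_cast h3
  have h4 : ((nongen j k p).card : ℝ) * G ≤ ((p : ℝ) ^ (j * j) - G) * (csF p (j + k) j).card := by
    refine h2'.trans (mul_le_mul h1' h3' (by positivity) ?_)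
    exact le_trans (by positivity) h1'
  have h5 : (p : ℝ) ^ (j * j) / G - 1 = ((p : ℝ) ^ (j * j) - G) / G := by field_simp
  rw [h5, div_mul_eq_mul_div, le_div_iff₀ hGpos]
  exact h4

lemma tendsto_dlt (j : ℕ) : Tendsto (dlt j) atTop (𝓝 0) := by
  have h1 : Tendsto (fun p : ℕ => ∏ i : Fin j, (1 - (p : ℝ) ^ (i : ℕ) / (p : ℝ) ^ j)) atTop (𝓝 1) := by
    have := tendsto_finsetProd (Finset.univ : Finset (Fin j)) (f := fun (i : Fin j) (p : ℕ) => 1 - (p : ℝ) ^ (i : ℕ) / (p : ℝ) ^ j)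
      (a := fun _ => 1 - 0) (x := atTop) fun i _ => tendsto_const_nhds.sub
        ((tendsto_pow_div_pow_atTop_zero i.2).comp tendsto_natCast_atTop_atTop)
    simpa using this
  have h2 : Tendsto (fun p : ℕ => (∏ i : Fin j, (1 - (p : ℝ) ^ (i : ℕ) / (p : ℝ) ^ j))⁻¹ - 1) atTop (𝓝 0) := by
    have := (h1.inv₀ one_ne_zero).sub_const 1
    simpa using this
  refine h2.congr' ?_
  filter_upwards [eventually_ge_atTop 1] with p hp
  have hp0 : (p : ℝ) ≠ 0 := by positivity
  unfold dlt
  congr 1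
  have : ∏ i : Fin j, ((p : ℝ) ^ j - (p : ℝ) ^ (i : ℕ)) =
      (p : ℝ) ^ (j * j) * ∏ i : Fin j, (1 - (p : ℝ) ^ (i : ℕ) / (p : ℝ) ^ j) := by
    rw [pow_mul]
    conv_rhs => rw [show ((p : ℝ) ^ j) ^ j = ∏ i : Fin j, (p : ℝ) ^ j by simp]
    rw [← Finset.prod_mul_distrib]
    refine Finset.prod_congr rfl fun i _ => ?_
    field_simp
  rw [this, div_mul_eq_div_div, div_self (by positivity), one_div]

/-! ### Part 12: equidistribution along primes, and invariance of the Hecke averages -/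

lemma TG_prime_sub {j k p : ℕ} [hpp : Fact p.Prime] (hn : 1 ≤ j + k) {f : XSpace (j + k) → ℝ} {C : ℝ}
    (hC : ∀ x, |f x| ≤ C) : |TG j p f 1 - Psi j p f (aG (j + k) j p)| ≤ 2 * C * dlt j p := by
  classical
  have hp : 1 ≤ p := hpp.out.one_le
  have hcs := csF_nonempty (N := p) (n := j + k) (j := j) hp (by omega)
  have hbx := box_nonempty (j + k) hp
  have h1 : TG j p f 1 = avg (box (j + k) p) fun B => TG j p f (uG j (B.map (Int.cast : ℤ → ℝ))) := by
    rw [← avg_const hbx (TG j p f 1)]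
    refine avg_congr fun B _ => ?_
    have := TG_gamma (j := j) hp hn f (uG_int_mem j B) 1
    rw [mul_one] at this
    exact this.symm
  rw [h1]
  unfold TG
  rw [avg_comm]
  set P := Psi j p f (aG (j + k) j p) with hP
  have hPC : |P| ≤ C := abs_avg_le.trans (avg_le_const hbx fun B _ => hC _)
  refine (abs_avg_sub_const_le hcs _).trans ?_
  have h2 : avg (csF p (j + k) j) (fun H => |avg (box (j + k) p) (fun B => f (mkX (gM (hM p j H) *
      uG j (B.map (Int.cast : ℤ → ℝ))))) - P|) ≤
      avg (csF p (j + k) j) (fun H => if ¬ GenH H then 2 * C else 0) := by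
    refine avg_mono fun H hH => ?_
    by_cases hg : GenH H
    · rw [hg.inner hp hn ((mem_csF hp).1 hH) f, ← hP, sub_self, abs_zero, if_neg (not_not.2 hg)]
    · rw [if_pos hg]
      have : |avg (box (j + k) p) (fun B => f (mkX (gM (hM p j H) *
        uG j (B.map (Int.cast : ℤ → ℝ)))))| ≤ C := abs_avg_le.trans (avg_le_const hbx fun B _ => hC _)
      have a := abs_le.1 this
      have b := abs_le.1 hPC
      exact abs_le.2 ⟨by linarith, by linarith⟩
  refine h2.trans ?_
  unfold avg
  rw [← Finset.sum_filter, Finset.sum_const, nsmul_eq_mul]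
  have h3 := nongen_le j k p
  unfold nongen at h3
  have hpos : (0 : ℝ) < (csF p (j + k) j).card := by exact_mod_cast hcs.card_pos
  have hC0 : 0 ≤ C := (abs_nonneg _).trans hPC
  calc _ ≤ ((csF p (j + k) j).card : ℝ)⁻¹ * ((dlt j p * (csF p (j + k) j).card) * (2 * C)) := by gcongr
    _ = 2 * C * dlt j p := by field_simp

/-- The filter of large primes. -/
def primesF : Filter ℕ := atTop ⊓ 𝓟 {p | p.Prime}

lemma primesF_neBot : primesF.NeBot := by
  rw [primesF, ← frequently_mem_iff_neBot]
  exact Nat.frequently_atTop_iff_infinite.2 Nat.infinite_setOfPred_prime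

lemma primesF_prime : ∀ᶠ p in primesF, p.Prime := by
  exact eventually_inf_principal.2 (Eventually.of_forall fun p hp => hp)

lemma primesF_gt (M : ℕ) : ∀ᶠ p in primesF, M < p :=
  (eventually_gt_atTop M).filter_mono inf_le_left

theorem TG_prime_one {n j : ℕ} (hj : 1 ≤ j) (hjn : j < n) {μ : Measure (XSpace n)} (hμ : InvProb μ)
    {f : XSpace n → ℝ} (hf : RUC f) : Tendsto (fun p => TG j p f 1) primesF (𝓝 (∫ x, f x ∂μ)) := by
  obtain ⟨C, hC⟩ := hf.bdd
  have h1 := prime_grid hμ hf (j := j) (k := ⟨n - 1, by omega⟩) (l := ⟨0, by omega⟩)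
    (by exact hj) (by simp only; omega)
  have h1 := h1.mono_left (inf_le_left : primesF ≤ atTop)
  obtain ⟨k, rfl⟩ := Nat.exists_eq_add_of_le hjn.le
  have h2 : Tendsto (fun p => 2 * C * dlt j p) primesF (𝓝 0) := by
    have := (tendsto_dlt j).const_mul (2 * C)
    rw [mul_zero] at this
    exact this.mono_left (inf_le_left : primesF ≤ atTop)
  have h3 : Tendsto (fun p => TG j p f 1 - Psi j p f (aG (j + k) j p)) primesF (𝓝 0) := by
    refine squeeze_zero_norm' ?_ h2
    filter_upwards [primesF_prime] with p hp
    have : Fact p.Prime := ⟨hp⟩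
    exact TG_prime_sub (by omega) hC
  simpa using h3.add h1

theorem TG_prime {n j : ℕ} (hj : 1 ≤ j) (hjn : j < n) {μ : Measure (XSpace n)} (hμ : InvProb μ)
    {f : XSpace n → ℝ} (hf : RUC f) (g : SLR n) :
    Tendsto (fun p => TG j p f g) primesF (𝓝 (∫ x, f x ∂μ)) := by
  have h := TG_prime_one hj hjn hμ (hf.translate g)
  have e : ∫ x, f (rightTranslate n g x) ∂μ = ∫ x, f x ∂μ := by
    rw [← (hμ.mp g).map_eq, integral_map (measurable_rightTranslate g).aemeasurable
      hf.measurable.aestronglyMeasurable, (hμ.mp g).map_eq]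
  rw [e] at h
  refine h.congr fun p => ?_
  rw [← TG_mul, one_mul]

theorem TX_prime_L1 {n j : ℕ} (hj : 1 ≤ j) (hjn : j < n) {μ : Measure (XSpace n)} (hμ : InvProb μ)
    {f : XSpace n → ℝ} (hf : RUC f) :
    Tendsto (fun p => ∫ x, |TX j p f x - ∫ y, f y ∂μ| ∂μ) primesF (𝓝 0) := by
  have := hμ.prob
  obtain ⟨C, hC⟩ := hf.bdd
  set c := ∫ y, f y ∂μ with hc
  have : primesF.IsCountablyGenerated := by unfold primesF; infer_instance
  have h := tendsto_integral_filter_of_dominated_convergence (μ := μ) (l := primesF)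
    (F := fun p x => |TX j p f x - c|) (f := fun _ => 0) (fun _ => C + |c|) ?_ ?_ (integrable_const _) ?_
  · simpa using h
  · filter_upwards [primesF_prime] with p hp
    exact ((hf.TX (j := j) hp.one_le (by omega) hjn.le).sub (RUC.const c)).abs.measurable.aestronglyMeasurable
  · filter_upwards [primesF_prime] with p hp
    refine Eventually.of_forall fun x => ?_
    rw [Real.norm_eq_abs, abs_abs]
    refine (abs_sub _ _).trans ?_
    gcongr
    unfold TX TG
    exact abs_avg_le.trans (avg_le_const (csF_nonempty hp.one_le hjn.le) fun H _ => hC _)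
  · refine Eventually.of_forall fun x => ?_
    obtain ⟨g, rfl⟩ := mkX_surj x
    have h1 := ((TG_prime hj hjn hμ hf g).sub_const c).abs
    rw [← hc, sub_self, abs_zero] at h1
    refine h1.congr' ?_
    filter_upwards [primesF_prime] with p hp
    rw [TX_mkX j hp.one_le (by omega)]

/-- The Hecke averages preserve integrals. -/
theorem integral_TX {n j : ℕ} (hj : 1 ≤ j) (hjn : j < n) {μ : Measure (XSpace n)} (hμ : InvProb μ)
    {f : XSpace n → ℝ} (hf : RUC f) {M : ℕ} (hM : 1 ≤ M) : ∫ x, TX j M f x ∂μ = ∫ x, f x ∂μ := by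
  have hn : 1 ≤ n := by omega
  have := primesF_neBot
  have h1 := TG_prime_one hj hjn hμ (hf.TX (j := j) hM hn hjn.le)
  have h2 : Tendsto (fun p => TG j M (TX j p f) 1) primesF (𝓝 (∫ x, f x ∂μ)) := by
    unfold TG avg
    have e : ∫ x, f x ∂μ = ((csF M n j).card : ℝ)⁻¹ * ∑ H ∈ csF M n j, ∫ x, f x ∂μ := by
      exact (avg_const (csF_nonempty hM hjn.le) _).symm
    rw [e]
    refine Tendsto.const_mul _ (tendsto_finsetSum _ fun H _ => ?_)
    refine (TG_prime hj hjn hμ hf (gM (_root_.hM M j H) * 1)).congr' ?_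
    filter_upwards [primesF_prime] with p hp
    rw [TX_mkX j hp.one_le hn]
  refine tendsto_nhds_unique h1 (h2.congr' ?_)
  filter_upwards [primesF_prime, primesF_gt M] with p hp hpM
  have hco : Nat.Coprime p M := (Nat.Prime.coprime_iff_not_dvd hp).2 fun hd => by
    have := Nat.le_of_dvd hM hd; omega
  rw [← TG_mul_coprime hn hM hp.one_le hco.symm, ← TG_mul_coprime hn hp.one_le hM hco, mul_comm]

/-! ### Part 13: equidistribution along square-free integers -/

lemma exists_large_prime_factor (P : ℕ) : ∀ᶠ N in (atTop : Filter ℕ), Squarefree N →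
    ∃ p, p.Prime ∧ P ≤ p ∧ p ∣ N := by
  filter_upwards [eventually_gt_atTop (∏ q ∈ (Finset.range P).filter Nat.Prime, q)] with N hN hsq
  by_contra! hcon
  have h1 : N.primeFactors ⊆ (Finset.range P).filter Nat.Prime := by
    intro p hp
    have hpp := Nat.prime_of_mem_primeFactors hp
    refine Finset.mem_filter.2 ⟨Finset.mem_range.2 ?_, hpp⟩
    by_contra hlt
    exact hcon p hpp (not_lt.1 hlt) (Nat.dvd_of_mem_primeFactors hp)
  have h2 := Finset.prod_le_prod_of_subset_of_one_le' (f := fun q : ℕ => q) h1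
    (fun q hq _ => (Finset.mem_filter.1 hq).2.one_le)
  rw [Nat.prod_primeFactors_of_squarefree hsq] at h2
  omega

theorem TG_squarefree {n j : ℕ} (hj : 1 ≤ j) (hjn : j < n) {μ : Measure (XSpace n)} (hμ : InvProb μ)
    {f : XSpace n → ℝ} (hf : RUC f) :
    Tendsto (fun N => TG j N f 1) (atTop ⊓ 𝓟 {N | Squarefree N}) (𝓝 (∫ x, f x ∂μ)) := by
  have := hμ.prob
  have hn : 1 ≤ n := by omega
  set c := ∫ x, f x ∂μ with hc
  rw [Metric.tendsto_nhds]
  intro ε hε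
  obtain ⟨W, hWc, hW1⟩ : ∃ W : Set (SLR n), IsCompact W ∧ W ∈ 𝓝 1 ∧
      ∀ w ∈ W, ∀ x, |f (rightTranslate n w x) - f x| ≤ ε / 4 := by
    obtain ⟨W, hW1, hW2, hW3⟩ := local_compact_nhds (hf.uc (ε / 4) (by positivity))
    exact ⟨W, hW3, hW1, fun w hw => hW2 hw⟩
  obtain ⟨hW1, hW2⟩ := hW1
  obtain ⟨C, hC, hkey⟩ := key_ineq hμ W hWc
  have hm0 : haarG n W ≠ 0 := (Measure.measure_pos_of_mem_nhds _ hW1).ne'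
  have hmt : haarG n W ≠ ⊤ := hWc.measure_lt_top.ne
  have hmpos : 0 < (haarG n W).toReal := ENNReal.toReal_pos hm0 hmt
  set δ := ε / 4 * (haarG n W).toReal / (C.toReal + 1) with hδ
  have hCn : 0 ≤ C.toReal := ENNReal.toReal_nonneg
  have hδpos : 0 < δ := by positivity
  have hδC : C.toReal * δ ≤ ε / 4 * (haarG n W).toReal := by
    rw [hδ, mul_div_assoc', div_le_iff₀ (by positivity)]
    nlinarith [mul_pos (show 0 < ε / 4 by positivity) hmpos]
  have h1 := (TX_prime_L1 hj hjn hμ hf).eventually (gt_mem_nhds hδpos)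
  rw [primesF, eventually_inf_principal, eventually_atTop] at h1
  obtain ⟨P, hP⟩ := h1
  rw [eventually_inf_principal]
  filter_upwards [exists_large_prime_factor P, eventually_ge_atTop 1] with N hN hN1 hsq
  obtain ⟨p, hp, hPp, M, rfl⟩ := hN hsq
  have hM : 1 ≤ M := Nat.one_le_iff_ne_zero.2 fun h => by subst h; simp at hN1
  have hco : Nat.Coprime p M := Nat.coprime_of_squarefree_mul hsq
  set F : XSpace n → ℝ := fun x => |TX j p f x - c| with hF
  have hFR : RUC F := ((hf.TX (j := j) hp.one_le hn hjn.le).sub (RUC.const c)).abs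
  have hTF := hFR.TX (j := j) hM hn hjn.le
  have hTF0 : ∀ x, 0 ≤ TX j M F x := fun x => by
    unfold TX TG
    exact avg_nonneg fun H _ => abs_nonneg _
  have hI : ∫ x, TX j M F x ∂μ < δ := by
    rw [integral_TX hj hjn hμ hFR hM]
    exact hP p hPp hp
  have hpt : ∀ w ∈ W, |TG j (p * M) f 1 - c| - ε / 4 ≤ TX j M F (mkX w) := by
    intro w hw
    have a1 : |TG j (p * M) f (1 * w) - TG j (p * M) f 1| ≤ ε / 4 := by
      rw [TG_mul]
      exact abs_avg_sub_avg_le (csF_nonempty hN1 hjn.le) fun H _ => hW2 w hw _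
    have a2 : |TG j (p * M) f w - c| ≤ TX j M F (mkX w) := by
      rw [TG_mul_coprime hn hp.one_le hM hco, TX_mkX j hM hn]
      unfold TG
      exact abs_avg_sub_const_le (csF_nonempty hM hjn.le) c
    rw [one_mul, abs_sub_comm] at a1
    have := abs_sub_le (TG j (p * M) f 1) (TG j (p * M) f w) c
    linarith
  have hhint : ENNReal.ofReal (|TG j (p * M) f 1 - c| - ε / 4) * haarG n W ≤ C * ENNReal.ofReal δ := by
    calc ENNReal.ofReal (|TG j (p * M) f 1 - c| - ε / 4) * haarG n W
        = ∫⁻ w in W, ENNReal.ofReal (|TG j (p * M) f 1 - c| - ε / 4) ∂(haarG n) := by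
          rw [setLIntegral_const]
      _ ≤ ∫⁻ w in W, ENNReal.ofReal (TX j M F (mkX w)) ∂(haarG n) := by
          refine setLIntegral_mono' hWc.measurableSet fun w hw => ?_
          exact ENNReal.ofReal_le_ofReal (hpt w hw)
      _ ≤ C * ∫⁻ x, ENNReal.ofReal (TX j M F x) ∂μ :=
          hkey (fun x => ENNReal.ofReal (TX j M F x)) hTF.measurable.ennreal_ofReal
      _ ≤ C * ENNReal.ofReal δ := by
          gcongr
          rw [← ofReal_integral_eq_lintegral_ofReal (hTF.integrable μ) (Eventually.of_forall hTF0)]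
          exact ENNReal.ofReal_le_ofReal hI.le
  have hfin : (|TG j (p * M) f 1 - c| - ε / 4) * (haarG n W).toReal ≤ C.toReal * δ := by
    have := ENNReal.toReal_mono (ENNReal.mul_ne_top hC ENNReal.ofReal_ne_top) hhint
    rw [ENNReal.toReal_mul, ENNReal.toReal_mul, ENNReal.toReal_ofReal hδpos.le] at this
    refine le_trans ?_ this
    exact mul_le_mul_of_nonneg_right (by rw [ENNReal.toReal_ofReal']; exact le_max_left _ _) hmpos.le
  have : (|TG j (p * M) f 1 - c| - ε / 4) ≤ ε / 4 :=
    le_of_mul_le_mul_right (hfin.trans hδC) hmpos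
  rw [Real.dist_eq]
  linarith

/-! ### Part 14: counting lattice points -/

/-- The set of short vectors. -/
def shortS {n : ℕ} (g : SLR n) (t : ℝ) : Set (Fin n → ℤ) :=
  {v | ‖(fun i => (v i : ℝ)) ᵥ* (g : Matrix (Fin n) (Fin n) ℝ)‖ ≤ t}

lemma norm_vecMul_le {n : ℕ} {M : Matrix (Fin n) (Fin n) ℝ} {B : ℝ} (hB : ∀ i k, |M i k| ≤ B)
    (w : Fin n → ℝ) : ‖w ᵥ* M‖ ≤ n * B * ‖w‖ := by
  rcases Nat.eq_zero_or_pos n with h0 | h0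
  · subst h0
    simp [Subsingleton.elim (w ᵥ* M) 0]
  have hB0 : 0 ≤ B := (abs_nonneg _).trans (hB ⟨0, h0⟩ ⟨0, h0⟩)
  refine (pi_norm_le_iff_of_nonneg (by positivity)).2 fun k => ?_
  calc ‖(w ᵥ* M) k‖ = |∑ i, w i * M i k| := rfl
    _ ≤ ∑ i, |w i * M i k| := Finset.abs_sum_le_sum_abs _ _
    _ ≤ ∑ i : Fin n, ‖w‖ * B := by
        refine Finset.sum_le_sum fun i _ => ?_
        rw [abs_mul]
        exact mul_le_mul (norm_le_pi_norm w i) (hB i k) (abs_nonneg _) (norm_nonneg _)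
    _ = n * B * ‖w‖ := by simp; ring

lemma finite_int_ball (n : ℕ) (R : ℝ) : {v : Fin n → ℤ | ‖(fun i => (v i : ℝ))‖ ≤ R}.Finite := by
  refine (Set.finite_Icc (fun _ : Fin n => -⌈R⌉) (fun _ => ⌈R⌉)).subset fun v hv => ?_
  have hv : ‖(fun i => (v i : ℝ))‖ ≤ R := hv
  have h : ∀ i, |(v i : ℝ)| ≤ ⌈R⌉ := fun i =>
    ((norm_le_pi_norm (fun i => (v i : ℝ)) i).trans hv).trans (Int.le_ceil R)
  constructor
  · intro i
    have := (abs_le.1 (h i)).1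
    exact_mod_cast this
  · intro i
    have := (abs_le.1 (h i)).2
    exact_mod_cast this

lemma slr_mul_inv_coe {n : ℕ} (g : SLR n) :
    (g : Matrix (Fin n) (Fin n) ℝ) * ((g⁻¹ : SLR n) : Matrix (Fin n) (Fin n) ℝ) = 1 := by
  rw [← slr_coe_mul, mul_inv_cancel, slr_coe_one]

lemma finite_shortS {n : ℕ} (g : SLR n) (t : ℝ) : (shortS g t).Finite := by
  obtain ⟨B, hB⟩ : ∃ B : ℝ, ∀ i k, |((g⁻¹ : SLR n) : Matrix (Fin n) (Fin n) ℝ) i k| ≤ B := by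
    refine ⟨∑ i, ∑ k, |((g⁻¹ : SLR n) : Matrix (Fin n) (Fin n) ℝ) i k|, fun i k => ?_⟩
    refine le_trans ?_ (Finset.single_le_sum (fun i _ => Finset.sum_nonneg fun k _ => abs_nonneg _) (Finset.mem_univ i))
    exact Finset.single_le_sum (f := fun k => |((g⁻¹ : SLR n) : Matrix (Fin n) (Fin n) ℝ) i k|)
      (fun k _ => abs_nonneg _) (Finset.mem_univ k)
  refine (finite_int_ball n (n * |B| * t)).subset fun v hv => ?_
  have hv : ‖(fun i => (v i : ℝ)) ᵥ* (g : Matrix (Fin n) (Fin n) ℝ)‖ ≤ t := hv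
  have h1 := norm_vecMul_le (fun i k => (hB i k).trans (le_abs_self B))
    ((fun i => (v i : ℝ)) ᵥ* (g : Matrix (Fin n) (Fin n) ℝ))
  rw [Matrix.vecMul_vecMul, slr_mul_inv_coe, Matrix.vecMul_one] at h1
  exact h1.trans (by gcongr)

/-- The number of short vectors. -/
def cnt {n : ℕ} (g : SLR n) (t : ℝ) : ℕ := (shortS g t).ncard

lemma cnt_mono {n : ℕ} (g : SLR n) {s t : ℝ} (h : s ≤ t) : cnt g s ≤ cnt g t :=
  Set.ncard_le_ncard (fun v hv => le_trans (show _ ≤ s from hv) h) (finite_shortS g t)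

lemma int_vecMul_cast {n : ℕ} (v : Fin n → ℤ) (M : Matrix (Fin n) (Fin n) ℤ) :
    (fun i => ((v ᵥ* M) i : ℝ)) = (fun i => (v i : ℝ)) ᵥ* M.map (Int.cast : ℤ → ℝ) := by
  ext i
  simp [Matrix.vecMul, dotProduct]

lemma cnt_gamma_le {n : ℕ} {γ : SLR n} (hγ : γ ∈ Gamma n) (g : SLR n) (t : ℝ) : cnt (γ * g) t ≤ cnt g t := by
  obtain ⟨Q, rfl⟩ := hγ
  have hQ : Function.Injective (fun v : Fin n → ℤ => v ᵥ* (Q : Matrix (Fin n) (Fin n) ℤ)) := by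
    intro v w h
    have := congrArg (fun x => x ᵥ* (Q : Matrix (Fin n) (Fin n) ℤ).adjugate) h
    simpa [Matrix.vecMul_vecMul, Matrix.mul_adjugate] using this
  refine Set.ncard_le_ncard_of_injOn (fun v : Fin n → ℤ => v ᵥ* (Q : Matrix (Fin n) (Fin n) ℤ)) ?_
    hQ.injOn (finite_shortS g t)
  intro v hv
  have hv : ‖(fun i => (v i : ℝ)) ᵥ* ((Matrix.SpecialLinearGroup.map (Int.castRingHom ℝ) Q * g : SLR n) :
    Matrix (Fin n) (Fin n) ℝ)‖ ≤ t := hv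
  rw [slr_coe_mul, ← Matrix.vecMul_vecMul] at hv
  show ‖(fun i => ((v ᵥ* (Q : Matrix (Fin n) (Fin n) ℤ)) i : ℝ)) ᵥ* (g : Matrix (Fin n) (Fin n) ℝ)‖ ≤ t
  rw [int_vecMul_cast]
  exact hv

lemma cnt_gamma {n : ℕ} {γ : SLR n} (hγ : γ ∈ Gamma n) (g : SLR n) (t : ℝ) : cnt (γ * g) t = cnt g t := by
  refine le_antisymm (cnt_gamma_le hγ g t) ?_
  have := cnt_gamma_le (inv_mem hγ) (γ * g) t
  rwa [inv_mul_cancel_left] at this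

/-- The number of short vectors as a function on `X`. -/
def cX {n : ℕ} (t : ℝ) (x : XSpace n) : ℕ := cnt (mkX_surj x).choose t

lemma cX_mkX {n : ℕ} (t : ℝ) (g : SLR n) : cX t (mkX g) = cnt g t := by
  unfold cX
  have h := (mkX_surj (mkX g)).choose_spec
  set g' := (mkX_surj (mkX g)).choose
  rw [mkX_eq_iff] at h
  rw [← cnt_gamma h g' t]
  congr 1
  group

lemma cX_mono {n : ℕ} (x : XSpace n) {s t : ℝ} (h : s ≤ t) : cX s x ≤ cX t x := by
  obtain ⟨g, rfl⟩ := mkX_surj x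
  rw [cX_mkX, cX_mkX]; exact cnt_mono g h

lemma mem_Omega {n : ℕ} (D : ℝ) (r : ℕ) (x : XSpace n) : x ∈ OmegaTilde n D r ↔ cX D x = r := by
  constructor
  · rintro ⟨g, rfl, h⟩
    rw [← h]; exact cX_mkX D g
  · intro h
    obtain ⟨g, rfl⟩ := mkX_surj x
    exact ⟨g, rfl, by rw [← h, cX_mkX]; rfl⟩

/-- Expansion bound. -/
def Kb {n : ℕ} (η : ℝ) (h : SLR n) : Prop :=
  ∀ w : Fin n → ℝ, ‖w ᵥ* (h : Matrix (Fin n) (Fin n) ℝ)‖ ≤ (1 + η) * ‖w‖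

lemma Kb_nhds {n : ℕ} {η : ℝ} (hη : 0 < η) : ∀ᶠ h in 𝓝 (1 : SLR n), Kb η h ∧ Kb η h⁻¹ := by
  have h1 : ∀ᶠ h in 𝓝 (1 : SLR n), Kb η h := by
    have hδ : 0 < η / (n + 1) := by positivity
    have h2 : ∀ i k : Fin n, ∀ᶠ h : SLR n in 𝓝 (1 : SLR n),
        |(h : Matrix (Fin n) (Fin n) ℝ) i k - (1 : Matrix (Fin n) (Fin n) ℝ) i k| ≤ η / (n + 1) := by
      intro i k
      have hc : Continuous fun h : SLR n => |(h : Matrix (Fin n) (Fin n) ℝ) i k - (1 : Matrix (Fin n) (Fin n) ℝ) i k| :=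
        (((slr_continuous_coe n).matrix_elem i k).sub continuous_const).abs
      have := hc.tendsto 1
      simp only [slr_coe_one, sub_self, abs_zero] at this
      exact (this.eventually (gt_mem_nhds hδ)).mono fun h hh => hh.le
    filter_upwards [eventually_all.2 fun i => eventually_all.2 (h2 i)] with h hh w
    have e : (h : Matrix (Fin n) (Fin n) ℝ) = 1 + ((h : Matrix (Fin n) (Fin n) ℝ) - 1) := by abel
    rw [e, Matrix.vecMul_add, Matrix.vecMul_one]
    refine (norm_add_le _ _).trans ?_
    have := norm_vecMul_le (M := (h : Matrix (Fin n) (Fin n) ℝ) - 1) (B := η / (n + 1)) (fun i k => hh i k) w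
    have h3 : n * (η / (n + 1)) ≤ η := by
      rw [mul_div_assoc', div_le_iff₀ (by positivity)]; nlinarith
    nlinarith [norm_nonneg w, mul_le_mul_of_nonneg_right h3 (norm_nonneg w)]
  have h3 : Tendsto (fun h : SLR n => h⁻¹) (𝓝 1) (𝓝 1) := by
    have : Continuous fun h : SLR n => h⁻¹ := continuous_inv
    simpa using this.tendsto 1
  exact h1.and (h3.eventually h1)

lemma shortS_Kb {n : ℕ} {η : ℝ} (hη : 0 < η) {h : SLR n} (hh : Kb η h) (g : SLR n) {t : ℝ} :
    shortS g t ⊆ shortS (g * h) ((1 + η) * t) := by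
  intro v hv
  have hv : ‖(fun i => (v i : ℝ)) ᵥ* (g : Matrix (Fin n) (Fin n) ℝ)‖ ≤ t := hv
  show ‖(fun i => (v i : ℝ)) ᵥ* ((g * h : SLR n) : Matrix (Fin n) (Fin n) ℝ)‖ ≤ _
  rw [slr_coe_mul, ← Matrix.vecMul_vecMul]
  exact (hh _).trans (by gcongr)

lemma cX_Kb {n : ℕ} {η : ℝ} (hη : 0 < η) {h : SLR n} (hh : Kb η h) (x : XSpace n) (t : ℝ) :
    cX t x ≤ cX ((1 + η) * t) (rightTranslate n h x) := by
  obtain ⟨g, rfl⟩ := mkX_surj x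
  rw [rightTranslate_mkX, cX_mkX, cX_mkX]
  exact Set.ncard_le_ncard (shortS_Kb hη hh g) (finite_shortS _ _)

/-- Right-continuity of the count. -/
lemma cX_right {n : ℕ} (x : XSpace n) (t : ℝ) : ∃ δ > 0, ∀ s, s < t + δ → cX s x ≤ cX t x := by
  obtain ⟨g, rfl⟩ := mkX_surj x
  set T := shortS g (t + 1) \ shortS g t with hT
  have hfin : T.Finite := (finite_shortS g (t + 1)).subset Set.sdiff_subset
  have hev : ∀ᶠ δ in 𝓝[>] (0 : ℝ), ∀ v ∈ T,
      t + δ < ‖(fun i => (v i : ℝ)) ᵥ* (g : Matrix (Fin n) (Fin n) ℝ)‖ := by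
    rw [eventually_all_finite hfin]
    intro v hv
    have h1 : t < ‖(fun i => (v i : ℝ)) ᵥ* (g : Matrix (Fin n) (Fin n) ℝ)‖ := not_le.1 hv.2
    have h2 : Tendsto (fun δ : ℝ => t + δ) (𝓝[>] 0) (𝓝 t) := by
      have : Continuous fun δ : ℝ => t + δ := by fun_prop
      have := this.tendsto 0
      rw [add_zero] at this
      exact this.mono_left nhdsWithin_le_nhds
    exact h2.eventually (gt_mem_nhds h1)
  have h3 : ∀ᶠ δ in 𝓝[>] (0 : ℝ), δ < 1 := (gt_mem_nhds one_pos).filter_mono nhdsWithin_le_nhds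
  obtain ⟨δ, ⟨hδ1, hδ2⟩, hδ3⟩ := ((hev.and h3).and self_mem_nhdsWithin).exists
  refine ⟨δ, hδ3, fun s hs => ?_⟩
  rw [cX_mkX, cX_mkX]
  refine Set.ncard_le_ncard (fun v hv => ?_) (finite_shortS g t)
  by_contra hcon
  have hv : ‖(fun i => (v i : ℝ)) ᵥ* (g : Matrix (Fin n) (Fin n) ℝ)‖ ≤ s := hv
  have := hδ1 v ⟨show _ ≤ t + 1 by linarith, hcon⟩
  linarith

/-- The truncated `r`-th minimum. -/
def rh {n : ℕ} (r : ℕ) (b : ℝ) (x : XSpace n) : ℝ := sInf (insert b {t | 0 ≤ t ∧ r ≤ cX t x})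

lemma rh_bdd {n : ℕ} (r : ℕ) {b : ℝ} (hb : 0 ≤ b) (x : XSpace n) :
    BddBelow (insert b {t | 0 ≤ t ∧ r ≤ cX t x}) :=
  ⟨0, by rintro t (rfl | ht); exacts [hb, ht.1]⟩

lemma rh_le {n : ℕ} (r : ℕ) {b : ℝ} (hb : 0 ≤ b) (x : XSpace n) : rh r b x ≤ b :=
  csInf_le (rh_bdd r hb x) (Set.mem_insert _ _)

lemma rh_le_of {n : ℕ} {r : ℕ} {b : ℝ} (hb : 0 ≤ b) {x : XSpace n} {t : ℝ} (ht : 0 ≤ t) (h : r ≤ cX t x) :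
    rh r b x ≤ t :=
  csInf_le (rh_bdd r hb x) (Set.mem_insert_of_mem _ ⟨ht, h⟩)

lemma exists_of_rh_lt {n : ℕ} {r : ℕ} {b : ℝ} {x : XSpace n} (h : rh r b x < b) :
    ∃ t, 0 ≤ t ∧ t < b ∧ r ≤ cX t x := by
  obtain ⟨t, ht, htb⟩ := exists_lt_of_csInf_lt (Set.insert_nonempty _ _) h
  rcases ht with rfl | ht
  · exact absurd htb (lt_irrefl _)
  · exact ⟨t, ht.1, htb, ht.2⟩

lemma rh_Kb {n : ℕ} {r : ℕ} {b : ℝ} (hb : 0 ≤ b) {η : ℝ} (hη : 0 < η) {h : SLR n} (hh : Kb η h) (x : XSpace n) :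
    rh r b (rightTranslate n h x) ≤ rh r b x + η * b := by
  have h1 : ∀ t ∈ insert b {t | 0 ≤ t ∧ r ≤ cX t x}, rh r b (rightTranslate n h x) / (1 + η) ≤ t := by
    rintro t (rfl | ht)
    · rw [div_le_iff₀ (by positivity)]
      refine (rh_le r hb _).trans ?_
      nlinarith
    · rw [div_le_iff₀ (by positivity), mul_comm]
      exact rh_le_of hb (mul_nonneg (by positivity) ht.1) (ht.2.trans (cX_Kb hη hh x t))
  have h2 := le_csInf (Set.insert_nonempty _ _) h1
  rw [div_le_iff₀ (by positivity)] at h2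
  have h3 := rh_le r hb x
  have h4 : rh r b x * (1 + η) ≤ rh r b x + η * b := by nlinarith
  exact h2.trans h4

/-- The cutoff function. -/
def chi {n : ℕ} (r : ℕ) (a b : ℝ) (x : XSpace n) : ℝ := (b - max (rh r b x) a) / (b - a)

lemma chi_RUC {n : ℕ} (r : ℕ) {a b : ℝ} (hb : 0 < b) (hab : a < b) : RUC (chi r a b : XSpace n → ℝ) := by
  have hba : 0 < b - a := sub_pos.2 hab
  constructor
  · refine ⟨1, fun x => ?_⟩
    unfold chi
    have h1 : max (rh r b x) a ≤ b := max_le (rh_le r hb.le x) hab.le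
    have h2 : a ≤ max (rh r b x) a := le_max_right _ _
    rw [abs_of_nonneg (div_nonneg (by linarith) hba.le), div_le_one hba]
    linarith
  · intro ε hε
    filter_upwards [Kb_nhds (n := n) (η := ε * (b - a) / b) (by positivity)] with h ⟨hh1, hh2⟩ x
    have e : ε * (b - a) / b * b = ε * (b - a) := by field_simp
    have h1 := rh_Kb (r := r) hb.le (by positivity) hh1 x
    have h2 := rh_Kb (r := r) hb.le (by positivity) hh2 (rightTranslate n h x)
    rw [rightTranslate_mul, mul_inv_cancel, rightTranslate_one] at h2
    rw [e] at h1 h2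
    unfold chi
    rw [← sub_div, abs_div, abs_of_pos hba, div_le_iff₀ hba]
    have h3 := abs_max_sub_max_le_abs (rh r b x) (rh r b (rightTranslate n h x)) a
    have h4 : b - max (rh r b (rightTranslate n h x)) a - (b - max (rh r b x) a) =
      max (rh r b x) a - max (rh r b (rightTranslate n h x)) a := by ring
    rw [h4]
    exact h3.trans (abs_le.2 ⟨by linarith, by linarith⟩)

lemma chi_nonneg {n : ℕ} (r : ℕ) {a b : ℝ} (hb : 0 < b) (hab : a < b) (x : XSpace n) : 0 ≤ chi r a b x := by
  have h1 : max (rh r b x) a ≤ b := max_le (rh_le r hb.le x) hab.le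
  exact div_nonneg (by linarith) (by linarith)

lemma chi_le_one {n : ℕ} (r : ℕ) {a b : ℝ} (hab : a < b) (x : XSpace n) : chi r a b x ≤ 1 := by
  have h2 : a ≤ max (rh r b x) a := le_max_right _ _
  unfold chi
  rw [div_le_one (by linarith)]; linarith

lemma chi_eq_one {n : ℕ} {r : ℕ} {a b t : ℝ} (hb : 0 < b) (hab : a < b) {x : XSpace n} (ht0 : 0 ≤ t) (hta : t ≤ a)
    (h : r ≤ cX t x) : chi r a b x = 1 := by
  have h2 : max (rh r b x) a = a := max_eq_right ((rh_le_of hb.le ht0 h).trans hta)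
  unfold chi
  rw [h2, div_self (by linarith)]

lemma chi_eq_zero {n : ℕ} {r : ℕ} {a b : ℝ} (hb : 0 < b) (hab : a < b) {x : XSpace n}
    (h : ∀ t, 0 ≤ t → t < b → cX t x < r) : chi r a b x = 0 := by
  have h1 : rh r b x = b := by
    refine le_antisymm (rh_le r hb.le x) (not_lt.1 fun hlt => ?_)
    obtain ⟨t, ht0, htb, htr⟩ := exists_of_rh_lt hlt
    exact absurd htr (not_le.2 (h t ht0 htb))
  unfold chi
  rw [h1, max_eq_left hab.le, sub_self, zero_div]

/-! ### Part 15: the boundary is null -/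

lemma exists_bd_norm_eq {n : ℕ} {g : SLR n} {D : ℝ} (hD : 0 < D) {r : ℕ} (h1 : r ≤ cnt g D)
    (h2 : ∀ t, 0 ≤ t → t < D → cnt g t < r) :
    ∃ v : Fin n → ℤ, ‖(fun i => (v i : ℝ)) ᵥ* (g : Matrix (Fin n) (Fin n) ℝ)‖ = D := by
  by_contra hcon
  push Not at hcon
  have hev : ∀ᶠ t in 𝓝[<] D, ∀ v ∈ shortS g D,
      ‖(fun i => (v i : ℝ)) ᵥ* (g : Matrix (Fin n) (Fin n) ℝ)‖ < t := by
    rw [eventually_all_finite (finite_shortS g D)]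
    intro v hv
    exact (lt_mem_nhds (lt_of_le_of_ne hv (hcon v))).filter_mono nhdsWithin_le_nhds
  have h0 : ∀ᶠ t in 𝓝[<] D, 0 < t := (lt_mem_nhds hD).filter_mono nhdsWithin_le_nhds
  obtain ⟨t, ⟨ht1, ht2⟩, ht3⟩ := ((hev.and h0).and self_mem_nhdsWithin).exists
  have h3 : cnt g D ≤ cnt g t :=
    Set.ncard_le_ncard (fun v hv => (ht1 v hv).le) (finite_shortS g t)
  have h4 := h2 t ht2.le ht3
  omega

/-- Diagonal exponents. -/
def expo (n : ℕ) (i : Fin n) : ℝ := 1 - if (i : ℕ) = 0 then (n : ℝ) else 0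

lemma expo_sum {n : ℕ} (hn : 1 ≤ n) : ∑ i : Fin n, expo n i = 0 := by
  have h : ∑ i : Fin n, (if (i : ℕ) = 0 then (n : ℝ) else 0) = n := by
    rw [Finset.sum_eq_single (⟨0, hn⟩ : Fin n)]
    · simp
    · intro b _ hb
      rw [if_neg]
      intro h
      exact hb (Fin.ext h)
    · simp
  simp only [expo, Finset.sum_sub_distrib, h]
  simp

lemma expo_ne {n : ℕ} (hn : 2 ≤ n) (i : Fin n) : expo n i ≠ 0 := by
  have : (2 : ℝ) ≤ n := by exact_mod_cast hn
  unfold expo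
  split_ifs <;> intro h <;> linarith

lemma expo_ge {n : ℕ} (i : Fin n) : -(n : ℝ) ≤ expo n i := by
  have : (0 : ℝ) ≤ n := by positivity
  unfold expo
  split_ifs <;> linarith

lemma hS_det {n : ℕ} (hn : 1 ≤ n) (s : ℝ) :
    (Matrix.diagonal fun i : Fin n => Real.exp (expo n i * s)).det = 1 := by
  rw [Matrix.det_diagonal, ← Real.exp_sum, ← Finset.sum_mul, expo_sum hn, zero_mul, Real.exp_zero]

/-- Diagonal flow. -/
def hS {n : ℕ} (hn : 1 ≤ n) (s : ℝ) : SLR n := mkSL _ (hS_det hn s)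

lemma hS_apply {n : ℕ} (hn : 1 ≤ n) (s : ℝ) (g : SLR n) (w : Fin n → ℝ) (i : Fin n) :
    (w ᵥ* ((g * hS hn s : SLR n) : Matrix (Fin n) (Fin n) ℝ)) i =
      (w ᵥ* (g : Matrix (Fin n) (Fin n) ℝ)) i * Real.exp (expo n i * s) := by
  rw [slr_coe_mul, ← Matrix.vecMul_vecMul]
  unfold hS
  rw [mkSL_coe, Matrix.vecMul_diagonal]

lemma finite_hits {n : ℕ} (hn : 2 ≤ n) (hn1 : 1 ≤ n) (g : SLR n) {D : ℝ} (hD : 0 < D) :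
    {k : ℕ | ∃ v : Fin n → ℤ, ‖(fun i => (v i : ℝ)) ᵥ*
      ((g * hS hn1 (1 / ((k : ℝ) + 1)) : SLR n) : Matrix (Fin n) (Fin n) ℝ)‖ = D}.Finite := by
  have hfin : (⋃ v ∈ shortS g (D * Real.exp n), ⋃ i : Fin n, {k : ℕ |
      |((fun i => (v i : ℝ)) ᵥ* (g : Matrix (Fin n) (Fin n) ℝ)) i| *
        Real.exp (expo n i * (1 / ((k : ℝ) + 1))) = D}).Finite := by
    refine (finite_shortS g _).biUnion fun v _ => Set.finite_iUnion fun i => ?_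
    refine Set.Subsingleton.finite fun k hk l hl => ?_
    have hk : |((fun i => (v i : ℝ)) ᵥ* (g : Matrix (Fin n) (Fin n) ℝ)) i| *
        Real.exp (expo n i * (1 / ((k : ℝ) + 1))) = D := hk
    have hl : |((fun i => (v i : ℝ)) ᵥ* (g : Matrix (Fin n) (Fin n) ℝ)) i| *
        Real.exp (expo n i * (1 / ((l : ℝ) + 1))) = D := hl
    have hne : |((fun i => (v i : ℝ)) ᵥ* (g : Matrix (Fin n) (Fin n) ℝ)) i| ≠ 0 := by
      intro h0
      rw [h0, zero_mul] at hk
      exact hD.ne hk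
    have h1 := Real.exp_injective (mul_left_cancel₀ hne (hk.trans hl.symm))
    have h2 := mul_left_cancel₀ (expo_ne hn i) h1
    have h3 : (k : ℝ) + 1 = l + 1 := by
      have := congrArg (fun x => x⁻¹) h2
      simpa using this
    exact_mod_cast add_right_cancel h3
  refine hfin.subset ?_
  rintro k ⟨v, hv⟩
  have hs0 : (0 : ℝ) ≤ 1 / ((k : ℝ) + 1) := by positivity
  have hs1 : 1 / ((k : ℝ) + 1) ≤ (1 : ℝ) := by
    rw [div_le_one (by positivity)]
    have : (0 : ℝ) ≤ k := by positivity
    linarith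
  have hco : ∀ i, ‖((fun i => (v i : ℝ)) ᵥ*
      ((g * hS hn1 (1 / ((k : ℝ) + 1)) : SLR n) : Matrix (Fin n) (Fin n) ℝ)) i‖ =
      |((fun i => (v i : ℝ)) ᵥ* (g : Matrix (Fin n) (Fin n) ℝ)) i| *
        Real.exp (expo n i * (1 / ((k : ℝ) + 1))) := by
    intro i
    rw [hS_apply, Real.norm_eq_abs, abs_mul, Real.abs_exp]
  have hle : ∀ i, |((fun i => (v i : ℝ)) ᵥ* (g : Matrix (Fin n) (Fin n) ℝ)) i| *
        Real.exp (expo n i * (1 / ((k : ℝ) + 1))) ≤ D := by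
    intro i
    rw [← hco i, ← hv]
    exact norm_le_pi_norm _ i
  obtain ⟨i, hi⟩ : ∃ i, D ≤ |((fun i => (v i : ℝ)) ᵥ* (g : Matrix (Fin n) (Fin n) ℝ)) i| *
        Real.exp (expo n i * (1 / ((k : ℝ) + 1))) := by
    by_contra hcon
    push Not at hcon
    have := (pi_norm_lt_iff hD).2 fun i => (hco i).trans_lt (hcon i)
    exact absurd hv this.ne
  refine Set.mem_biUnion (x := v) ?_ (Set.mem_iUnion.2 ⟨i, le_antisymm (hle i) hi⟩)
  refine (pi_norm_le_iff_of_nonneg (by positivity)).2 fun i => ?_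
  have h1 : Real.exp (-(n : ℝ)) ≤ Real.exp (expo n i * (1 / ((k : ℝ) + 1))) := by
    apply Real.exp_le_exp.2
    have h0 : (0 : ℝ) ≤ n := by positivity
    nlinarith [expo_ge i]
  have h2 := (mul_le_mul_of_nonneg_left h1 (abs_nonneg
    (((fun i => (v i : ℝ)) ᵥ* (g : Matrix (Fin n) (Fin n) ℝ)) i))).trans (hle i)
  rw [Real.exp_neg, ← div_eq_mul_inv, div_le_iff₀ (Real.exp_pos _)] at h2
  exact h2

lemma null_of_finite_hits {n : ℕ} {μ : Measure (XSpace n)} (hμ : InvProb μ) {B : Set (XSpace n)}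
    (hB : MeasurableSet B) (h : ℕ → SLR n) (hfin : ∀ x, {k | rightTranslate n (h k) x ∈ B}.Finite) :
    μ B = 0 := by
  haveI := hμ.prob
  have hlim : Tendsto (fun k => ∫ x, B.indicator (fun _ => (1 : ℝ)) (rightTranslate n (h k) x) ∂μ) atTop
      (𝓝 (∫ _, (0 : ℝ) ∂μ)) := by
    refine tendsto_integral_of_dominated_convergence (fun _ => 1) ?_ (integrable_const _) ?_ ?_
    · intro k
      exact ((measurable_const.indicator hB).comp (measurable_rightTranslate (h k))).aestronglyMeasurable
    · intro k
      refine ae_of_all _ fun x => ?_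
      by_cases hx : rightTranslate n (h k) x ∈ B <;> simp [hx]
    · refine ae_of_all _ fun x => ?_
      refine tendsto_const_nhds.congr' ?_
      have h1 := (hfin x).eventually_cofinite_notMem
      rw [Nat.cofinite_eq_atTop] at h1
      filter_upwards [h1] with k hk
      have hk : rightTranslate n (h k) x ∉ B := hk
      simp [hk]
  have hc : ∀ k, ∫ x, B.indicator (fun _ => (1 : ℝ)) (rightTranslate n (h k) x) ∂μ = μ.real B := by
    intro k
    rw [← integral_map (measurable_rightTranslate (h k)).aemeasurable
      (measurable_const.indicator hB).aestronglyMeasurable, hμ.inv, integral_indicator_const _ hB]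
    simp
  simp only [hc, integral_zero] at hlim
  have := tendsto_nhds_unique hlim tendsto_const_nhds
  exact (measureReal_eq_zero_iff).1 this.symm

/-! ### Part 16: approximating indicator functions -/

/-- At least `r` short vectors. -/
def Aset (n : ℕ) (D : ℝ) (r : ℕ) : Set (XSpace n) := {x | r ≤ cX D x}

/-- At least `r` strictly short vectors. -/
def Lset (n : ℕ) (D : ℝ) (r : ℕ) : Set (XSpace n) := {x | ∃ t, 0 ≤ t ∧ t < D ∧ r ≤ cX t x}

lemma chi_up_tendsto {n : ℕ} (r : ℕ) {D : ℝ} (hD : 0 < D) (x : XSpace n) :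
    Tendsto (fun k : ℕ => chi r D (D + 1 / ((k : ℝ) + 1)) x) atTop
      (𝓝 ((Aset n D r).indicator (fun _ => (1 : ℝ)) x)) := by
  refine tendsto_const_nhds.congr' ?_
  by_cases hx : r ≤ cX D x
  · have hx' : x ∈ Aset n D r := hx
    refine Eventually.of_forall fun k => ?_
    have hk : (0 : ℝ) < 1 / ((k : ℝ) + 1) := by positivity
    simp only [Set.indicator_of_mem hx']
    exact (chi_eq_one (by linarith) (by linarith) hD.le le_rfl hx).symm
  · have hx' : x ∉ Aset n D r := hx
    obtain ⟨δ, hδ, hs⟩ := cX_right x D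
    filter_upwards [tendsto_one_div_add_atTop_nhds_zero_nat.eventually (gt_mem_nhds hδ)] with k hk
    have hk0 : (0 : ℝ) < 1 / ((k : ℝ) + 1) := by positivity
    rw [Set.indicator_of_notMem hx']
    refine (chi_eq_zero (by linarith) (by linarith) fun t _ ht => ?_).symm
    exact (hs t (by linarith)).trans_lt (not_le.1 hx)

lemma low_lt {D : ℝ} (hD : 0 < D) (k : ℕ) : D - D * (1 / ((k : ℝ) + 1)) < D := by
  have hk0 : (0 : ℝ) < 1 / ((k : ℝ) + 1) := by positivity
  nlinarith

lemma chi_low_tendsto {n : ℕ} (r : ℕ) {D : ℝ} (hD : 0 < D) (x : XSpace n) :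
    Tendsto (fun k : ℕ => chi r (D - D * (1 / ((k : ℝ) + 1))) D x) atTop
      (𝓝 ((Lset n D r).indicator (fun _ => (1 : ℝ)) x)) := by
  refine tendsto_const_nhds.congr' ?_
  by_cases hx : x ∈ Lset n D r
  · obtain ⟨t, ht0, htD, ht⟩ := id hx
    have hl : Tendsto (fun k : ℕ => D - D * (1 / ((k : ℝ) + 1))) atTop (𝓝 D) := by
      simpa using (tendsto_const_nhds (x := D)).sub
        ((tendsto_const_nhds (x := D)).mul (tendsto_one_div_add_atTop_nhds_zero_nat (𝕜 := ℝ)))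
    filter_upwards [hl.eventually (lt_mem_nhds htD)] with k hk
    rw [Set.indicator_of_mem hx]
    exact (chi_eq_one hD (low_lt hD k) ht0 hk.le ht).symm
  · refine Eventually.of_forall fun k => ?_
    simp only [Set.indicator_of_notMem hx]
    refine (chi_eq_zero hD (low_lt hD k) fun t ht0 ht => ?_).symm
    by_contra hcon
    exact hx ⟨t, ht0, ht, not_lt.1 hcon⟩

lemma up_lt {D : ℝ} (k : ℕ) : D < D + 1 / ((k : ℝ) + 1) := by
  have hk0 : (0 : ℝ) < 1 / ((k : ℝ) + 1) := by positivity
  linarith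

lemma measurableSet_of_indicator {α : Type*} [MeasurableSpace α] {A : Set α}
    (h : Measurable (A.indicator (fun _ => (1 : ℝ)))) : MeasurableSet A := by
  have : A = (A.indicator (fun _ => (1 : ℝ))) ⁻¹' {1} := by
    ext x
    by_cases hx : x ∈ A <;> simp [hx]
  rw [this]
  exact h (measurableSet_singleton 1)

lemma measurableSet_Aset {n : ℕ} (r : ℕ) {D : ℝ} (hD : 0 < D) : MeasurableSet (Aset n D r) := by
  refine measurableSet_of_indicator (measurable_of_tendsto_metrizable
    (f := fun (k : ℕ) x => chi r D (D + 1 / ((k : ℝ) + 1)) x) (fun k => ?_)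
    (tendsto_pi_nhds.2 (chi_up_tendsto r hD)))
  exact (chi_RUC r (hD.trans (up_lt k)) (up_lt k)).measurable

lemma measurableSet_Lset {n : ℕ} (r : ℕ) {D : ℝ} (hD : 0 < D) : MeasurableSet (Lset n D r) := by
  refine measurableSet_of_indicator (measurable_of_tendsto_metrizable
    (f := fun (k : ℕ) x => chi r (D - D * (1 / ((k : ℝ) + 1))) D x) (fun k => ?_)
    (tendsto_pi_nhds.2 (chi_low_tendsto r hD)))
  exact (chi_RUC r hD (low_lt hD k)).measurable

lemma Lset_subset {n : ℕ} (r : ℕ) (D : ℝ) : Lset n D r ⊆ Aset n D r := by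
  rintro x ⟨t, _, ht, h⟩
  exact h.trans (cX_mono x ht.le)

lemma null_diff {n : ℕ} (hn : 2 ≤ n) {μ : Measure (XSpace n)} (hμ : InvProb μ) (r : ℕ) {D : ℝ} (hD : 0 < D) :
    μ (Aset n D r \ Lset n D r) = 0 := by
  have hn1 : 1 ≤ n := by omega
  refine null_of_finite_hits hμ ((measurableSet_Aset r hD).diff (measurableSet_Lset r hD))
    (fun k : ℕ => hS hn1 (1 / ((k : ℝ) + 1))) fun x => ?_
  obtain ⟨g, rfl⟩ := mkX_surj x
  refine (finite_hits hn hn1 g hD).subset fun k hk => ?_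
  have hk : rightTranslate n (hS hn1 (1 / ((k : ℝ) + 1))) (mkX g) ∈ Aset n D r \ Lset n D r := hk
  rw [rightTranslate_mkX] at hk
  obtain ⟨h1, h2⟩ := hk
  have h1 : r ≤ cX D (mkX (g * hS hn1 (1 / ((k : ℝ) + 1)))) := h1
  rw [cX_mkX] at h1
  refine exists_bd_norm_eq hD h1 fun t ht0 ht => ?_
  by_contra hcon
  exact h2 ⟨t, ht0, ht, by rw [cX_mkX]; exact not_lt.1 hcon⟩

lemma integral_up {n : ℕ} {μ : Measure (XSpace n)} (hμ : InvProb μ) (r : ℕ) {D : ℝ} (hD : 0 < D) :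
    Tendsto (fun k : ℕ => ∫ x, chi r D (D + 1 / ((k : ℝ) + 1)) x ∂μ) atTop (𝓝 (μ.real (Aset n D r))) := by
  haveI := hμ.prob
  have e : ∫ x, (Aset n D r).indicator (fun _ => (1 : ℝ)) x ∂μ = μ.real (Aset n D r) := by
    rw [integral_indicator_const _ (measurableSet_Aset r hD)]; simp
  rw [← e]
  refine tendsto_integral_of_dominated_convergence (fun _ => 1) ?_ (integrable_const _) ?_ ?_
  · intro k
    exact (chi_RUC r (hD.trans (up_lt k)) (up_lt k)).measurable.aestronglyMeasurable
  · intro k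
    refine ae_of_all _ fun x => ?_
    rw [Real.norm_eq_abs, abs_of_nonneg (chi_nonneg r (hD.trans (up_lt k)) (up_lt k) x)]
    exact chi_le_one r (up_lt k) x
  · exact ae_of_all _ fun x => chi_up_tendsto r hD x

lemma integral_low {n : ℕ} (hn : 2 ≤ n) {μ : Measure (XSpace n)} (hμ : InvProb μ) (r : ℕ) {D : ℝ} (hD : 0 < D) :
    Tendsto (fun k : ℕ => ∫ x, chi r (D - D * (1 / ((k : ℝ) + 1))) D x ∂μ) atTop
      (𝓝 (μ.real (Aset n D r))) := by
  haveI := hμ.prob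
  have e : ∫ x, (Lset n D r).indicator (fun _ => (1 : ℝ)) x ∂μ = μ.real (Aset n D r) := by
    rw [integral_indicator_const _ (measurableSet_Lset r hD), smul_eq_mul, mul_one]
    refine measureReal_congr (Filter.EventuallyLE.antisymm (Lset_subset r D).eventuallyLE ?_)
    exact ae_le_set.2 (null_diff hn hμ r hD)
  rw [← e]
  refine tendsto_integral_of_dominated_convergence (fun _ => 1) ?_ (integrable_const _) ?_ ?_
  · intro k
    exact (chi_RUC r hD (low_lt hD k)).measurable.aestronglyMeasurable
  · intro k
    refine ae_of_all _ fun x => ?_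
    rw [Real.norm_eq_abs, abs_of_nonneg (chi_nonneg r hD (low_lt hD k) x)]
    exact chi_le_one r (low_lt hD k) x
  · exact ae_of_all _ fun x => chi_low_tendsto r hD x

lemma TG_mono {n j N : ℕ} {f f' : XSpace n → ℝ} (h : ∀ x, f x ≤ f' x) (g : SLR n) :
    TG j N f g ≤ TG j N f' g := avg_mono fun _ _ => h _

lemma TG_Aset {n j : ℕ} (hn : 2 ≤ n) (hj : 1 ≤ j) (hjn : j < n) {μ : Measure (XSpace n)} (hμ : InvProb μ)
    (r : ℕ) {D : ℝ} (hD : 0 < D) :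
    Tendsto (fun N => TG j N ((Aset n D r).indicator (fun _ => (1 : ℝ))) 1)
      (atTop ⊓ 𝓟 {N | Squarefree N}) (𝓝 (μ.real (Aset n D r))) := by
  refine tendsto_order.2 ⟨fun a ha => ?_, fun a ha => ?_⟩
  · obtain ⟨k, hk⟩ := ((integral_low hn hμ r hD).eventually (lt_mem_nhds ha)).exists
    have h1 := TG_squarefree hj hjn hμ (chi_RUC r hD (low_lt hD k))
    filter_upwards [h1.eventually (lt_mem_nhds hk)] with N hN
    refine hN.trans_le (TG_mono (fun x => ?_) 1)
    by_cases hx : x ∈ Aset n D r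
    · rw [Set.indicator_of_mem hx]
      exact chi_le_one r (low_lt hD k) x
    · rw [Set.indicator_of_notMem hx]
      refine (chi_eq_zero hD (low_lt hD k) fun t _ ht => ?_).le
      exact (cX_mono x ht.le).trans_lt (not_le.1 hx)
  · obtain ⟨k, hk⟩ := ((integral_up hμ r hD).eventually (gt_mem_nhds ha)).exists
    have h1 := TG_squarefree hj hjn hμ (chi_RUC r (hD.trans (up_lt k)) (up_lt k))
    filter_upwards [h1.eventually (gt_mem_nhds hk)] with N hN
    refine (TG_mono (fun x => ?_) 1).trans_lt hN
    by_cases hx : x ∈ Aset n D r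
    · rw [Set.indicator_of_mem hx]
      exact (chi_eq_one (hD.trans (up_lt k)) (up_lt k) hD.le le_rfl hx).ge
    · rw [Set.indicator_of_notMem hx]
      exact chi_nonneg r (hD.trans (up_lt k)) (up_lt k) x

lemma Omega_eq {n : ℕ} (D : ℝ) (r : ℕ) : OmegaTilde n D r = Aset n D r \ Aset n D (r + 1) := by
  ext x
  rw [mem_Omega]
  show _ ↔ r ≤ cX D x ∧ ¬ (r + 1 ≤ cX D x)
  omega

lemma TG_Omega {n j : ℕ} (hn : 2 ≤ n) (hj : 1 ≤ j) (hjn : j < n) {μ : Measure (XSpace n)} (hμ : InvProb μ)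
    (r : ℕ) {D : ℝ} (hD : 0 < D) :
    Tendsto (fun N => TG j N ((OmegaTilde n D r).indicator (fun _ => (1 : ℝ))) 1)
      (atTop ⊓ 𝓟 {N | Squarefree N}) (𝓝 (μ (OmegaTilde n D r)).toReal) := by
  haveI := hμ.prob
  have hsub : Aset n D (r + 1) ⊆ Aset n D r := fun x hx => (Nat.le_succ r).trans hx
  have h1 := (TG_Aset hn hj hjn hμ r hD).sub (TG_Aset hn hj hjn hμ (r + 1) hD)
  have e1 : (μ (OmegaTilde n D r)).toReal = μ.real (Aset n D r) - μ.real (Aset n D (r + 1)) := by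
    rw [Omega_eq, ← measureReal_sdiff hsub (measurableSet_Aset (r + 1) hD)]
    rfl
  rw [e1]
  refine h1.congr fun N => ?_
  unfold TG
  rw [← avg_sub]
  refine avg_congr fun H _ => ?_
  rw [Omega_eq]
  set y := mkX (gM (hM N j H) * 1)
  by_cases hy1 : y ∈ Aset n D (r + 1)
  · have hy0 := hsub hy1
    simp [hy0, hy1]
  · by_cases hy0 : y ∈ Aset n D r <;> simp [hy0, hy1]

/-! ### Part 17: identification of the ratio -/

lemma cnt_gM {N n j : ℕ} (hN : 1 ≤ N) {H : AddSubgroup (Fin n → ZMod N)}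
    {M : Matrix (Fin n) (Fin n) ℤ} (hM : IsLat N j H M) (D : ℝ) :
    cnt (gM M) D = Set.ncard {x : Fin n → ℤ |
            ‖(fun i => (x i : ℝ))‖ ≤ D * (N : ℝ) ^ ((j : ℝ) / (n : ℝ)) ∧
            (fun i => ((x i : ZMod N))) ∈ H} := by
  have hdet := hM.det_pos hN
  have hN0 : (0 : ℝ) < N := by exact_mod_cast hN
  have hinj : Function.Injective (fun v : Fin n → ℤ => v ᵥ* M) :=
    fun v w h => sub_eq_zero.1 (Matrix.eq_zero_of_vecMul_eq_zero hdet.ne'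
      (by rw [Matrix.sub_vecMul]; exact sub_eq_zero.2 h))
  have hpos : (0 : ℝ) < (N : ℝ) ^ ((j : ℝ) / (n : ℝ)) := Real.rpow_pos_of_pos hN0 _
  have hscale : ((M.det : ℤ) : ℝ) ^ (-(1 / (n : ℝ))) = ((N : ℝ) ^ ((j : ℝ) / (n : ℝ)))⁻¹ := by
    rw [hM.1]
    push_cast
    rw [Real.rpow_neg (by positivity), ← Real.rpow_natCast, ← Real.rpow_mul hN0.le]
    congr 2
    ring
  unfold cnt
  rw [← Set.ncard_image_of_injective _ hinj]
  congr 1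
  have key : ∀ v : Fin n → ℤ, v ∈ shortS (gM M) D ↔
      ‖(fun i => ((v ᵥ* M) i : ℝ))‖ ≤ D * (N : ℝ) ^ ((j : ℝ) / (n : ℝ)) := by
    intro v
    show ‖(fun i => (v i : ℝ)) ᵥ* (gM M : Matrix (Fin n) (Fin n) ℝ)‖ ≤ D ↔ _
    rw [gM_coe hdet, hscale, Matrix.vecMul_smul, norm_smul, ← int_vecMul_cast, norm_inv,
      Real.norm_of_nonneg hpos.le, inv_mul_le_iff₀ hpos, mul_comm D]
  ext x
  constructor
  · rintro ⟨v, hv, rfl⟩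
    exact ⟨(key v).1 hv, (hM.2 _).2 ⟨v, rfl⟩⟩
  · rintro ⟨h1, h2⟩
    obtain ⟨v, rfl⟩ := (hM.2 x).1 h2
    exact ⟨v, (key v).2 h1, rfl⟩

lemma ratio_eq {N n j : ℕ} (hN : 1 ≤ N) (hn : 1 ≤ n) (D : ℝ) (r : ℕ) :
    (Set.ncard {H ∈ congruenceSet N n j |
          Set.ncard {x : Fin n → ℤ |
            ‖(fun i => (x i : ℝ))‖ ≤ D * (N : ℝ) ^ ((j : ℝ) / (n : ℝ)) ∧
            (fun i => ((x i : ZMod N))) ∈ H} = r} : ℝ) /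
        (Set.ncard (congruenceSet N n j) : ℝ) =
      TG j N ((OmegaTilde n D r).indicator (fun _ => (1 : ℝ))) 1 := by
  classical
  have e1 : congruenceSet N n j = ↑(csF N n j) := by
    ext H
    exact (mem_csF hN).symm
  have e2 : {H ∈ congruenceSet N n j |
          Set.ncard {x : Fin n → ℤ |
            ‖(fun i => (x i : ℝ))‖ ≤ D * (N : ℝ) ^ ((j : ℝ) / (n : ℝ)) ∧
            (fun i => ((x i : ZMod N))) ∈ H} = r} =
      ↑((csF N n j).filter fun H => mkX (gM (hM N j H) * 1) ∈ OmegaTilde n D r) := by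
    ext H
    rw [Finset.coe_filter]
    show (H ∈ congruenceSet N n j ∧ _) ↔ (H ∈ csF N n j ∧ _)
    rw [mem_csF hN]
    refine and_congr_right fun hH => ?_
    rw [mul_one, mem_Omega, cX_mkX, cnt_gM hN (hM_spec hN hn hH)]
  rw [e2, Set.ncard_coe_finset, e1, Set.ncard_coe_finset]
  unfold TG avg
  rw [div_eq_inv_mul, Finset.card_filter]
  push_cast
  congr 1

end EquidistributionProof

open Filter in
/-- Let `n ≥ 2`, `1 ≤ j ≤ n−1`, `0 < D < 1`, `r ≥ 1`, and let `μ` be the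
right-invariant Borel probability measure on `X = SL_n(ℤ)\SL_n(ℝ)`. As `N → ∞` along
square-free integers, the proportion of `H ∈ H_{N,j}(n)` such that
`#{x ∈ ℤⁿ : ‖x‖∞ ≤ D·N^{j/n}, (x mod N) ∈ H} = r` tends to `c_{n,r} = μ(Ω̃_{n,r})`. -/
theorem prob_system_has_r_short_solutions_squarefree (n j r : ℕ)
    (hn : 2 ≤ n) (hj1 : 1 ≤ j) (hj : j ≤ n - 1) (hr : 1 ≤ r)
    (D : ℝ) (hD0 : 0 < D) (hD1 : D < 1)
    (μ : Measure (XSpace n)) (hprob : IsProbabilityMeasure μ)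
    (hinv : ∀ g, Measure.map (rightTranslate n g) μ = μ) :
    Tendsto (fun N : ℕ =>
      (Set.ncard {H ∈ congruenceSet N n j |
          Set.ncard {x : Fin n → ℤ |
            ‖(fun i => (x i : ℝ))‖ ≤ D * (N : ℝ) ^ ((j : ℝ) / (n : ℝ)) ∧
            (fun i => ((x i : ZMod N))) ∈ H} = r} : ℝ) /
        (Set.ncard (congruenceSet N n j) : ℝ))
      (atTop ⊓ Filter.principal {N : ℕ | Squarefree N})
      (nhds ((μ (OmegaTilde n D r)).toReal)) := by
  have hjn : j < n := by omega
  have hμ : InvProb μ := ⟨hprob, hinv⟩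
  refine (TG_Omega hn hj1 hjn hμ r hD0).congr' ?_
  have h1 : ∀ᶠ N : ℕ in atTop ⊓ Filter.principal {N : ℕ | Squarefree N}, 1 ≤ N :=
    (eventually_ge_atTop 1).filter_mono inf_le_left
  filter_upwards [h1] with N hN
  exact (ratio_eq hN (by omega) D r).symm
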